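/- Let a and b be nonzero, multiplicatively independent integers, and let ε(t) be a weakly decreasing positive function of t ≥ 1 tending to 0 as t → ∞ and satisfying ε(t) ≥ 1/log log log(100t) for all t ≥ 1. For real x ≥ 16 set ξ = log log x, let U(x) be the set of primes p ≤ x such that p divides ab, or p ≤ ξ, or the ξ-smooth part of p−1 exceeds exp(√(log p)), or the ξ-rough part of p−1 is not squarefree, or ℓ_a(p) ≤ p^{1/2}/log p, or ℓ_b(p) ≤ p^{1/2}/log p, or ℓ_{a,b}(p) ≤ p^{2/3}/log p; and let V(x) be the set of primes p ≤ x with p ∉ U(x) and p^{2/3}/log p < ℓ_{a,b}(p) ≤ p^{2/3 + 5ε(p)}. Then there exist a constant C > 0 and x_0 (depending on a, b, ε) such that for all x ≥ x_0, uniformly for log log x < t ≤ x, the number of primes in V(x) that are at most t is at most C·ε(t/log t)^{1/12}·t/log t. -/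

import Mathlib

open Filter
open scoped Classical

/-- The `z`-smooth part of `m`: its largest `z`-smooth divisor. -/
noncomputable def smoothPart (z : ℝ) (m : ℕ) : ℕ :=
  ∏ p ∈ m.primeFactors.filter (fun p : ℕ => (p : ℝ) ≤ z), p ^ m.factorization p

/-- The `z`-rough part of `m`: the cofactor of the `z`-smooth part. -/
noncomputable def roughPart (z : ℝ) (m : ℕ) : ℕ :=
  ∏ p ∈ m.primeFactors.filter (fun p : ℕ => z < (p : ℝ)), p ^ m.factorization p

/-- The order of the subgroup of `(ℤ/pℤ)ˣ` generated by the residues of `a` and `b`. -/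
noncomputable def ellPair (a b : ℤ) (p : ℕ) : ℕ :=
  Nat.card (Submonoid.closure ({(a : ZMod p), (b : ZMod p)} : Set (ZMod p)))

/-- Membership in the exceptional set `U(x)`: with `ξ = log log x`, the prime `p`
divides `ab`, or `p ≤ ξ`, or the `ξ`-smooth part of `p - 1` exceeds `exp(√(log p))`,
or the `ξ`-rough part of `p - 1` is not squarefree, or `ℓ_a(p) ≤ p^(1/2)/log p`, or
`ℓ_b(p) ≤ p^(1/2)/log p`, or `ℓ_{a,b}(p) ≤ p^(2/3)/log p`. -/
def UCond (a b : ℤ) (x : ℝ) (p : ℕ) : Prop :=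
  (p : ℤ) ∣ a * b ∨ (p : ℝ) ≤ Real.log (Real.log x) ∨
  Real.exp (Real.sqrt (Real.log p)) < (smoothPart (Real.log (Real.log x)) (p - 1) : ℝ) ∨
  ¬ Squarefree (roughPart (Real.log (Real.log x)) (p - 1)) ∨
  (orderOf ((a : ZMod p)) : ℝ) ≤ (p : ℝ) ^ ((1 : ℝ) / 2) / Real.log p ∨
  (orderOf ((b : ZMod p)) : ℝ) ≤ (p : ℝ) ^ ((1 : ℝ) / 2) / Real.log p ∨
  (ellPair a b p : ℝ) ≤ (p : ℝ) ^ ((2 : ℝ) / 3) / Real.log p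

/-- Membership in `V(x)`: `p ∉ U(x)` and `p^(2/3)/log p < ℓ_{a,b}(p) ≤ p^(2/3+5ε(p))`. -/
def VCond (a b : ℤ) (ε : ℝ → ℝ) (x : ℝ) (p : ℕ) : Prop :=
  ¬ UCond a b x p ∧
  (p : ℝ) ^ ((2 : ℝ) / 3) / Real.log p < (ellPair a b p : ℝ) ∧
  (ellPair a b p : ℝ) ≤ (p : ℝ) ^ ((2 : ℝ) / 3 + 5 * ε p)


/-- primes up to the real number `x` -/
noncomputable def PP (x : ℝ) : Finset ℕ := (Finset.Ioc 0 ⌊x⌋₊).filter Nat.Prime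

theorem mem_PP {x : ℝ} {p : ℕ} : p ∈ PP x ↔ p.Prime ∧ (p : ℝ) ≤ x := by
  unfold PP
  rw [Finset.mem_filter, Finset.mem_Ioc]
  constructor
  · rintro ⟨⟨h1, h2⟩, h3⟩
    refine ⟨h3, ?_⟩
    exact (Nat.le_floor_iff' h1.ne').1 h2
  · rintro ⟨h1, h2⟩
    exact ⟨⟨h1.pos, (Nat.le_floor_iff' h1.ne_zero).2 h2⟩, h1⟩

theorem PP_floor (x : ℝ) : PP x = PP (⌊x⌋₊ : ℕ) := by
  unfold PP; simp

theorem PP_mono {x y : ℝ} (h : x ≤ y) : PP x ⊆ PP y := by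
  intro p hp
  rw [mem_PP] at *
  exact ⟨hp.1, hp.2.trans h⟩

theorem PP_succ_sum (n : ℕ) (f : ℕ → ℝ) :
    ∑ p ∈ PP ((n + 1 : ℕ) : ℝ), f p
      = ∑ p ∈ PP (n : ℝ), f p + if (n + 1).Prime then f (n + 1) else 0 := by
  unfold PP
  rw [Nat.floor_natCast, Nat.floor_natCast, Finset.sum_filter, Finset.sum_filter,
    Finset.sum_Ioc_succ_top (Nat.zero_le n)]

theorem log_factorial_eq (n : ℕ) :
    Real.log (n.factorial : ℝ) = ∑ p ∈ PP (n : ℝ), ((n.factorial.factorization p : ℕ) : ℝ) * Real.log p := by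
  have h0 := n.factorial_ne_zero
  conv_lhs => rw [← Nat.prod_factorization_pow_eq_self h0]
  rw [Nat.prod_factorization_eq_prod_primeFactors, Nat.cast_prod, Real.log_prod]
  · apply Finset.sum_congr
    · ext p
      rw [mem_PP, Nat.mem_primeFactors]
      constructor
      · rintro ⟨h1, h2, _⟩
        exact ⟨h1, by exact_mod_cast (h1.dvd_factorial).1 h2⟩
      · rintro ⟨h1, h2⟩
        exact ⟨h1, (h1.dvd_factorial).2 (by exact_mod_cast h2), h0⟩
    · intro p _
      rw [Nat.cast_pow, Real.log_pow]
  · intro p hp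
    have := (Nat.prime_of_mem_primeFactors hp).pos
    positivity

theorem mertens1_upper_nat (n : ℕ) (hn : 1 ≤ n) :
    ∑ p ∈ PP (n : ℝ), Real.log p / p ≤ Real.log n + 2 := by
  have h1 := log_factorial_eq n
  have hn0 : (0:ℝ) < n := by exact_mod_cast hn
  have h2 : Real.log (n.factorial : ℝ) ≤ n * Real.log n := by
    rw [← Real.log_pow]
    apply Real.log_le_log (by exact_mod_cast n.factorial_pos)
    exact_mod_cast n.factorial_le_pow
  have h3 : ∑ p ∈ PP (n : ℝ), Real.log p ≤ Real.log 4 * n := by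
    have := Chebyshev.theta_le_log4_mul_x hn0.le
    simpa [Chebyshev.theta, PP] using this
  have h4 : Real.log 4 ≤ 2 := by
    have : (4:ℝ) = 2 ^ 2 := by norm_num
    rw [this, Real.log_pow]
    have := Real.log_two_lt_d9
    push_cast; linarith
  have h5 : ∀ p ∈ PP (n : ℝ), (n : ℝ) * (Real.log p / p) - Real.log p ≤
      ((n.factorial.factorization p : ℕ) : ℝ) * Real.log p := by
    intro p hp
    rw [mem_PP] at hp
    have hp0 : (0:ℝ) < p := by exact_mod_cast hp.1.pos
    have hl : 0 ≤ Real.log p := Real.log_natCast_nonneg p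
    have hv : n / p ≤ n.factorial.factorization p := by
      rw [← Nat.Prime.pow_dvd_iff_le_factorization hp.1 n.factorial_ne_zero]
      have h := Nat.factorial_dvd_factorial (Nat.div_mul_le_self n p)
      refine dvd_trans ?_ h
      generalize n / p = k
      induction k with
      | zero => simp
      | succ k ih =>
        rw [pow_succ, Nat.add_mul, one_mul]
        obtain ⟨q, hq⟩ : ∃ q, p = q + 1 := ⟨p - 1, by have := hp.1.pos; omega⟩
        have : (k * p + p).factorial = (k*p+p) * (k * p + q).factorial := by
          rw [hq, ← Nat.add_assoc, Nat.factorial_succ]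
        rw [this, mul_comm]
        apply mul_dvd_mul
        · exact ⟨k + 1, by ring⟩
        · exact ih.trans (Nat.factorial_dvd_factorial (by omega))
    have hv' : (n : ℝ) / p - 1 ≤ (n.factorial.factorization p : ℕ) := by
      have := Nat.lt_floor_add_one ((n:ℝ)/p)
      rw [Nat.floor_div_eq_div] at this
      have h' : ((n / p : ℕ) : ℝ) ≤ (n.factorial.factorization p : ℕ) := by exact_mod_cast hv
      linarith
    calc (n : ℝ) * (Real.log p / p) - Real.log p = ((n:ℝ) / p - 1) * Real.log p := by ring
      _ ≤ _ := by gcongr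
  have h6 := Finset.sum_le_sum h5
  rw [← h1, Finset.sum_sub_distrib, ← Finset.mul_sum] at h6
  have : n * ∑ p ∈ PP (n : ℝ), Real.log p / p ≤ n * (Real.log n + 2) := by nlinarith
  exact le_of_mul_le_mul_left this hn0

theorem sum_log_aux (n : ℕ) (hn : 1 ≤ n) :
    ∑ p ∈ PP (n : ℝ), Real.log p / (p * (p - 1)) ≤ 2 - (Real.log n + 2) / n := by
  induction n, hn using Nat.le_induction with
  | base =>
    have : PP ((1:ℕ):ℝ) = ∅ := by
      ext p; simp [mem_PP]; intro h; exact h.one_lt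
    rw [this]; simp
  | succ k hk ih =>
    rw [PP_succ_sum]
    have hk0 : (1:ℝ) ≤ k := by exact_mod_cast hk
    have hl : 0 ≤ Real.log ((k+1 : ℕ):ℝ) := Real.log_natCast_nonneg _
    have key : (if (k + 1).Prime then Real.log ((k+1 : ℕ):ℝ) / (((k+1 : ℕ):ℝ) * (((k+1 : ℕ):ℝ) - 1)) else 0)
        ≤ (Real.log k + 2) / k - (Real.log ((k+1 : ℕ):ℝ) + 2) / ((k+1 : ℕ):ℝ) := by
      trans Real.log ((k+1 : ℕ):ℝ) / (((k+1 : ℕ):ℝ) * (((k+1 : ℕ):ℝ) - 1))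
      · split_ifs
        · exact le_rfl
        · push_cast; rw [add_sub_cancel_right]; push_cast at hl; positivity
      · push_cast
        rw [add_sub_cancel_right, div_sub_div _ _ (by positivity) (by positivity),
          mul_comm ((k:ℝ)+1) k]
        gcongr
        have h1 : Real.log ((k:ℝ)+1) = Real.log k + Real.log (1 + 1/k) := by
          rw [← Real.log_mul (by positivity) (by positivity)]
          congr 1; field_simp
        have h2 : Real.log (1 + 1/k) ≤ 1 / k := by
          have := Real.log_le_sub_one_of_pos (show (0:ℝ) < 1 + 1/k by positivity)
          linarith
        have h3 : (k:ℝ) * Real.log (1 + 1/k) ≤ 1 := by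
          calc (k:ℝ) * Real.log (1 + 1/k) ≤ k * (1/k) := by gcongr
            _ = 1 := by field_simp
        have h4 : Real.log (1 + 1/k) ≤ 1 := h2.trans (by rw [div_le_one (by positivity)]; exact hk0)
        nlinarith
    linarith

theorem mertens1_lower_nat (n : ℕ) (hn : 1 ≤ n) :
    Real.log n - 3 ≤ ∑ p ∈ PP (n : ℝ), Real.log p / p := by
  have h1 := log_factorial_eq n
  have hn0 : (0:ℝ) < n := by exact_mod_cast hn
  have h2 : n * Real.log n - n ≤ Real.log (n.factorial : ℝ) := by
    have : (n:ℝ)^n / n.factorial ≤ Real.exp n := Real.pow_div_factorial_le_exp _ hn0.le n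
    rw [← Real.log_le_iff_le_exp (by positivity), Real.log_div (by positivity) (by positivity),
      Real.log_pow] at this
    linarith
  have h5 : ∀ p ∈ PP (n : ℝ), ((n.factorial.factorization p : ℕ) : ℝ) * Real.log p ≤
      (n : ℝ) * (Real.log p / p + Real.log p / (p * (p - 1))) := by
    intro p hp
    rw [mem_PP] at hp
    have hp0 : (1:ℝ) < p := by exact_mod_cast hp.1.one_lt
    have hl : 0 ≤ Real.log p := Real.log_natCast_nonneg p
    have := Fact.mk hp.1
    have hv := sub_one_mul_padicValNat_factorial (p := p) n
    rw [← Nat.factorization_def _ hp.1] at hv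
    have hv' : (p - 1) * n.factorial.factorization p ≤ n := by omega
    have hv2 : ((p:ℝ) - 1) * (n.factorial.factorization p : ℕ) ≤ n := by
      have : (((p - 1 : ℕ) : ℝ)) * (n.factorial.factorization p : ℕ) ≤ n := by exact_mod_cast hv'
      rwa [Nat.cast_sub hp.1.one_le, Nat.cast_one] at this
    have e : Real.log p / p + Real.log p / (p * (p - 1)) = Real.log p / (p - 1) := by
      have : (p:ℝ) - 1 ≠ 0 := by linarith
      field_simp; ring
    rw [e, mul_div_assoc', le_div_iff₀ (by linarith)]
    nlinarith
  have h6 := Finset.sum_le_sum h5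
  rw [← h1, ← Finset.mul_sum, Finset.sum_add_distrib] at h6
  have h7 := sum_log_aux n hn
  have h8 : 0 ≤ (Real.log n + 2) / n := by
    have := Real.log_natCast_nonneg n
    positivity
  have : n * (Real.log n - 1) ≤ n * (∑ p ∈ PP (n : ℝ), Real.log p / p + 2) := by nlinarith
  have := le_of_mul_le_mul_left this hn0
  linarith

theorem log_floor_le {x : ℝ} (hx : 1 ≤ x) :
    Real.log x - 1 ≤ Real.log ⌊x⌋₊ ∧ Real.log ⌊x⌋₊ ≤ Real.log x ∧ 1 ≤ ⌊x⌋₊ := by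
  have h1 : 1 ≤ ⌊x⌋₊ := by rw [Nat.one_le_floor_iff]; exact hx
  have h2 : (1:ℝ) ≤ ⌊x⌋₊ := by exact_mod_cast h1
  refine ⟨?_, Real.log_le_log (by positivity) (Nat.floor_le (by linarith)), h1⟩
  have h3 : x ≤ 2 * ⌊x⌋₊ := by have := Nat.lt_floor_add_one x; linarith
  have := Real.log_le_log (by linarith) h3
  rw [Real.log_mul (by norm_num) (by positivity)] at this
  have := Real.log_two_lt_d9
  linarith

/-- Mertens first theorem, upper bound -/
theorem mertens1_upper {x : ℝ} (hx : 1 ≤ x) :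
    ∑ p ∈ PP x, Real.log p / p ≤ Real.log x + 2 := by
  obtain ⟨h1, h2, h3⟩ := log_floor_le hx
  rw [PP_floor]
  linarith [mertens1_upper_nat _ h3]

theorem mertens1_lower {x : ℝ} (hx : 1 ≤ x) :
    Real.log x - 4 ≤ ∑ p ∈ PP x, Real.log p / p := by
  obtain ⟨h1, h2, h3⟩ := log_floor_le hx
  rw [PP_floor]
  linarith [mertens1_lower_nat _ h3]

theorem sum_PP_split {x y : ℝ} (h : x ≤ y) (f : ℕ → ℝ) :
    ∑ p ∈ (PP y).filter (fun p : ℕ => x < p), f p = ∑ p ∈ PP y, f p - ∑ p ∈ PP x, f p := by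
  have : (PP y).filter (fun p : ℕ => ¬ x < p) = PP x := by
    ext p
    simp only [Finset.mem_filter, mem_PP, not_lt]
    constructor
    · rintro ⟨⟨a, b⟩, c⟩; exact ⟨a, c⟩
    · rintro ⟨a, b⟩; exact ⟨⟨a, b.trans h⟩, b⟩
  rw [← Finset.sum_filter_add_sum_filter_not (PP y) (fun p : ℕ => x < p), this]
  ring

theorem mertens1_window {x y : ℝ} (hx : 1 ≤ x) (h : x ≤ y) :
    ∑ p ∈ (PP y).filter (fun p : ℕ => x < p), Real.log p / p ≤ Real.log (y / x) + 6 := by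
  rw [sum_PP_split h, Real.log_div (by linarith) (by linarith)]
  linarith [mertens1_upper (hx.trans h), mertens1_lower hx]

/-- the sum of reciprocals of primes -/
noncomputable def RS (x : ℝ) : ℝ := ∑ p ∈ PP x, (1 : ℝ) / p

theorem mertens2_nat_aux (n : ℕ) (hn : 2 ≤ n) :
    1 / Real.log n - 1 / Real.log ((n + 1 : ℕ) : ℝ) ≥ 0 ∧
    Real.log n * (1 / Real.log n - 1 / Real.log ((n + 1 : ℕ) : ℝ)) ≤
      Real.log (Real.log ((n + 1 : ℕ) : ℝ)) - Real.log (Real.log n) ∧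
    Real.log (Real.log ((n + 1 : ℕ) : ℝ)) - Real.log (Real.log n) - 8 * (1 / n - 1 / ((n + 1 : ℕ) : ℝ)) ≤
      Real.log n * (1 / Real.log n - 1 / Real.log ((n + 1 : ℕ) : ℝ)) := by
  have hn0 : (2:ℝ) ≤ n := by exact_mod_cast hn
  have hl2 := Real.log_two_gt_d9
  have hl : (1:ℝ)/2 ≤ Real.log n := by
    have := Real.log_le_log (by norm_num) hn0
    linarith
  have h1 : Real.log ((n + 1 : ℕ) : ℝ) = Real.log n + Real.log (1 + 1/n) := by
    rw [← Real.log_mul (by positivity) (by positivity)]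
    congr 1; push_cast; field_simp
  have h2 : Real.log (1 + 1/(n:ℝ)) ≤ 1 / n := by
    have := Real.log_le_sub_one_of_pos (show (0:ℝ) < 1 + 1/n by positivity)
    linarith
  have h2' : 0 ≤ Real.log (1 + 1/(n:ℝ)) := Real.log_nonneg (by
    have : (0:ℝ) ≤ 1/n := by positivity
    linarith)
  have e8 : 1 / (n:ℝ) - 1 / ((n + 1 : ℕ) : ℝ) = 1 / (n * (n+1)) := by push_cast; field_simp; ring
  rw [h1, e8]
  set l := Real.log (n:ℝ)
  set d := Real.log (1 + 1/(n:ℝ))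
  have hl0 : 0 < l := by linarith
  have e0 : 1 / l - 1 / (l + d) = d / (l * (l + d)) := by field_simp; ring
  have e1 : l * (1 / l - 1 / (l + d)) = 1 - l / (l + d) := by field_simp
  refine ⟨?_, ?_, ?_⟩
  · rw [e0]; positivity
  · rw [e1, ← Real.log_div (by positivity) (by positivity)]
    have := Real.log_le_sub_one_of_pos (show 0 < l / (l + d) by positivity)
    have e : Real.log ((l + d) / l) = - Real.log (l / (l + d)) := by
      rw [← Real.log_inv, inv_div]
    linarith
  · rw [e1, ← Real.log_div (by positivity) (by positivity)]
    have := Real.log_le_sub_one_of_pos (show 0 < (l + d) / l by positivity)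
    have h3 : (l + d) / l - 1 - (1 - l / (l + d)) = d ^ 2 / (l * (l + d)) := by field_simp; ring
    have h4 : d ^ 2 / (l * (l + d)) ≤ (1/n)^2 / ((1/2) * (1/2)) := by
      gcongr; linarith
    have h5 : (1/(n:ℝ))^2 / ((1/2) * (1/2)) ≤ 8 * (1 / (n * (n+1))) := by
      have : (1/(n:ℝ))^2 / ((1/2) * (1/2)) = 8 * (1 / (n * (2*n))) := by field_simp; norm_num
      rw [this]; gcongr; linarith
    linarith

theorem mertens2_nat (n : ℕ) (hn : 2 ≤ n) :
    |RS n - Real.log (Real.log n)| ≤ 20 := by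
  set A : ℕ → ℝ := fun n => ∑ p ∈ PP (n : ℝ), Real.log p / p with hA
  set T : ℕ → ℝ := fun n => RS n - A n / Real.log n with hT
  have hstep : ∀ n : ℕ, 2 ≤ n → T (n + 1) = T n + A n * (1 / Real.log n - 1 / Real.log ((n + 1 : ℕ) : ℝ)) := by
    intro n hn
    have hl : 0 < Real.log n := Real.log_pos (by exact_mod_cast hn)
    have hl' : 0 < Real.log ((n+1 : ℕ) : ℝ) := Real.log_pos (by exact_mod_cast (by omega : 1 < n + 1))
    simp only [hT, hA, RS]
    rw [PP_succ_sum, PP_succ_sum]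
    split_ifs
    · field_simp; ring
    · field_simp; ring
  have hA2 : ∀ n : ℕ, 2 ≤ n → Real.log n - 3 ≤ A n ∧ A n ≤ Real.log n + 3 := fun n hn =>
    ⟨mertens1_lower_nat n (by omega), by linarith [mertens1_upper_nat n (by omega)]⟩
  have hPP2 : PP ((2:ℕ):ℝ) = {2} := by
    ext p; simp only [mem_PP, Finset.mem_singleton]
    constructor
    · rintro ⟨h, h2⟩
      have : p ≤ 2 := by exact_mod_cast h2
      have := h.two_le; omega
    · rintro rfl; exact ⟨Nat.prime_two, le_rfl⟩
  have hT2 : T 2 = 0 := by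
    simp only [hT, hA, RS]
    rw [hPP2]
    have : Real.log 2 ≠ 0 := by have := Real.log_two_gt_d9; linarith
    simp
    field_simp; simp
  have hl2 := Real.log_two_gt_d9
  have hl2' := Real.log_two_lt_d9
  have hll2 : -1 ≤ Real.log (Real.log 2) ∧ Real.log (Real.log 2) ≤ 0 := by
    constructor
    · rw [Real.le_log_iff_exp_le (by linarith)]
      have : Real.exp (-1) ≤ 1/2 := by
        rw [Real.exp_neg, one_div]
        gcongr
        have := Real.add_one_le_exp (1:ℝ); linarith
      linarith
    · exact Real.log_nonpos (by linarith) (by linarith)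
  have hup : T n ≤ Real.log (Real.log n) + 1 + 3 * (1 / Real.log 2) - 3 * (1/ Real.log n) := by
    induction n, hn using Nat.le_induction with
    | base => rw [hT2]; push_cast; linarith
    | succ k hk ih =>
      rw [hstep k hk]
      obtain ⟨a1, a2, a3⟩ := mertens2_nat_aux k hk
      obtain ⟨b1, b2⟩ := hA2 k hk
      nlinarith
  have hlo : Real.log (Real.log n) - 3 * (1 / Real.log 2) + 3 * (1/ Real.log n) + 8 * (1/n) - 4 ≤ T n := by
    clear hup
    induction n, hn using Nat.le_induction with
    | base => rw [hT2]; push_cast; linarith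
    | succ k hk ih =>
      rw [hstep k hk]
      obtain ⟨a1, a2, a3⟩ := mertens2_nat_aux k hk
      obtain ⟨b1, b2⟩ := hA2 k hk
      nlinarith
  have hn0 : (2:ℝ) ≤ n := by exact_mod_cast hn
  have hln : Real.log 2 ≤ Real.log n := Real.log_le_log (by norm_num) hn0
  have i1 : 1 / Real.log 2 ≤ 3/2 := by rw [div_le_iff₀ (by linarith)]; linarith
  have i2 : 1 / Real.log n ≤ 3/2 := by rw [div_le_iff₀ (by linarith)]; linarith
  have i3 : 0 ≤ 1 / Real.log n := by apply div_nonneg <;> linarith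
  obtain ⟨b1, b2⟩ := hA2 n hn
  have eA : A n / Real.log n = 1 + (A n - Real.log n) * (1 / Real.log n) := by
    have : Real.log n ≠ 0 := by linarith
    field_simp; ring
  have i4 : |(A n - Real.log n) * (1 / Real.log n)| ≤ 3 * (3/2) := by
    rw [abs_mul, abs_of_nonneg i3]
    gcongr
    rw [abs_le]; constructor <;> linarith
  rw [abs_le] at i4 ⊢
  have e : RS n = T n + A n / Real.log n := by simp only [hT]; ring
  have : 0 ≤ 1/(n:ℝ) := by positivity
  rw [e, eA]
  constructor <;> linarith

/-- Mertens second theorem -/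
theorem mertens2 {x : ℝ} (hx : 2 ≤ x) : |RS x - Real.log (Real.log x)| ≤ 22 := by
  obtain ⟨h1, h2, h3⟩ := log_floor_le (by linarith : 1 ≤ x)
  have hf : 2 ≤ ⌊x⌋₊ := by rw [Nat.le_floor_iff (by linarith)]; exact_mod_cast hx
  have h := mertens2_nat _ hf
  have e : RS x = RS ⌊x⌋₊ := by unfold RS; rw [← PP_floor]
  rw [← e] at h
  have hl2 := Real.log_two_gt_d9
  have h4 : Real.log 2 ≤ Real.log ⌊x⌋₊ := Real.log_le_log (by norm_num) (by exact_mod_cast hf)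
  have h5 : Real.log (Real.log ⌊x⌋₊) ≤ Real.log (Real.log x) := Real.log_le_log (by linarith) h2
  have h6 : Real.log (Real.log x) ≤ Real.log (Real.log ⌊x⌋₊) + 2 := by
    rw [Real.log_le_iff_le_exp (by linarith), Real.exp_add, Real.exp_log (by linarith)]
    have : (3:ℝ) ≤ Real.exp 2 := by have := Real.add_one_le_exp (2:ℝ); linarith
    nlinarith
  rw [abs_le] at *
  constructor <;> linarith

theorem RS_window {x y : ℝ} (hx : 2 ≤ x) (h : x ≤ y) :
    |∑ p ∈ (PP y).filter (fun p : ℕ => x < p), (1:ℝ) / p - Real.log (Real.log y / Real.log x)| ≤ 44 := by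
  rw [sum_PP_split h]
  have h1 := mertens2 hx
  have h2 := mertens2 (hx.trans h)
  have l1 : 0 < Real.log x := Real.log_pos (by linarith)
  have l2 : 0 < Real.log y := Real.log_pos (by linarith)
  rw [Real.log_div l2.ne' l1.ne']
  unfold RS at *
  rw [abs_le] at *
  constructor <;> linarith


section SelbergAbs
variable {α : Type*}

theorem alt_sum_interval (V W : Finset α) :
    ∑ S ∈ W.powerset, (if V ⊆ S then (-1 : ℝ) ^ S.card else 0) = if V = W then (-1 : ℝ) ^ V.card else 0 := by
  by_cases hVW : V ⊆ W
  · rw [← Finset.sum_filter]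
    have e : W.powerset.filter (fun S => V ⊆ S) = (W \ V).powerset.image (fun S => V ∪ S) := by
      ext S
      simp only [Finset.mem_filter, Finset.mem_powerset, Finset.mem_image]
      constructor
      · rintro ⟨h1, h2⟩
        refine ⟨S \ V, Finset.sdiff_subset_sdiff h1 le_rfl, ?_⟩
        exact Finset.union_sdiff_of_subset h2
      · rintro ⟨T, h1, rfl⟩
        exact ⟨Finset.union_subset hVW (h1.trans Finset.sdiff_subset), Finset.subset_union_left⟩
    rw [e, Finset.sum_image]
    · have h2 : ∀ S ∈ (W \ V).powerset, (-1 : ℝ) ^ (V ∪ S).card = (-1) ^ V.card * (-1 : ℝ) ^ S.card := by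
        intro S hS
        rw [Finset.mem_powerset] at hS
        rw [Finset.card_union_of_disjoint, pow_add]
        exact Finset.disjoint_of_subset_right hS Finset.disjoint_sdiff
      rw [Finset.sum_congr rfl h2, ← Finset.mul_sum]
      have h3 := Finset.sum_powerset_neg_one_pow_card (x := W \ V)
      have h4 : ∑ S ∈ (W \ V).powerset, (-1 : ℝ) ^ S.card = if W \ V = ∅ then 1 else 0 := by
        have := congrArg (Int.cast : ℤ → ℝ) h3
        push_cast at this
        exact this
      rw [h4]
      have h5 : W \ V = ∅ ↔ V = W := by
        rw [Finset.sdiff_eq_empty_iff_subset]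
        exact ⟨fun h => hVW.antisymm h, fun h => h ▸ le_rfl⟩
      simp only [h5]
      split_ifs <;> simp
    · intro S hS T hT h
      simp only [Finset.coe_powerset, Set.mem_preimage, Set.mem_powerset_iff, Finset.coe_subset] at hS hT
      have hS' : Disjoint V S := Finset.disjoint_of_subset_right hS Finset.disjoint_sdiff
      have hT' : Disjoint V T := Finset.disjoint_of_subset_right hT Finset.disjoint_sdiff
      have := congrArg (fun X => X \ V) h
      simp only [Finset.union_sdiff_left] at this
      rwa [Finset.sdiff_eq_self_of_disjoint hS'.symm, Finset.sdiff_eq_self_of_disjoint hT'.symm] at this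
  · rw [if_neg (by rintro rfl; exact hVW le_rfl)]
    apply Finset.sum_eq_zero
    intro S hS
    rw [if_neg]
    intro h
    exact hVW (h.trans (Finset.mem_powerset.1 hS))

theorem selberg_weights (P : Finset α) (ρ : α → ℝ) (hρ : ∀ p ∈ P, 0 < ρ p ∧ ρ p < 1)
    (R : Finset (Finset α)) (hR : R ⊆ P.powerset) (h0 : ∅ ∈ R)
    (hdown : ∀ S ∈ R, ∀ T ⊆ S, T ∈ R) :
    ∃ l : Finset α → ℝ, l ∅ = 1 ∧ (∀ S ∈ R, |l S| ≤ 1 / ∏ p ∈ S, ρ p) ∧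
      ∑ S ∈ R, ∑ T ∈ R, l S * l T * ∏ p ∈ S ∪ T, ρ p =
        1 / ∑ V ∈ R, ∏ p ∈ V, (ρ p / (1 - ρ p)) := by
  set h : Finset α → ℝ := fun V => ∏ p ∈ V, (ρ p / (1 - ρ p)) with hh
  set G := ∑ V ∈ R, h V with hG
  have hpos : ∀ V ∈ R, 0 < h V := by
    intro V hV
    apply Finset.prod_pos
    intro p hp
    have := hρ p (Finset.mem_powerset.1 (hR hV) hp)
    apply div_pos this.1; linarith
  have hGpos : 0 < G := Finset.sum_pos hpos ⟨∅, h0⟩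
  have rpos : ∀ S ∈ R, 0 < ∏ p ∈ S, ρ p := by
    intro S hS
    apply Finset.prod_pos
    intro p hp
    exact (hρ p (Finset.mem_powerset.1 (hR hS) hp)).1
  set m : Finset α → ℝ := fun S => (-1) ^ S.card * (∑ V ∈ R, if S ⊆ V then h V / G else 0) with hm
  refine ⟨fun S => m S / ∏ p ∈ S, ρ p, ?_, ?_, ?_⟩
  · simp only [hm, Finset.card_empty, pow_zero, Finset.empty_subset, if_true, Finset.prod_empty]
    rw [← Finset.sum_div, ← hG]
    field_simp
  · intro S hS
    rw [abs_div, abs_of_pos (rpos S hS)]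
    apply div_le_div_of_nonneg_right _ (rpos S hS).le
    simp only [hm]
    rw [abs_mul, abs_pow, abs_neg, abs_one, one_pow, one_mul, abs_of_nonneg]
    · calc (∑ V ∈ R, if S ⊆ V then h V / G else 0) ≤ ∑ V ∈ R, h V / G := by
            apply Finset.sum_le_sum
            intro V hV
            split_ifs
            · exact le_rfl
            · exact div_nonneg (hpos V hV).le hGpos.le
        _ = 1 := by rw [← Finset.sum_div, ← hG]; field_simp
    · apply Finset.sum_nonneg
      intro V hV
      split_ifs
      · exact div_nonneg (hpos V hV).le hGpos.le
      · exact le_rfl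
  · have key : ∀ S ∈ R, ∀ T ∈ R, m S / (∏ p ∈ S, ρ p) * (m T / ∏ p ∈ T, ρ p) * ∏ p ∈ S ∪ T, ρ p =
        ∑ V ∈ R, (1 / h V) * ((if V ⊆ S then m S else 0) * (if V ⊆ T then m T else 0)) := by
      intro S hS T hT
      have hST : S ∩ T ∈ R := hdown S hS _ Finset.inter_subset_left
      have e1 : (∏ p ∈ S ∪ T, ρ p) * ∏ p ∈ S ∩ T, ρ p = (∏ p ∈ S, ρ p) * ∏ p ∈ T, ρ p :=
        Finset.prod_union_inter
      have e2 : 1 / ∏ p ∈ S ∩ T, ρ p = ∑ V ∈ (S ∩ T).powerset, 1 / h V := by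
        have : ∀ p ∈ S ∩ T, 1 / ρ p = 1 + 1 / (ρ p / (1 - ρ p)) := by
          intro p hp
          have := hρ p (Finset.mem_powerset.1 (hR hST) hp)
          have h2 : 1 - ρ p ≠ 0 := by linarith
          have h3 := this.1.ne'
          field_simp; ring
        rw [one_div, ← Finset.prod_inv_distrib]
        simp only [one_div] at this
        rw [Finset.prod_congr rfl this, Finset.prod_one_add]
        apply Finset.sum_congr rfl
        intro V hV
        simp only [hh, one_div]
        rw [Finset.prod_inv_distrib]
      have e3 : ∑ V ∈ (S ∩ T).powerset, 1 / h V = ∑ V ∈ R, if V ⊆ S ∩ T then 1 / h V else 0 := by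
        rw [← Finset.sum_filter]
        apply Finset.sum_congr _ (fun _ _ => rfl)
        ext V
        simp only [Finset.mem_powerset, Finset.mem_filter]
        exact ⟨fun hV => ⟨hdown _ hST V hV, hV⟩, fun hV => hV.2⟩
      have p1 := rpos S hS
      have p2 := rpos T hT
      have p3 := rpos _ hST
      have e4 : m S / (∏ p ∈ S, ρ p) * (m T / ∏ p ∈ T, ρ p) * ∏ p ∈ S ∪ T, ρ p
          = m S * m T * (1 / ∏ p ∈ S ∩ T, ρ p) := by
        field_simp
        linear_combination (m S * m T) * e1
      rw [e4, e2, e3, Finset.mul_sum]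
      apply Finset.sum_congr rfl
      intro V _
      by_cases h1 : V ⊆ S <;> by_cases h2 : V ⊆ T <;>
        simp [h1, h2, Finset.subset_inter_iff]
      ring
    rw [Finset.sum_congr rfl (fun S hS => Finset.sum_congr rfl (key S hS))]
    have e5 : ∑ S ∈ R, ∑ T ∈ R, ∑ V ∈ R, (1 / h V) * ((if V ⊆ S then m S else 0) * (if V ⊆ T then m T else 0))
        = ∑ V ∈ R, (1 / h V) * (∑ S ∈ R, if V ⊆ S then m S else 0) ^ 2 := by
      have : ∀ S ∈ R, ∑ T ∈ R, ∑ V ∈ R, (1 / h V) * ((if V ⊆ S then m S else 0) * (if V ⊆ T then m T else 0))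
          = ∑ V ∈ R, ∑ T ∈ R, (1 / h V) * ((if V ⊆ S then m S else 0) * (if V ⊆ T then m T else 0)) :=
        fun S _ => Finset.sum_comm
      rw [Finset.sum_congr rfl this, Finset.sum_comm]
      apply Finset.sum_congr rfl
      intro V _
      rw [sq, Finset.sum_mul_sum, Finset.mul_sum]
      apply Finset.sum_congr rfl
      intro S _
      rw [Finset.mul_sum]
    rw [e5]
    have e6 : ∀ V ∈ R, (∑ S ∈ R, if V ⊆ S then m S else 0) = (-1) ^ V.card * (h V / G) := by
      intro V hV
      have a1 : ∀ S ∈ R, (if V ⊆ S then m S else 0) =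
          ∑ W ∈ R, (h W / G) * (if S ⊆ W then (if V ⊆ S then (-1 : ℝ) ^ S.card else 0) else 0) := by
        intro S _
        simp only [hm]
        by_cases hVS : V ⊆ S
        · simp only [hVS, if_true, Finset.mul_sum]
          apply Finset.sum_congr rfl
          intro W _
          split_ifs <;> ring
        · simp [hVS]
      rw [Finset.sum_congr rfl a1, Finset.sum_comm]
      have a2 : ∀ W ∈ R, ∑ S ∈ R, (h W / G) * (if S ⊆ W then (if V ⊆ S then (-1 : ℝ) ^ S.card else 0) else 0)
          = if V = W then (h W / G) * (-1 : ℝ) ^ V.card else 0 := by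
        intro W hW
        rw [← Finset.mul_sum]
        have : ∑ S ∈ R, (if S ⊆ W then (if V ⊆ S then (-1 : ℝ) ^ S.card else 0) else 0)
            = ∑ S ∈ W.powerset, (if V ⊆ S then (-1 : ℝ) ^ S.card else 0) := by
          rw [← Finset.sum_filter]
          apply Finset.sum_congr _ (fun _ _ => rfl)
          ext S
          simp only [Finset.mem_powerset, Finset.mem_filter]
          exact ⟨fun hV => hV.2, fun hV => ⟨hdown _ hW S hV, hV⟩⟩
        rw [this, alt_sum_interval]
        split_ifs <;> simp
      rw [Finset.sum_congr rfl a2, Finset.sum_ite_eq, if_pos hV]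
      ring
    have e7 : ∀ V ∈ R, (1 / h V) * (∑ S ∈ R, if V ⊆ S then m S else 0) ^ 2 = h V / G ^ 2 := by
      intro V hV
      rw [e6 V hV, mul_pow, ← pow_mul, mul_comm V.card 2, pow_mul]
      have := (hpos V hV).ne'
      field_simp
      norm_num
    rw [Finset.sum_congr rfl e7, ← Finset.sum_div, ← hG]
    field_simp

theorem sieve_pointwise (P : Finset α) (R : Finset (Finset α)) (hR : R ⊆ P.powerset) (h0 : ∅ ∈ R)
    (l : Finset α → ℝ) (hl : l ∅ = 1) (β : α → ℝ) (hβ : ∀ p ∈ P, 0 ≤ β p ∧ β p ≤ 1) :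
    ∏ p ∈ P, (1 - β p) ≤ ∑ S ∈ R, ∑ T ∈ R, l S * l T * ∏ p ∈ S ∪ T, β p := by
  set wt : Finset α → ℝ := fun U => (∏ p ∈ U, β p) * ∏ p ∈ P \ U, (1 - β p) with hwt
  have hw : ∀ U ∈ P.powerset, 0 ≤ wt U := by
    intro U hU
    apply mul_nonneg
    · exact Finset.prod_nonneg fun p hp => (hβ p (Finset.mem_powerset.1 hU hp)).1
    · refine Finset.prod_nonneg fun p hp => ?_
      have := (hβ p (Finset.mem_sdiff.1 hp).1).2
      linarith
  have hA : ∀ A ⊆ P, ∑ U ∈ P.powerset, (if A ⊆ U then wt U else 0) = ∏ p ∈ A, β p := by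
    intro A hA
    have h1 := Finset.prod_add β (fun p => if p ∈ A then 0 else (1 - β p)) P
    have h2 : ∏ p ∈ P, (β p + if p ∈ A then 0 else (1 - β p)) = ∏ p ∈ A, β p := by
      have : ∀ p ∈ P, (β p + if p ∈ A then 0 else (1 - β p)) = if p ∈ A then β p else 1 := by
        intro p _
        split_ifs <;> ring
      rw [Finset.prod_congr rfl this, Finset.prod_ite_mem, Finset.inter_eq_right.2 hA]
    rw [← h2, h1]
    apply Finset.sum_congr rfl
    intro U hU
    split_ifs with hAU
    · simp only [hwt]
      congr 1
      apply Finset.prod_congr rfl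
      intro p hp
      rw [if_neg]
      intro h
      exact (Finset.mem_sdiff.1 hp).2 (hAU h)
    · obtain ⟨p, hp, hpU⟩ := Finset.not_subset.1 hAU
      rw [Finset.prod_eq_zero (i := p) (Finset.mem_sdiff.2 ⟨hA hp, hpU⟩) (by simp [hp]), mul_zero]
  have hR' : ∀ S ∈ R, S ⊆ P := fun S hS => Finset.mem_powerset.1 (hR hS)
  have e1 : ∑ S ∈ R, ∑ T ∈ R, l S * l T * ∏ p ∈ S ∪ T, β p =
      ∑ U ∈ P.powerset, wt U * (∑ S ∈ R, if S ⊆ U then l S else 0) ^ 2 := by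
    have a1 : ∀ S ∈ R, ∀ T ∈ R, l S * l T * ∏ p ∈ S ∪ T, β p =
        ∑ U ∈ P.powerset, wt U * ((if S ⊆ U then l S else 0) * (if T ⊆ U then l T else 0)) := by
      intro S hS T hT
      rw [← hA _ (Finset.union_subset (hR' S hS) (hR' T hT)), Finset.mul_sum]
      apply Finset.sum_congr rfl
      intro U _
      by_cases h1 : S ⊆ U <;> by_cases h2 : T ⊆ U <;> simp [h1, h2, Finset.union_subset_iff]
      ring
    rw [Finset.sum_congr rfl (fun S hS => Finset.sum_congr rfl (a1 S hS))]
    have : ∀ S ∈ R, ∑ T ∈ R, ∑ U ∈ P.powerset, wt U * ((if S ⊆ U then l S else 0) * (if T ⊆ U then l T else 0))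
        = ∑ U ∈ P.powerset, ∑ T ∈ R, wt U * ((if S ⊆ U then l S else 0) * (if T ⊆ U then l T else 0)) :=
      fun S _ => Finset.sum_comm
    rw [Finset.sum_congr rfl this, Finset.sum_comm]
    apply Finset.sum_congr rfl
    intro U _
    rw [sq, Finset.sum_mul_sum, Finset.mul_sum]
    apply Finset.sum_congr rfl
    intro S _
    rw [Finset.mul_sum]
  rw [e1]
  have e2 : ∏ p ∈ P, (1 - β p) = wt ∅ * (∑ S ∈ R, if S ⊆ ∅ then l S else 0) ^ 2 := by
    simp only [hwt, Finset.prod_empty, Finset.sdiff_empty, one_mul, Finset.subset_empty]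
    rw [Finset.sum_ite_eq', if_pos h0, hl]
    simp
  rw [e2]
  apply Finset.single_le_sum (f := fun U => wt U * (∑ S ∈ R, if S ⊆ U then l S else 0) ^ 2)
  · intro U hU
    exact mul_nonneg (hw U hU) (sq_nonneg _)
  · simp

theorem selberg_sieve {ι : Type*} (M : Finset ι) (P : Finset α) (ρ : α → ℝ) (X : ℝ)
    (hρ : ∀ p ∈ P, 0 < ρ p ∧ ρ p < 1)
    (R : Finset (Finset α)) (hR : R ⊆ P.powerset) (h0 : ∅ ∈ R)
    (hdown : ∀ S ∈ R, ∀ T ⊆ S, T ∈ R) (β : ι → α → ℝ)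
    (hβ : ∀ m ∈ M, ∀ p ∈ P, 0 ≤ β m p ∧ β m p ≤ 1) (A : ℝ)
    (hrem : ∀ S ∈ R, ∀ T ∈ R, (1 / ∏ p ∈ S, ρ p) * (1 / ∏ p ∈ T, ρ p) *
      |∑ m ∈ M, ∏ p ∈ S ∪ T, β m p - X * ∏ p ∈ S ∪ T, ρ p| ≤ A) :
    ∑ m ∈ M, ∏ p ∈ P, (1 - β m p) ≤
      X / (∑ V ∈ R, ∏ p ∈ V, (ρ p / (1 - ρ p))) + R.card ^ 2 * A := by
  obtain ⟨l, l1, l2, l3⟩ := selberg_weights P ρ hρ R hR h0 hdown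
  calc ∑ m ∈ M, ∏ p ∈ P, (1 - β m p)
      ≤ ∑ m ∈ M, ∑ S ∈ R, ∑ T ∈ R, l S * l T * ∏ p ∈ S ∪ T, β m p :=
        Finset.sum_le_sum fun m hm => sieve_pointwise P R hR h0 l l1 (β m) (hβ m hm)
    _ = ∑ S ∈ R, ∑ T ∈ R, l S * l T * ∑ m ∈ M, ∏ p ∈ S ∪ T, β m p := by
        rw [Finset.sum_comm]
        apply Finset.sum_congr rfl
        intro S _
        rw [Finset.sum_comm]
        apply Finset.sum_congr rfl
        intro T _
        rw [Finset.mul_sum]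
    _ = ∑ S ∈ R, ∑ T ∈ R, (X * (l S * l T * ∏ p ∈ S ∪ T, ρ p) +
          l S * l T * (∑ m ∈ M, ∏ p ∈ S ∪ T, β m p - X * ∏ p ∈ S ∪ T, ρ p)) := by
        apply Finset.sum_congr rfl
        intro S _
        apply Finset.sum_congr rfl
        intro T _
        ring
    _ ≤ ∑ S ∈ R, ∑ T ∈ R, (X * (l S * l T * ∏ p ∈ S ∪ T, ρ p) + A) := by
        apply Finset.sum_le_sum
        intro S hS
        apply Finset.sum_le_sum
        intro T hT
        gcongr
        refine le_trans ?_ (hrem S hS T hT)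
        refine (le_abs_self _).trans ?_
        rw [abs_mul, abs_mul]
        have := l2 S hS
        have := l2 T hT
        have a0 : 0 ≤ |l S| := abs_nonneg _
        gcongr
        exact a0.trans (l2 S hS)
    _ = X / (∑ V ∈ R, ∏ p ∈ V, (ρ p / (1 - ρ p))) + R.card ^ 2 * A := by
        simp only [Finset.sum_add_distrib, ← Finset.mul_sum]
        rw [l3]
        simp
        ring

end SelbergAbs


theorem count_residue (N r c : ℕ) (hr : 0 < r) :
    |(((Finset.Ioc 0 N).filter (fun m => m ≡ c [MOD r])).card : ℝ) - N / r| ≤ 1 := by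
  have h := Nat.Ioc_filter_modEq_card 0 N hr c
  have hr' : (0:ℝ) < r := by exact_mod_cast hr
  have e1 : ((⌊((N:ℚ) - c) / (r : ℚ)⌋ : ℤ) : ℝ) = ⌊((N:ℝ) - c) / r⌋ := by
    have := Rat.floor_cast (α := ℝ) (((N:ℚ) - c) / (r : ℚ))
    push_cast at this; rw [← this]
  have e2 : ((⌊(((0:ℕ):ℚ) - c) / (r : ℚ)⌋ : ℤ) : ℝ) = ⌊((0:ℝ) - c) / r⌋ := by
    have := Rat.floor_cast (α := ℝ) ((((0:ℕ):ℚ) - c) / (r : ℚ))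
    push_cast at this; rw [Nat.cast_zero, ← this]
  have hle : ⌊(((0:ℕ):ℚ) - c) / (r : ℚ)⌋ ≤ ⌊((N:ℚ) - c) / (r : ℚ)⌋ := by
    apply Int.floor_le_floor; gcongr; simp
  rw [max_eq_left (by linarith)] at h
  have h2 : (((Finset.Ioc 0 N).filter (fun m => m ≡ c [MOD r])).card : ℝ) =
      ⌊((N:ℝ) - c) / r⌋ - ⌊((0:ℝ) - c) / r⌋ := by
    have := congrArg (Int.cast : ℤ → ℝ) h
    rw [Int.cast_sub, e1, e2] at this
    convert this using 1
    push_cast; congr!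
  rw [h2]
  have a1 := Int.floor_le (((N:ℝ) - c) / r)
  have a2 := Int.lt_floor_add_one (((N:ℝ) - c) / r)
  have a3 := Int.floor_le (((0:ℝ) - c) / r)
  have a4 := Int.lt_floor_add_one (((0:ℝ) - c) / r)
  have e : ((N:ℝ) - c) / r = N / r + ((0:ℝ) - c) / r := by ring
  rw [abs_le]; constructor <;> linarith

theorem crt_count (N D : ℕ) (S U : Finset ℕ) (hS : ∀ p ∈ S, p.Prime) (hU : ∀ p ∈ U, ¬ p ∣ D) :
    |(((Finset.Ioc 0 N).filter (fun m => ∀ p ∈ S, if p ∈ U then p ∣ D * m + 1 else p ∣ m)).card : ℝ)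
      - N / ∏ p ∈ S, (p:ℝ)| ≤ 1 := by
  have hsol : ∀ p : ℕ, ∃ r : ℕ, p ∈ S → ∀ m : ℕ, m ≡ r [MOD p] ↔ (if p ∈ U then p ∣ D * m + 1 else p ∣ m) := by
    intro p
    by_cases hp : p ∈ S
    swap
    · exact ⟨0, fun h => absurd h hp⟩
    have hpp := hS p hp
    have := Fact.mk hpp
    by_cases hpU : p ∈ U
    · have hD : (D : ZMod p) ≠ 0 := by
        rw [Ne, ZMod.natCast_eq_zero_iff]; exact hU p hpU
      refine ⟨(-(D : ZMod p)⁻¹).val, fun _ m => ?_⟩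
      simp only [hpU, if_true]
      rw [← ZMod.natCast_eq_natCast_iff, ← ZMod.natCast_eq_zero_iff, ZMod.natCast_val, ZMod.cast_id]
      push_cast
      constructor
      · intro h; rw [h]; field_simp; ring
      · intro h
        have : (D : ZMod p) * m = -1 := by linear_combination h
        field_simp
        rw [mul_comm]; exact this
    · refine ⟨0, fun _ m => ?_⟩
      simp only [hpU, if_false]
      exact Nat.modEq_zero_iff_dvd
  choose r hr using hsol
  have hco : Set.Pairwise (S : Set ℕ) (Function.onFun Nat.Coprime (fun p : ℕ => p)) := by
    intro p hp q hq hpq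
    exact (Nat.coprime_primes (hS p hp) (hS q hq)).2 hpq
  obtain ⟨c, hc⟩ := Nat.chineseRemainderOfFinset r (fun p => p) S (fun p hp => (hS p hp).ne_zero) hco
  have heq : (Finset.Ioc 0 N).filter (fun m => ∀ p ∈ S, if p ∈ U then p ∣ D * m + 1 else p ∣ m)
      = (Finset.Ioc 0 N).filter (fun m => m ≡ c [MOD ∏ p ∈ S, p]) := by
    apply Finset.filter_congr
    intro m _
    constructor
    · intro h
      rw [Nat.modEq_iff_dvd, Int.natCast_dvd]
      apply Finset.prod_primes_dvd
      · intro p hp; exact (hS p hp).prime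
      · intro p hp
        rw [← Int.natCast_dvd, ← Nat.modEq_iff_dvd]
        exact ((hr p hp m).2 (h p hp)).trans (hc p hp).symm
    · intro h p hp
      rw [← hr p hp m]
      exact (h.of_dvd (Finset.dvd_prod_of_mem _ hp)).trans (hc p hp)
  rw [heq]
  have := count_residue N (∏ p ∈ S, p) c (Finset.prod_pos fun p hp => (hS p hp).pos)
  rw [Nat.cast_prod] at this
  exact this

/-- sieve weight of the residue classes at p -/
noncomputable def bet (D : ℕ) (g : ℕ → ℝ) (m p : ℕ) : ℝ :=
  (if p ∣ D * m + 1 then 1 else 0) + (if p ∣ m then g p else 0)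

noncomputable def rh (D : ℕ) (g : ℕ → ℝ) (p : ℕ) : ℝ :=
  (if p ∣ D then 0 else 1) / p + g p / p

theorem sieve_rem (N D : ℕ) (S : Finset ℕ) (hS : ∀ p ∈ S, p.Prime) (g : ℕ → ℝ)
    (hg : ∀ p, 0 ≤ g p ∧ g p ≤ 1) :
    |∑ m ∈ Finset.Ioc 0 N, ∏ p ∈ S, bet D g m p - N * ∏ p ∈ S, rh D g p| ≤ 2 ^ S.card := by
  unfold bet rh
  simp_rw [Finset.prod_add]
  rw [Finset.sum_comm, Finset.mul_sum, ← Finset.sum_sub_distrib]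
  refine (Finset.abs_sum_le_sum_abs _ _).trans ?_
  have : (2:ℝ) ^ S.card = ∑ U ∈ S.powerset, 1 := by simp
  rw [this]
  apply Finset.sum_le_sum
  intro U hU
  rw [Finset.mem_powerset] at hU
  by_cases hUD : ∀ p ∈ U, ¬ p ∣ D
  · have h1 := crt_count N D S U hS hUD
    have e1 : ∀ m ∈ Finset.Ioc 0 N, (∏ p ∈ U, (if p ∣ D * m + 1 then (1:ℝ) else 0)) * ∏ p ∈ S \ U, (if p ∣ m then g p else 0)
        = (∏ p ∈ S \ U, g p) * if (∀ p ∈ S, if p ∈ U then p ∣ D * m + 1 else p ∣ m) then 1 else 0 := by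
      intro m _
      split_ifs with h
      · have a1 : ∏ p ∈ U, (if p ∣ D * m + 1 then (1:ℝ) else 0) = 1 := by
          apply Finset.prod_eq_one
          intro p hp
          have := h p (hU hp)
          rw [if_pos hp] at this
          rw [if_pos this]
        have a2 : ∏ p ∈ S \ U, (if p ∣ m then g p else 0) = ∏ p ∈ S \ U, g p := by
          apply Finset.prod_congr rfl
          intro p hp
          have := h p (Finset.mem_sdiff.1 hp).1
          rw [if_neg (Finset.mem_sdiff.1 hp).2] at this
          rw [if_pos this]
        rw [a1, a2]; ring
      · push Not at h
        obtain ⟨p, hp, hp2⟩ := h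
        by_cases hpU : p ∈ U
        · simp only [hpU, if_true] at hp2
          rw [Finset.prod_eq_zero hpU (if_neg hp2)]; ring
        · simp only [hpU, if_false] at hp2
          rw [Finset.prod_eq_zero (Finset.mem_sdiff.2 ⟨hp, hpU⟩) (if_neg hp2)]; ring
    rw [Finset.sum_congr rfl e1, ← Finset.mul_sum, Finset.sum_boole]
    have e2 : (∏ p ∈ U, ((if p ∣ D then (0:ℝ) else 1) / p)) * ∏ p ∈ S \ U, (g p / p)
        = (∏ p ∈ S \ U, g p) * (1 / ∏ p ∈ S, (p:ℝ)) := by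
      have b1 : ∏ p ∈ U, ((if p ∣ D then (0:ℝ) else 1) / p) = 1 / ∏ p ∈ U, (p:ℝ) := by
        rw [one_div, ← Finset.prod_inv_distrib]
        apply Finset.prod_congr rfl
        intro p hp
        rw [if_neg (hUD p hp), one_div]
      rw [b1, Finset.prod_div_distrib, ← Finset.prod_sdiff hU]
      have c1 : ∏ p ∈ U, (p:ℝ) ≠ 0 := Finset.prod_ne_zero_iff.2 fun p hp => by
        exact_mod_cast (hS p (hU hp)).ne_zero
      have c2 : ∏ p ∈ S \ U, (p:ℝ) ≠ 0 := Finset.prod_ne_zero_iff.2 fun p hp => by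
        exact_mod_cast (hS p (Finset.mem_sdiff.1 hp).1).ne_zero
      field_simp
    rw [e2]
    have e3 : ∀ a x : ℝ, a * x - N * (a * (1 / ∏ p ∈ S, (p:ℝ))) = a * (x - N / ∏ p ∈ S, (p:ℝ)) := by
      intro a x; ring
    rw [e3, abs_mul]
    have e4 : |∏ p ∈ S \ U, g p| ≤ 1 := by
      rw [abs_of_nonneg (Finset.prod_nonneg fun p _ => (hg p).1)]
      exact Finset.prod_le_one (fun p _ => (hg p).1) (fun p _ => (hg p).2)
    calc _ ≤ (1:ℝ) * 1 := by gcongr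
      _ = 1 := by norm_num
  · push Not at hUD
    obtain ⟨p, hp, hpD⟩ := hUD
    have e1 : ∀ m ∈ Finset.Ioc 0 N, (∏ p ∈ U, (if p ∣ D * m + 1 then (1:ℝ) else 0)) * ∏ p ∈ S \ U, (if p ∣ m then g p else 0) = 0 := by
      intro m _
      rw [Finset.prod_eq_zero hp, zero_mul]
      rw [if_neg]
      intro h
      have : p ∣ 1 := (Nat.dvd_add_right (hpD.mul_right m)).1 h
      exact (hS p (hU hp)).one_lt.ne' (Nat.dvd_one.1 this)
    rw [Finset.sum_congr rfl e1, Finset.prod_eq_zero hp (by rw [if_pos hpD, zero_div])]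
    simp


theorem exp_sub_one_le_two (u : ℝ) (h0 : 0 ≤ u) (h1 : u ≤ 1) : Real.exp u - 1 ≤ 2 * u := by
  have h := Real.abs_exp_sub_one_sub_id_le (x := u) (by rw [abs_of_nonneg h0]; exact h1)
  have := (abs_le.1 h).2
  nlinarith

theorem prod_cast_eq_exp (σ : ℝ) (V : Finset ℕ) (hV : ∀ p ∈ V, p.Prime) :
    ∏ p ∈ V, Real.exp (σ * Real.log p) = Real.exp (σ * Real.log (∏ p ∈ V, (p:ℝ))) := by
  rw [← Real.exp_sum, ← Finset.mul_sum, Real.log_prod]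
  intro p hp
  exact_mod_cast (hV p hp).ne_zero

theorem rankin_lower (z : ℝ) (hz : 2 ≤ z) (P : Finset ℕ) (hP : P ⊆ PP z) (h : ℕ → ℝ)
    (hh : ∀ p ∈ P, 0 ≤ h p ∧ h p ≤ 6 / p) :
    (1/2) * ∏ p ∈ P, (1 + h p) ≤
      ∑ V ∈ P.powerset.filter (fun V : Finset ℕ => (∏ p ∈ V, (p:ℝ)) ≤ z ^ 50), ∏ p ∈ V, h p := by
  have hlz : 0 < Real.log z := Real.log_pos (by linarith)
  have hpr : ∀ p ∈ P, p.Prime := fun p hp => (mem_PP.1 (hP hp)).1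
  have hle : ∀ p ∈ P, (p:ℝ) ≤ z := fun p hp => (mem_PP.1 (hP hp)).2
  set σ : ℝ := 1 / Real.log z with hσ
  have hσ0 : 0 < σ := by positivity
  have htot : ∏ p ∈ P, (1 + h p) = ∑ V ∈ P.powerset, ∏ p ∈ V, h p := by
    rw [Finset.prod_one_add]
  have hsplit := Finset.sum_filter_add_sum_filter_not P.powerset
    (fun V : Finset ℕ => (∏ p ∈ V, (p:ℝ)) ≤ z ^ 50) (fun V => ∏ p ∈ V, h p)
  have hnn : ∀ V ∈ P.powerset, 0 ≤ ∏ p ∈ V, h p := fun V hV =>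
    Finset.prod_nonneg fun p hp => (hh p (Finset.mem_powerset.1 hV hp)).1
  have htail : ∑ V ∈ P.powerset.filter (fun V : Finset ℕ => ¬ (∏ p ∈ V, (p:ℝ)) ≤ z ^ 50), ∏ p ∈ V, h p
      ≤ Real.exp (-50) * ∏ p ∈ P, (1 + h p * Real.exp (σ * Real.log p)) := by
    rw [Finset.prod_one_add, Finset.mul_sum]
    refine le_trans (Finset.sum_le_sum (g := fun V => Real.exp (-50) * ∏ p ∈ V, (h p * Real.exp (σ * Real.log p))) ?_)
      (Finset.sum_le_sum_of_subset_of_nonneg (Finset.filter_subset _ _) ?_)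
    · intro V hV
      rw [Finset.mem_filter] at hV
      obtain ⟨hV1, hV2⟩ := hV
      have hVP := Finset.mem_powerset.1 hV1
      push Not at hV2
      rw [Finset.prod_mul_distrib, prod_cast_eq_exp σ V (fun p hp => hpr p (hVP hp))]
      have hl : 50 * Real.log z ≤ Real.log (∏ p ∈ V, (p:ℝ)) := by
        have := Real.log_le_log (by positivity) hV2.le
        rwa [Real.log_pow] at this
      have h1 : (50:ℝ) ≤ σ * Real.log (∏ p ∈ V, (p:ℝ)) := by
        rw [hσ, div_mul_eq_mul_div, one_mul, le_div_iff₀ hlz]; exact hl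
      have h2 : 1 ≤ Real.exp (-50) * Real.exp (σ * Real.log (∏ p ∈ V, (p:ℝ))) := by
        rw [← Real.exp_add]; apply Real.one_le_exp; linarith
      calc ∏ p ∈ V, h p = (∏ p ∈ V, h p) * 1 := by ring
        _ ≤ (∏ p ∈ V, h p) * (Real.exp (-50) * Real.exp (σ * Real.log (∏ p ∈ V, (p:ℝ)))) :=
          mul_le_mul_of_nonneg_left h2 (hnn V hV1)
        _ = _ := by ring
    · intro V hV _
      apply mul_nonneg (Real.exp_pos _).le
      exact Finset.prod_nonneg fun p hp => mul_nonneg (hh p (Finset.mem_powerset.1 hV hp)).1 (Real.exp_pos _).le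
  have hprod : ∏ p ∈ P, (1 + h p * Real.exp (σ * Real.log p)) ≤
      (∏ p ∈ P, (1 + h p)) * Real.exp (∑ p ∈ P, h p * (2 * (σ * Real.log p))) := by
    rw [Real.exp_sum, ← Finset.prod_mul_distrib]
    apply Finset.prod_le_prod
    · intro p hp
      have := (hh p hp).1
      positivity
    · intro p hp
      have h0 := (hh p hp).1
      have hp1 : (1:ℝ) ≤ p := by exact_mod_cast (hpr p hp).one_le
      have hlp : 0 ≤ Real.log p := Real.log_nonneg hp1
      have hu1 : σ * Real.log p ≤ 1 := by
        rw [hσ, div_mul_eq_mul_div, one_mul, div_le_one hlz]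
        exact Real.log_le_log (by linarith) (hle p hp)
      have hu := exp_sub_one_le_two (σ * Real.log p) (by positivity) hu1
      have h3 : h p * (Real.exp (σ * Real.log p) - 1) ≤ h p * (2 * (σ * Real.log p)) :=
        mul_le_mul_of_nonneg_left hu h0
      have h4 := Real.add_one_le_exp (h p * (2 * (σ * Real.log p)))
      have h5 : 0 ≤ h p * (2 * (σ * Real.log p)) := by positivity
      nlinarith
  have hsum : ∑ p ∈ P, h p * (2 * (σ * Real.log p)) ≤ 48 := by
    have h1 : ∑ p ∈ P, h p * (2 * (σ * Real.log p)) ≤ ∑ p ∈ PP z, 12 * σ * (Real.log p / p) := by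
      refine le_trans (Finset.sum_le_sum (g := fun p : ℕ => 12 * σ * (Real.log p / p)) ?_)
        (Finset.sum_le_sum_of_subset_of_nonneg hP ?_)
      · intro p hp
        have hp1 : (1:ℝ) ≤ p := by exact_mod_cast (hpr p hp).one_le
        have hlp : 0 ≤ Real.log p := Real.log_nonneg hp1
        calc h p * (2 * (σ * Real.log p)) ≤ 6 / p * (2 * (σ * Real.log p)) :=
              mul_le_mul_of_nonneg_right (hh p hp).2 (by positivity)
          _ = _ := by ring
      · intro p hp _
        have hp1 : (1:ℝ) ≤ p := by exact_mod_cast (mem_PP.1 hp).1.one_le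
        have hlp : 0 ≤ Real.log p := Real.log_nonneg hp1
        positivity
    rw [← Finset.mul_sum] at h1
    have h2 := mertens1_upper (x := z) (by linarith)
    have h3 : 12 * σ * ∑ p ∈ PP z, Real.log p / p ≤ 12 * σ * (Real.log z + 2) :=
      mul_le_mul_of_nonneg_left h2 (by positivity)
    have h4 : 12 * σ * (Real.log z + 2) = 12 + 24 / Real.log z := by
      rw [hσ]; field_simp; ring
    have h5 : (2:ℝ)/3 ≤ Real.log z := by
      have := Real.log_le_log (by norm_num) hz
      have := Real.log_two_gt_d9
      linarith
    have h6 : 24 / Real.log z ≤ 36 := by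
      rw [div_le_iff₀ hlz]; linarith
    linarith
  have hfin : Real.exp (-50) * ∏ p ∈ P, (1 + h p * Real.exp (σ * Real.log p)) ≤ (1/2) * ∏ p ∈ P, (1 + h p) := by
    have hpos : 0 ≤ ∏ p ∈ P, (1 + h p) := Finset.prod_nonneg fun p hp => by linarith [(hh p hp).1]
    have e1 : Real.exp (-50) * Real.exp 48 ≤ 1/2 := by
      rw [← Real.exp_add, show (-50 + 48 : ℝ) = -2 by norm_num, Real.exp_neg, inv_le_comm₀ (Real.exp_pos _) (by norm_num)]
      have := Real.add_one_le_exp (2:ℝ)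
      norm_num; linarith
    calc _ ≤ Real.exp (-50) * ((∏ p ∈ P, (1 + h p)) * Real.exp 48) := by
          gcongr
          refine hprod.trans ?_
          gcongr
      _ = (Real.exp (-50) * Real.exp 48) * ∏ p ∈ P, (1 + h p) := by ring
      _ ≤ _ := by gcongr
  linarith

theorem totient_exp (D : ℕ) (hD : 1 ≤ D) (A : Finset ℕ) (hA : ∀ p ∈ A, p.Prime) :
    Real.exp (∑ p ∈ A.filter (fun p => p ∣ D), 1 / (p:ℝ)) ≤ D / Nat.totient D := by
  have hφ : (0:ℝ) < Nat.totient D := by exact_mod_cast Nat.totient_pos.2 hD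
  have h1 : ∑ p ∈ A.filter (fun p => p ∣ D), 1 / (p:ℝ) ≤ ∑ p ∈ D.primeFactors, 1 / (p:ℝ) := by
    apply Finset.sum_le_sum_of_subset_of_nonneg
    · intro p hp
      rw [Finset.mem_filter] at hp
      exact Nat.mem_primeFactors.2 ⟨hA p hp.1, hp.2, by omega⟩
    · intro p _ _; positivity
  refine (Real.exp_le_exp.2 h1).trans ?_
  rw [le_div_iff₀ hφ]
  have h2 := Nat.totient_eq_mul_prod_factors D
  have h2' : (Nat.totient D : ℝ) = D * ∏ p ∈ D.primeFactors, (1 - (p:ℝ)⁻¹) := by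
    have := congrArg (Rat.cast : ℚ → ℝ) h2
    push_cast at this
    exact this
  rw [h2', Real.exp_sum]
  have h3 : (∏ p ∈ D.primeFactors, Real.exp (1 / (p:ℝ))) * ∏ p ∈ D.primeFactors, (1 - (p:ℝ)⁻¹) ≤ 1 := by
    rw [← Finset.prod_mul_distrib]
    have hp1 : ∀ p ∈ D.primeFactors, (p:ℝ)⁻¹ ≤ 1 := by
      intro p hp
      have : (1:ℝ) ≤ p := by exact_mod_cast (Nat.prime_of_mem_primeFactors hp).one_le
      exact inv_le_one_of_one_le₀ this
    apply Finset.prod_le_one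
    · intro p hp
      have := hp1 p hp
      exact mul_nonneg (Real.exp_pos _).le (by linarith)
    · intro p hp
      have h4 := Real.one_sub_le_exp_neg ((p:ℝ)⁻¹)
      calc Real.exp (1 / (p:ℝ)) * (1 - (p:ℝ)⁻¹) ≤ Real.exp (1 / (p:ℝ)) * Real.exp (-(p:ℝ)⁻¹) := by gcongr
        _ = 1 := by rw [← Real.exp_add, one_div]; simp
  calc _ = D * ((∏ p ∈ D.primeFactors, Real.exp (1 / (p:ℝ))) * ∏ p ∈ D.primeFactors, (1 - (p:ℝ)⁻¹)) := by ring
    _ ≤ D * 1 := by gcongr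
    _ = D := by ring


theorem sieve_error (z : ℝ) (hz : 2 ≤ z) (N D : ℕ) (g : ℕ → ℝ) (P : Finset ℕ) (hP : P ⊆ PP z)
    (hg : ∀ p, 0 ≤ g p ∧ g p ≤ 1) (hρ : ∀ p ∈ P, 1 / (4 * (p:ℝ)) ≤ rh D g p)
    (S T : Finset ℕ) (hS : S ⊆ P) (hT : T ⊆ P) (hS2 : ∏ p ∈ S, (p:ℝ) ≤ z ^ 50)
    (hT2 : ∏ p ∈ T, (p:ℝ) ≤ z ^ 50) :
    (1 / ∏ p ∈ S, rh D g p) * (1 / ∏ p ∈ T, rh D g p) *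
      |∑ m ∈ Finset.Ioc 0 N, ∏ p ∈ S ∪ T, bet D g m p - N * ∏ p ∈ S ∪ T, rh D g p| ≤ z ^ 400 := by
  have hpr : ∀ p ∈ P, p.Prime := fun p hp => (mem_PP.1 (hP hp)).1
  have h2p : ∀ p ∈ P, (2:ℝ) ≤ p := fun p hp => by exact_mod_cast (hpr p hp).two_le
  have key : ∀ S ⊆ P, ∏ p ∈ S, (p:ℝ) ≤ z ^ 50 → 1 / ∏ p ∈ S, rh D g p ≤ (z^50)^3 := by
    intro S hS h
    rw [one_div, ← Finset.prod_inv_distrib]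
    calc ∏ p ∈ S, (rh D g p)⁻¹ ≤ ∏ p ∈ S, (p:ℝ)^3 := by
          apply Finset.prod_le_prod
          · intro p hp
            have := hρ p (hS hp)
            have h2 := h2p p (hS hp)
            have : 0 < rh D g p := lt_of_lt_of_le (by positivity) this
            positivity
          · intro p hp
            have h1 := hρ p (hS hp)
            have h2 := h2p p (hS hp)
            calc (rh D g p)⁻¹ ≤ (1 / (4 * (p:ℝ)))⁻¹ := inv_anti₀ (by positivity) h1
              _ = 4 * p := by rw [one_div, inv_inv]
              _ ≤ p ^ 3 := by nlinarith [mul_self_nonneg ((p:ℝ) - 2)]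
      _ = (∏ p ∈ S, (p:ℝ))^3 := by rw [Finset.prod_pow]
      _ ≤ _ := by
        gcongr
  have key2 : ∀ S ⊆ P, ∏ p ∈ S, (p:ℝ) ≤ z ^ 50 → (2:ℝ)^S.card ≤ z^50 := by
    intro S hS h
    refine le_trans ?_ h
    rw [← Finset.prod_const]
    apply Finset.prod_le_prod
    · intro p _; norm_num
    · intro p hp; exact h2p p (hS hp)
  have h1 := sieve_rem N D (S ∪ T) (fun p hp => hpr p (Finset.union_subset hS hT hp)) g hg
  have h2 : (2:ℝ) ^ (S ∪ T).card ≤ z^50 * z^50 := by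
    calc (2:ℝ) ^ (S ∪ T).card ≤ 2 ^ (S.card + T.card) :=
          pow_le_pow_right₀ (by norm_num) (Finset.card_union_le _ _)
      _ = 2^S.card * 2^T.card := pow_add _ _ _
      _ ≤ _ := by
        have := key2 S hS hS2
        have := key2 T hT hT2
        gcongr
  have hnn : ∀ S ⊆ P, 0 ≤ 1 / ∏ p ∈ S, rh D g p := by
    intro S hS
    apply one_div_nonneg.2
    apply Finset.prod_nonneg
    intro p hp
    have := h2p p (hS hp)
    exact le_trans (by positivity) (hρ p (hS hp))
  have a1 := key S hS hS2
  have a2 := key T hT hT2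
  have a3 := hnn S hS
  have a4 := hnn T hT
  calc _ ≤ ((z^50)^3) * ((z^50)^3) * (z^50 * z^50) := by
        gcongr
        exact h1.trans h2
    _ = z ^ 400 := by rw [← pow_mul, ← pow_add, ← pow_add, ← pow_add]

theorem sieve_card (z : ℝ) (hz : 2 ≤ z) (P : Finset ℕ) (hP : P ⊆ PP z) :
    (((P.powerset.filter (fun V : Finset ℕ => (∏ p ∈ V, (p:ℝ)) ≤ z ^ 50)).card : ℕ) : ℝ) ≤ z ^ 50 := by
  have hpr : ∀ p ∈ P, p.Prime := fun p hp => (mem_PP.1 (hP hp)).1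
  have h1 : (P.powerset.filter (fun V : Finset ℕ => (∏ p ∈ V, (p:ℝ)) ≤ z ^ 50)).card ≤ (Finset.Ioc 0 ⌊z^50⌋₊).card := by
    apply Finset.card_le_card_of_injOn (fun V => ∏ p ∈ V, p)
    · intro V hV
      simp only [Finset.coe_filter, Set.mem_ofPred_eq, Finset.mem_powerset] at hV
      simp only [Finset.coe_Ioc, Set.mem_Ioc]
      refine ⟨Finset.prod_pos fun p hp => (hpr p (hV.1 hp)).pos, ?_⟩
      apply Nat.le_floor
      rw [Nat.cast_prod]; exact hV.2
    · intro V hV W hW h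
      simp only [Finset.coe_filter, Set.mem_ofPred_eq, Finset.mem_powerset] at hV hW
      have h1 := Nat.primeFactors_prod (s := V) fun p hp => hpr p (hV.1 hp)
      have h2 := Nat.primeFactors_prod (s := W) fun p hp => hpr p (hW.1 hp)
      rw [← h1, ← h2]
      exact congrArg _ h
  rw [Nat.card_Ioc, Nat.sub_zero] at h1
  calc _ ≤ ((⌊z^50⌋₊ : ℕ) : ℝ) := by exact_mod_cast h1
    _ ≤ z^50 := Nat.floor_le (by positivity)

theorem sieve_main : ∃ C : ℝ, 0 < C ∧ ∀ (D N : ℕ) (g : ℕ → ℝ), 1 ≤ D →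
    2 ≤ (N:ℝ) ^ ((1:ℝ)/1000) → g 2 = 0 → (∀ p, g p = 0 ∨ (1/4 ≤ g p ∧ g p ≤ 1)) →
    ∑ m ∈ (Finset.Ioc 0 N).filter (fun m => (D * m + 1).Prime),
      ∏ p ∈ (PP ((N:ℝ) ^ ((1:ℝ)/1000))).filter (fun p => p ∣ m), (1 - g p)
    ≤ C * (N / Real.log N) * (D / Nat.totient D) *
      Real.exp (-∑ p ∈ PP ((N:ℝ) ^ ((1:ℝ)/1000)), g p / p) := by
  refine ⟨2100 * Real.exp 22, by positivity, ?_⟩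
  intro D N g hD hz hg2 hg'
  set z : ℝ := (N:ℝ) ^ ((1:ℝ)/1000) with hzdef
  have hg : ∀ p, 0 ≤ g p ∧ g p ≤ 1 := by
    intro p
    rcases hg' p with h | h
    · rw [h]; norm_num
    · exact ⟨by linarith [h.1], h.2⟩
  have hNz : (N:ℝ) = z ^ 1000 := by
    rw [hzdef, ← Real.rpow_natCast, ← Real.rpow_mul (by positivity)]; norm_num
  have hlz : 0 < Real.log z := Real.log_pos (by linarith)
  have hlN : Real.log N = 1000 * Real.log z := by rw [hNz, Real.log_pow]; norm_num
  have hN0 : (0:ℝ) < N := by rw [hNz]; positivity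
  set ρ := rh D g with hρdef
  set P := (PP z).filter (fun p => ρ p ≠ 0) with hPdef
  have hPs : P ⊆ PP z := Finset.filter_subset _ _
  have hpr : ∀ p ∈ PP z, p.Prime := fun p hp => (mem_PP.1 hp).1
  have hρb : ∀ p ∈ P, 1 / (4 * (p:ℝ)) ≤ ρ p ∧ ρ p ≤ 2 / 3 ∧ ρ p ≤ 2 / p := by
    intro p hp
    obtain ⟨hp1, hp2⟩ := Finset.mem_filter.1 hp
    have hpp := hpr p hp1
    have h2 : (2:ℝ) ≤ p := by exact_mod_cast hpp.two_le
    have e : ρ p = ((if p ∣ D then 0 else 1) + g p) / p := by rw [hρdef]; unfold rh; ring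
    have hp0 : (0:ℝ) < p := by linarith
    have gb := hg p
    have lo : 1/4 ≤ ((if p ∣ D then 0 else 1) + g p) := by
      split_ifs with h
      · rcases hg' p with h3 | h3
        · exfalso; apply hp2; rw [e, if_pos h, h3]; simp
        · linarith [h3.1]
      · linarith [gb.1]
    have hi : ((if p ∣ D then 0 else 1) + g p) ≤ 2 := by
      split_ifs <;> linarith [gb.2]
    refine ⟨?_, ?_, ?_⟩
    · rw [e, show 1 / (4 * (p:ℝ)) = (1/4) / p by field_simp]; gcongr
    · rcases Nat.eq_or_lt_of_le hpp.two_le with h3 | h3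
      · rw [e, ← h3, hg2, div_le_iff₀ (by norm_num)]; split_ifs <;> norm_num
      · have : (3:ℝ) ≤ p := by exact_mod_cast h3
        rw [e, div_le_iff₀ hp0]; linarith
    · rw [e]; gcongr
  set R := P.powerset.filter (fun V : Finset ℕ => (∏ p ∈ V, (p:ℝ)) ≤ z ^ 50) with hRdef
  have hbet : ∀ m, ∀ p ∈ PP z, 0 ≤ bet D g m p ∧ bet D g m p ≤ 1 := by
    intro m p hp
    unfold bet
    have gb := hg p
    by_cases h1 : p ∣ m
    · have : ¬ p ∣ D * m + 1 := by
        intro h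
        have : p ∣ 1 := (Nat.dvd_add_right (h1.mul_left D)).1 h
        exact (hpr p hp).one_lt.ne' (Nat.dvd_one.1 this)
      rw [if_neg this, if_pos h1]; constructor <;> linarith
    · rw [if_neg h1]; split_ifs <;> norm_num
  have hsel := selberg_sieve (Finset.Ioc 0 N) P ρ N (by
      intro p hp
      have h := hρb p hp
      have h2 : (2:ℝ) ≤ p := by exact_mod_cast (hpr p (hPs hp)).two_le
      exact ⟨lt_of_lt_of_le (by positivity) h.1, by linarith [h.2.1]⟩) R (Finset.filter_subset _ _)
    (by
      rw [hRdef, Finset.mem_filter]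
      refine ⟨Finset.empty_mem_powerset _, ?_⟩
      simp only [Finset.prod_empty]
      exact one_le_pow₀ (by linarith))
    (by
      intro S hS T hT
      rw [hRdef, Finset.mem_filter, Finset.mem_powerset] at hS ⊢
      refine ⟨hT.trans hS.1, le_trans ?_ hS.2⟩
      have : (∏ p ∈ T, p) ∣ ∏ p ∈ S, p := Finset.prod_dvd_prod_of_subset _ _ _ hT
      have h5 := Nat.le_of_dvd (Finset.prod_pos fun p hp => (hpr p (hPs (hS.1 hp))).pos) this
      rw [← Nat.cast_prod, ← Nat.cast_prod]
      exact_mod_cast h5)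
    (bet D g) (fun m _ p hp => hbet m p (hPs hp)) (z^400)
    (by
      intro S hS T hT
      rw [hRdef, Finset.mem_filter, Finset.mem_powerset] at hS hT
      convert sieve_error z hz N D g P hPs hg (fun p hp => (hρb p hp).1) S T hS.1 hT.1 hS.2 hT.2)
  have hcard := sieve_card z hz P hPs
  have herr : (R.card:ℝ)^2 * z^400 ≤ z^500 := by
    have hc : (R.card:ℝ)^2 ≤ (z^50)^2 := pow_le_pow_left₀ (Nat.cast_nonneg _) hcard 2
    calc (R.card:ℝ)^2 * z^400 ≤ (z^50)^2 * z^400 := mul_le_mul_of_nonneg_right hc (pow_nonneg (by linarith) _)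
      _ = z^500 := by rw [← pow_mul, ← pow_add]
  -- main term
  have hh : ∀ p ∈ P, 0 ≤ ρ p / (1 - ρ p) ∧ ρ p / (1 - ρ p) ≤ 6 / p := by
    intro p hp
    have h := hρb p hp
    have h2 : (2:ℝ) ≤ p := by exact_mod_cast (hpr p (hPs hp)).two_le
    have h0 : 0 < ρ p := lt_of_lt_of_le (by positivity) h.1
    have h3 : (1:ℝ)/3 ≤ 1 - ρ p := by linarith [h.2.1]
    refine ⟨div_nonneg h0.le (by linarith), ?_⟩
    calc ρ p / (1 - ρ p) ≤ (2 / p) / (1/3) := by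
          apply div_le_div₀ (by positivity) h.2.2 (by norm_num) h3
      _ = 6 / p := by ring
  have hG := rankin_lower z hz P hPs _ hh
  have hQ : ∏ p ∈ P, (1 + ρ p / (1 - ρ p)) = (∏ p ∈ P, (1 - ρ p))⁻¹ := by
    rw [← Finset.prod_inv_distrib]
    apply Finset.prod_congr rfl
    intro p hp
    have h := hρb p hp
    have : 1 - ρ p ≠ 0 := by linarith [h.2.1]
    field_simp; ring
  have hQpos : 0 < ∏ p ∈ P, (1 - ρ p) := Finset.prod_pos fun p hp => by linarith [(hρb p hp).2.1]
  have hQle : ∏ p ∈ P, (1 - ρ p) ≤ Real.exp (-∑ p ∈ P, ρ p) := by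
    rw [← Finset.sum_neg_distrib, Real.exp_sum]
    apply Finset.prod_le_prod
    · intro p hp; linarith [(hρb p hp).2.1]
    · intro p _; exact Real.one_sub_le_exp_neg _
  have hsumP : ∑ p ∈ P, ρ p = ∑ p ∈ PP z, ρ p := by
    rw [hPdef, Finset.sum_filter]
    apply Finset.sum_congr rfl
    intro p _
    split_ifs with h
    · rfl
    · push Not at h; exact h.symm
  have hsumρ : ∑ p ∈ PP z, ρ p = RS z - ∑ p ∈ (PP z).filter (fun p => p ∣ D), 1 / (p:ℝ) + ∑ p ∈ PP z, g p / p := by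
    unfold RS
    rw [Finset.sum_filter, ← Finset.sum_sub_distrib, ← Finset.sum_add_distrib]
    apply Finset.sum_congr rfl
    intro p _
    rw [hρdef]; unfold rh
    split_ifs <;> ring
  have hm2 := abs_le.1 (mertens2 hz)
  set Sg := ∑ p ∈ PP z, g p / p with hSg
  have hφ : (0:ℝ) < Nat.totient D := by exact_mod_cast Nat.totient_pos.2 hD
  have hDφ : (1:ℝ) ≤ D / Nat.totient D := by
    rw [one_le_div hφ]; exact_mod_cast Nat.totient_le D
  have hmain : (N:ℝ) / (∑ V ∈ R, ∏ p ∈ V, (ρ p / (1 - ρ p))) ≤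
      2000 * Real.exp 22 * (N / Real.log N) * (D / Nat.totient D) * Real.exp (-Sg) := by
    have h1 : (N:ℝ) / (∑ V ∈ R, ∏ p ∈ V, (ρ p / (1 - ρ p))) ≤ N / ((1/2) * (∏ p ∈ P, (1 - ρ p))⁻¹) := by
      rw [hQ] at hG
      apply div_le_div_of_nonneg_left hN0.le (by positivity) hG
    have h2 : N / ((1/2) * (∏ p ∈ P, (1 - ρ p))⁻¹) = 2 * N * ∏ p ∈ P, (1 - ρ p) := by
      field_simp
    have h3 : Real.exp (-∑ p ∈ P, ρ p) = Real.exp (- RS z) *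
        Real.exp (∑ p ∈ (PP z).filter (fun p => p ∣ D), 1 / (p:ℝ)) * Real.exp (-Sg) := by
      rw [hsumP, hsumρ, ← Real.exp_add, ← Real.exp_add]; congr 1; ring
    have h4 := totient_exp D hD (PP z) hpr
    have h5 : Real.exp (-RS z) ≤ Real.exp 22 / Real.log z := by
      calc Real.exp (-RS z) ≤ Real.exp (22 - Real.log (Real.log z)) := by
            apply Real.exp_le_exp.2; linarith [hm2.1]
        _ = _ := by rw [Real.exp_sub, Real.exp_log hlz]
    calc _ ≤ 2 * N * ∏ p ∈ P, (1 - ρ p) := by rw [← h2]; exact h1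
      _ ≤ 2 * N * Real.exp (-∑ p ∈ P, ρ p) := by gcongr
      _ ≤ 2 * N * ((Real.exp 22 / Real.log z) * (D / Nat.totient D) * Real.exp (-Sg)) := by
        rw [h3]; gcongr
      _ = _ := by rw [hlN]; field_simp; norm_num
  have hrest : z + z^500 ≤ 100 * Real.exp 22 * (N / Real.log N) * (D / Nat.totient D) * Real.exp (-Sg) := by
    have h1 : Sg ≤ RS z := by
      rw [hSg]; unfold RS
      apply Finset.sum_le_sum
      intro p hp
      have := (hg p).2
      gcongr
    have h2 : Real.exp (-22) / Real.log z ≤ Real.exp (-Sg) := by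
      calc Real.exp (-22) / Real.log z = Real.exp (-22 - Real.log (Real.log z)) := by
            rw [Real.exp_sub, Real.exp_log hlz]
        _ ≤ _ := by apply Real.exp_le_exp.2; linarith [hm2.2]
    have h3 : Real.log z ≤ z := (Real.log_le_sub_one_of_pos (by linarith)).trans (by linarith)
    have hz1 : 1 ≤ z := by linarith
    have h4 : z ≤ z^500 := le_self_pow₀ hz1 (by norm_num)
    have h5 : 2 * z^500 * (Real.log z)^2 ≤ (100/1000) * z^1000 := by
      have a1 : (Real.log z)^2 ≤ z^2 := by gcongr
      have a2 : (2:ℝ)^8 ≤ z^498 := (pow_le_pow_left₀ (by norm_num) hz 8).trans (pow_le_pow_right₀ hz1 (by norm_num))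
      have a3 : 20 * (z^500 * (Real.log z)^2) ≤ z^498 * (z^500 * z^2) := by
        have : 20 * (z^500 * (Real.log z)^2) ≤ 20 * (z^500 * z^2) := by gcongr
        have : 20 * (z^500 * z^2) ≤ z^498 * (z^500 * z^2) := by
          apply mul_le_mul_of_nonneg_right _ (by positivity)
          linarith
        linarith
      have a4 : z^498 * (z^500 * z^2) = z^1000 := by rw [← pow_add, ← pow_add]
      rw [a4] at a3
      linarith
    calc z + z^500 ≤ 2 * z^500 := by linarith
      _ ≤ (100/1000) * z^1000 / (Real.log z)^2 := by
        rw [le_div_iff₀ (by positivity)]; exact h5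
      _ = 100 * Real.exp 22 * (N / Real.log N) * 1 * (Real.exp (-22) / Real.log z) := by
        rw [hlN, hNz, Real.exp_neg]; field_simp
      _ ≤ _ := by gcongr
  have hL : ∑ m ∈ (Finset.Ioc 0 N).filter (fun m => (D * m + 1).Prime),
      ∏ p ∈ (PP z).filter (fun p => p ∣ m), (1 - g p) ≤
      z + ∑ m ∈ Finset.Ioc 0 N, ∏ p ∈ P, (1 - bet D g m p) := by
    have hpnn : ∀ m, 0 ≤ ∏ p ∈ P, (1 - bet D g m p) := fun m =>
      Finset.prod_nonneg fun p hp => by linarith [(hbet m p (hPs hp)).2]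
    have hcnt : ∑ m ∈ (Finset.Ioc 0 N).filter (fun m : ℕ => (m:ℝ) ≤ z), (1:ℝ) ≤ z := by
      rw [Finset.sum_const, nsmul_eq_mul, mul_one]
      have : ((Finset.Ioc 0 N).filter (fun m : ℕ => (m:ℝ) ≤ z)).card ≤ (Finset.Ioc 0 ⌊z⌋₊).card := by
        apply Finset.card_le_card
        intro m hm
        rw [Finset.mem_filter, Finset.mem_Ioc] at hm
        rw [Finset.mem_Ioc]
        exact ⟨hm.1.1, Nat.le_floor hm.2⟩
      rw [Nat.card_Ioc, Nat.sub_zero] at this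
      exact le_trans (by exact_mod_cast this) (Nat.floor_le (by linarith))
    have hpt : ∀ m ∈ Finset.Ioc 0 N, (if (D * m + 1).Prime then ∏ p ∈ (PP z).filter (fun p => p ∣ m), (1 - g p) else 0)
        ≤ (if (m:ℝ) ≤ z then 1 else 0) + ∏ p ∈ P, (1 - bet D g m p) := by
      intro m hm
      have h0 := hpnn m
      have h1 : ∏ p ∈ (PP z).filter (fun p => p ∣ m), (1 - g p) ≤ 1 :=
        Finset.prod_le_one (fun p _ => by linarith [(hg p).2]) (fun p _ => by linarith [(hg p).1])
      by_cases hprime : (D * m + 1).Prime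
      swap
      · rw [if_neg hprime]; split_ifs <;> linarith
      rw [if_pos hprime]
      by_cases hmz : (m:ℝ) ≤ z
      · rw [if_pos hmz]; linarith
      rw [if_neg hmz, zero_add]
      have hnd : ∀ p ∈ PP z, ¬ p ∣ D * m + 1 := by
        intro p hp hd
        have := (Nat.prime_dvd_prime_iff_eq (hpr p hp) hprime).1 hd
        have h3 := (mem_PP.1 hp).2
        push Not at hmz
        have h4 : m < p := by
          rw [this]
          have : m ≤ D * m := Nat.le_mul_of_pos_left m (by omega)
          omega
        have : (m:ℝ) < p := by exact_mod_cast h4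
        linarith
      apply le_of_eq
      rw [hPdef, Finset.prod_filter, Finset.prod_filter]
      apply Finset.prod_congr rfl
      intro p hp
      unfold bet
      rw [if_neg (hnd p hp)]
      by_cases hρ0 : ρ p = 0
      · have hg0 : g p = 0 := by
          have hp0 : (0:ℝ) < p := by exact_mod_cast (hpr p hp).pos
          have e : ρ p = ((if p ∣ D then 0 else 1) + g p) / p := by rw [hρdef]; unfold rh; ring
          rw [hρ0] at e
          have e2 : ((if p ∣ D then (0:ℝ) else 1) + g p) = 0 := by
            rcases div_eq_zero_iff.1 e.symm with h | h
            · exact h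
            · exact absurd h hp0.ne'
          have := (hg p).1
          split_ifs at e2 <;> linarith
        simp [hρ0, hg0]
      · simp only [ne_eq, hρ0, not_false_eq_true, if_true]
        split_ifs <;> ring
    rw [Finset.sum_filter]
    refine (Finset.sum_le_sum hpt).trans ?_
    rw [Finset.sum_add_distrib, ← Finset.sum_filter]
    linarith
  have hsel2 : ∑ m ∈ Finset.Ioc 0 N, ∏ p ∈ P, (1 - bet D g m p) ≤ _ := hsel
  calc _ ≤ 2000 * Real.exp 22 * (N / Real.log N) * (D / Nat.totient D) * Real.exp (-Sg)
        + 100 * Real.exp 22 * (N / Real.log N) * (D / Nat.totient D) * Real.exp (-Sg) := by linarith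
    _ = _ := by ring


theorem sum_inv_sq_PP (x : ℝ) : ∑ p ∈ PP x, 1 / (p:ℝ)^2 ≤ 1 := by
  have h1 : PP x ⊆ Finset.Ioc 1 (max 1 ⌊x⌋₊) := by
    intro p hp
    rw [mem_PP] at hp
    rw [Finset.mem_Ioc]
    exact ⟨hp.1.one_lt, le_max_of_le_right (Nat.le_floor hp.2)⟩
  refine (Finset.sum_le_sum_of_subset_of_nonneg h1 (fun p _ _ => by positivity)).trans ?_
  have := sum_Ioc_inv_sq_le_sub (α := ℝ) (k := 1) (n := max 1 ⌊x⌋₊) (by norm_num) (le_max_left _ _)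
  simp only [one_div]
  refine this.trans ?_
  simp

/-- Selecting the least prime factors of `n` until the product exceeds `Y`. -/
theorem select_smooth (w : ℝ) : ∀ n : ℕ, ∀ Y : ℝ, 1 ≤ Y → 1 ≤ n →
    (∃ s, s ∣ n ∧ (∀ r : ℕ, r.Prime → r ∣ s → (r:ℝ) ≤ w) ∧ Y < s) →
    ∃ D m q : ℕ, n = D * m ∧ q.Prime ∧ q ∣ D ∧ (∀ r : ℕ, r.Prime → r ∣ D → r ≤ q) ∧
      (∀ r : ℕ, r.Prime → r ∣ m → q ≤ r) ∧ Y < D ∧ (D:ℝ) ≤ Y * q ∧ (q:ℝ) ≤ w := by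
  intro n
  induction n using Nat.strong_induction_on with
  | _ n ih =>
  intro Y hY hn ⟨s, hs, hsw, hYs⟩
  have hs1 : 1 < s := by
    have : (1:ℝ) < s := lt_of_le_of_lt hY hYs
    exact_mod_cast this
  have hn1 : n ≠ 1 := by
    rintro rfl
    rw [Nat.dvd_one] at hs; omega
  set p := n.minFac with hp
  have hpp : p.Prime := Nat.minFac_prime hn1
  have hpn : p ∣ n := Nat.minFac_dvd n
  obtain ⟨n', hn'⟩ := hpn
  have hn'0 : 1 ≤ n' := by
    rcases Nat.eq_zero_or_pos n' with h | h
    · rw [h] at hn'; omega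
    · exact h
  have hpmin : ∀ r : ℕ, r.Prime → r ∣ n → p ≤ r := fun r hr hrn => Nat.minFac_le_of_dvd hr.two_le hrn
  have hpw : (p:ℝ) ≤ w := by
    have h1 : s.minFac.Prime := Nat.minFac_prime hs1.ne'
    have h2 := hsw _ h1 (Nat.minFac_dvd s)
    have h3 := hpmin _ h1 ((Nat.minFac_dvd s).trans hs)
    have : (p:ℝ) ≤ s.minFac := by exact_mod_cast h3
    linarith
  have hp0 : (0:ℝ) < p := by exact_mod_cast hpp.pos
  by_cases hpY : Y < p
  · refine ⟨p, n', p, hn', hpp, dvd_rfl, ?_, ?_, hpY, ?_, hpw⟩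
    · intro r _ hrp; exact Nat.le_of_dvd hpp.pos hrp
    · intro r hr hrn; exact hpmin r hr (by rw [hn']; exact hrn.mul_left p)
    · nlinarith
  · push Not at hpY
    have hlt : n' < n := by
      rw [hn']; nlinarith [hpp.two_le]
    have hex : ∃ s, s ∣ n' ∧ (∀ r : ℕ, r.Prime → r ∣ s → (r:ℝ) ≤ w) ∧ Y / p < s := by
      by_cases hps : p ∣ s
      · obtain ⟨s', hs'⟩ := hps
        refine ⟨s', ?_, fun r hr hrs => hsw r hr (by rw [hs']; exact hrs.mul_left p), ?_⟩
        · rw [hs', hn'] at hs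
          exact Nat.dvd_of_mul_dvd_mul_left hpp.pos hs
        · rw [div_lt_iff₀ hp0]
          rw [hs'] at hYs
          push_cast at hYs
          linarith
      · refine ⟨s, ?_, hsw, ?_⟩
        · have : Nat.Coprime s p := ((Nat.Prime.coprime_iff_not_dvd hpp).2 hps).symm
          rw [hn'] at hs
          exact this.dvd_of_dvd_mul_left hs
        · refine lt_of_le_of_lt ?_ hYs
          apply div_le_self (by linarith)
          exact_mod_cast hpp.one_le
    obtain ⟨D, m, q, h1, h2, h3, h4, h5, h6, h7, h8⟩ := ih n' hlt (Y / p) ((one_le_div hp0).2 hpY) hn'0 hex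
    refine ⟨p * D, m, q, by rw [hn', h1]; ring, h2, h3.mul_left p, ?_, h5, ?_, ?_, h8⟩
    · intro r hr hrD
      rcases (Nat.Prime.dvd_mul hr).1 hrD with h | h
      · rw [(Nat.prime_dvd_prime_iff_eq hr hpp).1 h]
        apply hpmin q h2
        rw [hn', h1]
        exact (h3.mul_right m).mul_left p
      · exact h4 r hr h
    · rw [div_lt_iff₀ hp0] at h6
      push_cast; linarith
    · push_cast
      calc (p:ℝ) * D ≤ p * (Y / p * q) := by gcongr
        _ = Y * q := by field_simp

theorem smooth_euler_factor (p : ℕ) (hp : p.Prime) (σ : ℝ) (hσ : 0 < σ) (hσp : σ * Real.log p ≤ 1/4) :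
    Summable (fun n : ℕ => ((p^n : ℕ):ℝ)^σ / Nat.totient (p^n)) ∧
    ∑' n : ℕ, ((p^n : ℕ):ℝ)^σ / Nat.totient (p^n) ≤
      Real.exp (1 / p + 2 * σ * (Real.log p / p) + 21 * (1 / (p:ℝ)^2)) := by
  have h2 : (2:ℝ) ≤ p := by exact_mod_cast hp.two_le
  have hp0 : (0:ℝ) < p := by linarith
  have hlp : 0 ≤ Real.log p := Real.log_nonneg (by linarith)
  set u := (p:ℝ)^σ with hu
  have hu' : u = Real.exp (σ * Real.log p) := by
    rw [hu, Real.rpow_def_of_pos hp0, mul_comm]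
  have hu1 : 1 ≤ u := by rw [hu']; apply Real.one_le_exp; positivity
  have hu2 : u ≤ 1 + 2 * (σ * Real.log p) := by
    have := exp_sub_one_le_two (σ * Real.log p) (by positivity) (by linarith)
    linarith
  have hu3 : u ≤ 3/2 := by linarith
  set x := u / p with hx
  have hx0 : 0 < x := by positivity
  have hx1 : x ≤ 3/4 := by
    rw [hx, div_le_iff₀ hp0]; linarith
  have hterm : ∀ n : ℕ, ((p^(n+1) : ℕ):ℝ)^σ / Nat.totient (p^(n+1)) = (p / (p - 1) * x) * x^n := by
    intro n
    rw [Nat.totient_prime_pow_succ hp]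
    push_cast [Nat.cast_sub hp.one_le]
    rw [← Real.rpow_natCast, ← Real.rpow_mul hp0.le, mul_comm, Real.rpow_mul hp0.le, ← hu, Real.rpow_natCast]
    have : (p:ℝ) - 1 ≠ 0 := by linarith
    rw [hx, div_pow]
    field_simp
    rw [pow_succ, mul_comm]
  have hs1 : Summable (fun n : ℕ => ((p^(n+1) : ℕ):ℝ)^σ / Nat.totient (p^(n+1))) := by
    simp_rw [hterm]
    exact (summable_geometric_of_lt_one hx0.le (by linarith)).mul_left _
  have hs : Summable (fun n : ℕ => ((p^n : ℕ):ℝ)^σ / Nat.totient (p^n)) := (summable_nat_add_iff 1).1 hs1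
  refine ⟨hs, ?_⟩
  rw [hs.tsum_eq_zero_add]
  simp_rw [hterm]
  rw [tsum_mul_left, tsum_geometric_of_lt_one hx0.le (by linarith)]
  simp only [pow_zero, Nat.cast_one, Real.one_rpow, Nat.totient_one, div_one]
  have hxp : x ≤ 3 / 2 / p := by rw [hx]; gcongr
  have hip : (1:ℝ)/p ≤ 1/2 := by gcongr
  have b1 : (p:ℝ) / (p - 1) ≤ 1 + 2 / p := by
    rw [div_le_iff₀ (by linarith)]
    have : (1 + 2 / (p:ℝ)) * (p - 1) = p + 1 - 2 / p := by field_simp; ring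
    rw [this]
    have : 2 / (p:ℝ) ≤ 1 := by rw [div_le_one hp0]; exact h2
    linarith
  have b2 : x * (1 - x)⁻¹ ≤ x + 9 * (1 / (p:ℝ)^2) := by
    have : (1 - x)⁻¹ ≤ 4 := by
      rw [inv_le_comm₀ (by linarith) (by norm_num)]; linarith
    have e : x * (1 - x)⁻¹ = x + x^2 * (1-x)⁻¹ := by
      have : 1 - x ≠ 0 := by linarith
      field_simp; ring
    rw [e]
    have h0 : 0 ≤ (1 - x)⁻¹ := inv_nonneg.2 (by linarith)
    have : x^2 * (1-x)⁻¹ ≤ (3/2/p)^2 * 4 := by gcongr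
    have e2 : (3/2/(p:ℝ))^2 * 4 = 9 * (1 / (p:ℝ)^2) := by field_simp; norm_num
    linarith
  have b3 : x ≤ 1 / p + 2 * σ * (Real.log p / p) := by
    calc x ≤ (1 + 2 * (σ * Real.log p)) / p := by rw [hx]; gcongr
      _ = _ := by ring
  have hx9 : 0 ≤ x * (1-x)⁻¹ := by
    have : 0 < 1 - x := by linarith
    positivity
  have b4 : (p / (p - 1) * x) * (1 - x)⁻¹ ≤ x + 21 * (1 / (p:ℝ)^2) := by
    calc (p / (p - 1) * x) * (1 - x)⁻¹ = p / (p-1) * (x * (1-x)⁻¹) := by ring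
      _ ≤ (1 + 2/p) * (x + 9 * (1/(p:ℝ)^2)) := by gcongr
      _ = x + 9 * (1/(p:ℝ)^2) + 2 * x / p + 18 * (1/(p:ℝ)^2) * (1/p) := by ring
      _ ≤ x + 9 * (1/(p:ℝ)^2) + 2 * (3/2/p) / p + 18 * (1/(p:ℝ)^2) * (1/2) := by gcongr
      _ = _ := by ring
  have := Real.add_one_le_exp (1 / p + 2 * σ * (Real.log p / p) + 21 * (1 / (p:ℝ)^2))
  linarith

theorem smooth_sum (q : ℕ) (hq : q.Prime) (A : Finset ℕ)
    (hA : ∀ D ∈ A, D ≠ 0 ∧ ∀ r : ℕ, r.Prime → r ∣ D → r ≤ q) :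
    ∑ D ∈ A, (D:ℝ) ^ (1 / (4 * Real.log q)) / Nat.totient D ≤ Real.exp 45 * Real.log q := by
  have h2 : (2:ℝ) ≤ q := by exact_mod_cast hq.two_le
  have hlq : 0 < Real.log q := Real.log_pos (by linarith)
  have hlq2 : (2:ℝ)/3 ≤ Real.log q := by
    have := Real.log_le_log (by norm_num) h2
    have := Real.log_two_gt_d9
    linarith
  set σ := 1 / (4 * Real.log q) with hσ
  have hσ0 : 0 < σ := by positivity
  set f : ℕ → ℝ := fun D => if ∀ r : ℕ, r.Prime → r ∣ D → r ≤ q then (D:ℝ) ^ σ / Nat.totient D else 0 with hf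
  have hσp : ∀ p : ℕ, p.Prime → p ≤ q → σ * Real.log p ≤ 1/4 := by
    intro p hp hpq
    have : Real.log p ≤ Real.log q := Real.log_le_log (by exact_mod_cast hp.pos) (by exact_mod_cast hpq)
    rw [hσ, div_mul_eq_mul_div, one_mul, div_le_iff₀ (by positivity)]; linarith
  have hfp : ∀ p : ℕ, p.Prime → p ≤ q → ∀ n, f (p^n) = ((p^n : ℕ):ℝ)^σ / Nat.totient (p^n) := by
    intro p hp hpq n
    simp only [hf]
    rw [if_pos]
    intro r hr hrp
    rwa [(Nat.prime_dvd_prime_iff_eq hr hp).1 (hr.dvd_of_dvd_pow hrp)]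
  have hnn : ∀ n, 0 ≤ f n := by
    intro n; simp only [hf]; split_ifs
    · positivity
    · exact le_rfl
  have hf1 : f 1 = 1 := by
    simp only [hf]
    rw [if_pos]
    · simp
    · intro r hr h; exact absurd (Nat.dvd_one.1 h) hr.one_lt.ne'
  have hmul : ∀ {m n : ℕ}, Nat.Coprime m n → f (m * n) = f m * f n := by
    intro m n hmn
    simp only [hf]
    by_cases h : ∀ r : ℕ, r.Prime → r ∣ m * n → r ≤ q
    · rw [if_pos h, if_pos (fun r hr hd => h r hr (hd.mul_right n)), if_pos (fun r hr hd => h r hr (hd.mul_left m)),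
        Nat.totient_mul hmn]
      push_cast
      rw [Real.mul_rpow (by positivity) (by positivity)]
      ring
    · rw [if_neg h]
      push Not at h
      obtain ⟨r, hr, hd, hrq⟩ := h
      rcases (Nat.Prime.dvd_mul hr).1 hd with h | h
      · rw [if_neg (c := ∀ r : ℕ, r.Prime → r ∣ m → r ≤ q) (fun h' => absurd (h' r hr h) (by omega)), zero_mul]
      · rw [if_neg (c := ∀ r : ℕ, r.Prime → r ∣ n → r ≤ q) (fun h' => absurd (h' r hr h) (by omega)), mul_zero]
  have hsum : ∀ {p : ℕ}, p.Prime → Summable (fun n : ℕ => ‖f (p^n)‖) := by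
    intro p hp
    simp_rw [Real.norm_of_nonneg (hnn _)]
    by_cases hpq : p ≤ q
    · simp_rw [hfp p hp hpq]
      exact (smooth_euler_factor p hp σ hσ0 (hσp p hp hpq)).1
    · apply (summable_nat_add_iff 1).1
      apply summable_zero.congr
      intro n
      simp only [hf]
      rw [if_neg]
      intro h
      exact hpq (h p hp (dvd_pow_self p (by omega)))
  obtain ⟨hS1, hS2⟩ := EulerProduct.summable_and_hasSum_smoothNumbers_prod_primesBelow_tsum hf1 hmul hsum (q+1)
  have hle : ∑ D ∈ A, f D ≤ ∏ p ∈ (q+1).primesBelow, ∑' n, f (p^n) := by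
    have hm : ∀ D ∈ A, D ∈ (q+1).smoothNumbers := by
      intro D hD
      rw [Nat.mem_smoothNumbers']
      intro p hp hd
      exact Nat.lt_succ_of_le ((hA D hD).2 p hp hd)
    rw [← Finset.sum_attach]
    have := sum_le_hasSum (A.attach.map ⟨fun D => (⟨D.1, hm D.1 D.2⟩ : (q+1).smoothNumbers), by
      intro a b h; exact Subtype.ext (Subtype.mk.inj h)⟩) (fun i _ => hnn i.1) hS2
    rw [Finset.sum_map] at this
    exact this
  have hAe : ∑ D ∈ A, (D:ℝ) ^ σ / Nat.totient D = ∑ D ∈ A, f D := by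
    apply Finset.sum_congr rfl
    intro D hD
    simp only [hf]
    rw [if_pos (hA D hD).2]
  have hPP : (q+1).primesBelow = PP (q:ℝ) := by
    ext p
    rw [Nat.mem_primesBelow, mem_PP, Nat.cast_le]
    constructor
    · intro h; exact ⟨h.2, by omega⟩
    · intro h; exact ⟨by omega, h.1⟩
  rw [hAe]
  refine hle.trans ?_
  rw [hPP]
  have hprod : ∏ p ∈ PP (q:ℝ), ∑' n, f (p^n) ≤
      ∏ p ∈ PP (q:ℝ), Real.exp (1 / p + 2 * σ * (Real.log p / p) + 21 * (1 / (p:ℝ)^2)) := by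
    apply Finset.prod_le_prod
    · intro p _; exact tsum_nonneg fun n => hnn _
    · intro p hp
      rw [mem_PP, Nat.cast_le] at hp
      simp_rw [hfp p hp.1 hp.2]
      exact (smooth_euler_factor p hp.1 σ hσ0 (hσp p hp.1 hp.2)).2
  refine hprod.trans ?_
  rw [← Real.exp_sum]
  have : Real.exp 45 * Real.log q = Real.exp (45 + Real.log (Real.log q)) := by
    rw [Real.exp_add, Real.exp_log hlq]
  rw [this]
  apply Real.exp_le_exp.2
  rw [Finset.sum_add_distrib, Finset.sum_add_distrib, ← Finset.mul_sum, ← Finset.mul_sum]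
  have a1 := (abs_le.1 (mertens2 h2)).2
  unfold RS at a1
  have a2 := mertens1_upper (x := (q:ℝ)) (by linarith)
  have a3 := sum_inv_sq_PP q
  have a4 : 2 * σ * ∑ p ∈ PP (q:ℝ), Real.log p / p ≤ 2 * σ * (Real.log q + 2) := by gcongr
  have a5 : 2 * σ * (Real.log q + 2) = 1/2 + 1 / Real.log q := by rw [hσ]; field_simp; ring
  have a6 : 1 / Real.log q ≤ 3/2 := by rw [div_le_iff₀ hlq]; linarith
  linarith


theorem sieve_app : ∃ C : ℝ, 0 < C ∧ ∀ (t : ℝ) (D : ℕ) (g : ℕ → ℝ), 1 ≤ D → 1 ≤ t →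
    2 ≤ t ^ ((1:ℝ)/5000) → (D:ℝ) ≤ t ^ ((3:ℝ)/4) → g 2 = 0 →
    (∀ p, g p = 0 ∨ (1/4 ≤ g p ∧ g p ≤ 1)) → (∀ p : ℕ, g p ≠ 0 → (p:ℝ) ≤ t ^ ((1:ℝ)/5000)) →
    ∑ m ∈ (Finset.Ioc 0 ⌊t / D⌋₊).filter (fun m => (D * m + 1).Prime),
      ∏ p ∈ (PP (t ^ ((1:ℝ)/5000))).filter (fun p => p ∣ m), (1 - g p)
    ≤ C * (t / Real.log t) * (1 / Nat.totient D) *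
      Real.exp (-∑ p ∈ PP (t ^ ((1:ℝ)/5000)), g p / p) := by
  obtain ⟨C, hC, H⟩ := sieve_main
  refine ⟨5 * C, by positivity, ?_⟩
  intro t D g hD ht hy hDt hg2 hg hgy
  set y := t ^ ((1:ℝ)/5000) with hydef
  have ht0 : 0 < t := by linarith
  have hD0 : (0:ℝ) < D := by exact_mod_cast hD
  set N := ⌊t / D⌋₊ with hN
  have hs2 : 2 ≤ t ^ ((1:ℝ)/20) := hy.trans (Real.rpow_le_rpow_of_exponent_le ht (by norm_num))
  have hNt : t ^ ((1:ℝ)/5) ≤ N := by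
    have h1 : t ^ ((1:ℝ)/4) ≤ t / D := by
      rw [le_div_iff₀ hD0]
      calc t ^ ((1:ℝ)/4) * D ≤ t ^ ((1:ℝ)/4) * t ^ ((3:ℝ)/4) := by gcongr
        _ = t := by rw [← Real.rpow_add ht0]; norm_num
    have h2 : t / D < N + 1 := Nat.lt_floor_add_one _
    have h3 : t ^ ((1:ℝ)/4) = (t ^ ((1:ℝ)/20))^5 := by
      rw [← Real.rpow_natCast, ← Real.rpow_mul ht0.le]; norm_num
    have h4 : t ^ ((1:ℝ)/5) = (t ^ ((1:ℝ)/20))^4 := by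
      rw [← Real.rpow_natCast, ← Real.rpow_mul ht0.le]; norm_num
    have h5 : (t ^ ((1:ℝ)/20))^4 + 1 ≤ (t ^ ((1:ℝ)/20))^5 := by
      have : (2:ℝ)^4 ≤ (t ^ ((1:ℝ)/20))^4 := by gcongr
      have e : (t ^ ((1:ℝ)/20))^5 = (t ^ ((1:ℝ)/20))^4 * (t ^ ((1:ℝ)/20)) := by ring
      rw [e]; nlinarith
    rw [h4]; linarith
  have hyz : y ≤ (N:ℝ) ^ ((1:ℝ)/1000) := by
    calc y = (t ^ ((1:ℝ)/5)) ^ ((1:ℝ)/1000) := by rw [hydef, ← Real.rpow_mul ht0.le]; norm_num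
      _ ≤ _ := Real.rpow_le_rpow (by positivity) hNt (by norm_num)
  have h := H D N g hD (hy.trans hyz) hg2 hg
  have hsub := PP_mono hyz
  have e1 : ∑ p ∈ PP ((N:ℝ) ^ ((1:ℝ)/1000)), g p / p = ∑ p ∈ PP y, g p / p := by
    symm
    apply Finset.sum_subset hsub
    intro p hp hp2
    by_contra h0
    apply hp2
    rw [mem_PP] at hp ⊢
    refine ⟨hp.1, hgy p ?_⟩
    intro h1; apply h0; rw [h1]; simp
  have e2 : ∀ m, ∏ p ∈ (PP ((N:ℝ) ^ ((1:ℝ)/1000))).filter (fun p => p ∣ m), (1 - g p)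
      = ∏ p ∈ (PP y).filter (fun p => p ∣ m), (1 - g p) := by
    intro m
    symm
    apply Finset.prod_subset (Finset.filter_subset_filter _ hsub)
    intro p hp hp2
    by_contra h0
    apply hp2
    rw [Finset.mem_filter, mem_PP] at hp ⊢
    refine ⟨⟨hp.1.1, hgy p ?_⟩, hp.2⟩
    intro h1; apply h0; rw [h1]; simp
  rw [e1] at h
  simp_rw [e2] at h
  refine h.trans ?_
  have hlt : 0 < Real.log t := by
    apply Real.log_pos
    by_contra h1
    push Not at h1
    have : t ^ ((1:ℝ)/20) ≤ 1 := Real.rpow_le_one ht0.le h1 (by norm_num)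
    linarith
  have hlN : Real.log t / 5 ≤ Real.log N := by
    have := Real.log_le_log (by positivity) hNt
    rw [Real.log_rpow ht0] at this
    linarith
  have hNle : (N:ℝ) ≤ t / D := Nat.floor_le (by positivity)
  have hφ : (0:ℝ) < Nat.totient D := by exact_mod_cast Nat.totient_pos.2 hD
  calc C * (N / Real.log N) * (D / Nat.totient D) * Real.exp (-∑ p ∈ PP y, g p / p)
      ≤ C * ((t / D) / (Real.log t / 5)) * (D / Nat.totient D) * Real.exp (-∑ p ∈ PP y, g p / p) := by
        gcongr
    _ = _ := by field_simp

theorem log_two_third {q : ℝ} (h2 : 2 ≤ q) : (2:ℝ)/3 ≤ Real.log q := by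
  have := Real.log_le_log (by norm_num) h2
  have := Real.log_two_gt_d9
  linarith

theorem E2_Dsum (q : ℕ) (hq : q.Prime) (Y : ℝ) (hY : 0 < Y) (A : Finset ℕ)
    (hA : ∀ D ∈ A, D ≠ 0 ∧ q ∣ D ∧ Y < D ∧ ∀ r : ℕ, r.Prime → r ∣ D → r ≤ q) :
    ∑ D ∈ A, 1 / (Nat.totient D : ℝ) ≤
      4 * Real.exp 45 * (Real.log q / q) * Real.exp (-(Real.log Y / (4 * Real.log q))) := by
  have h2 : (2:ℝ) ≤ q := by exact_mod_cast hq.two_le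
  have hlq : 0 < Real.log q := Real.log_pos (by linarith)
  set σ := 1 / (4 * Real.log q) with hσ
  have hσ0 : 0 < σ := by positivity
  have hinj : Set.InjOn (fun D : ℕ => D / q) A := by
    intro a ha b hb h
    simp only at h
    obtain ⟨a', ha'⟩ := (hA a ha).2.1
    obtain ⟨b', hb'⟩ := (hA b hb).2.1
    rw [ha', hb', Nat.mul_div_cancel_left _ hq.pos, Nat.mul_div_cancel_left _ hq.pos] at h
    rw [ha', hb', h]
  have hS := smooth_sum q hq (A.image (fun D => D / q)) (by
    intro D' hD'
    rw [Finset.mem_image] at hD'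
    obtain ⟨D, hD, rfl⟩ := hD'
    obtain ⟨h0, ⟨k, rfl⟩, h3, h4⟩ := hA D hD
    rw [Nat.mul_div_cancel_left _ hq.pos]
    exact ⟨right_ne_zero_of_mul h0, fun r hr hrk => h4 r hr (hrk.mul_left q)⟩)
  rw [Finset.sum_image hinj] at hS
  have hqσ : (q:ℝ)^σ ≤ 2 := by
    have : (q:ℝ)^σ = Real.exp (1/4) := by
      rw [Real.rpow_def_of_pos (by linarith), hσ]; congr 1; field_simp
    rw [this]
    have := exp_sub_one_le_two (1/4) (by norm_num) (by norm_num)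
    linarith
  have hYσ : Real.exp (-(Real.log Y / (4 * Real.log q))) = Y ^ (-σ) := by
    rw [Real.rpow_def_of_pos hY, hσ]; congr 1; ring
  rw [hYσ]
  calc ∑ D ∈ A, 1 / (Nat.totient D : ℝ) ≤ ∑ D ∈ A, (4 / q * Y^(-σ)) * (((D / q : ℕ):ℝ)^σ / Nat.totient (D / q)) := by
        apply Finset.sum_le_sum
        intro D hD
        obtain ⟨h0, ⟨k, rfl⟩, h3, h4⟩ := hA D hD
        rw [Nat.mul_div_cancel_left _ hq.pos]
        have hk0 : 0 < k := Nat.pos_of_ne_zero (right_ne_zero_of_mul h0)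
        have hφk : (0:ℝ) < Nat.totient k := by exact_mod_cast Nat.totient_pos.2 hk0
        have hφ : ((q:ℝ) - 1) * Nat.totient k ≤ Nat.totient (q * k) := by
          have := Nat.totient_super_multiplicative q k
          rw [Nat.totient_prime hq] at this
          have h5 : (((q - 1) * Nat.totient k : ℕ):ℝ) ≤ Nat.totient (q * k) := by exact_mod_cast this
          rw [Nat.cast_mul, Nat.cast_sub hq.one_le, Nat.cast_one] at h5
          exact h5
        have h6 : 1 ≤ Y^(-σ) * (((q * k : ℕ):ℝ))^σ := by
          rw [Real.rpow_neg hY.le, inv_mul_eq_div, one_le_div (by positivity)]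
          exact Real.rpow_le_rpow hY.le h3.le hσ0.le
        have h7 : (((q * k : ℕ):ℝ))^σ ≤ 2 * (k:ℝ)^σ := by
          push_cast
          rw [Real.mul_rpow (by positivity) (by positivity)]
          gcongr
        have h8 : 1 / (Nat.totient (q * k) : ℝ) ≤ 2 / q * (1 / Nat.totient k) := by
          calc 1 / (Nat.totient (q * k) : ℝ) ≤ 1 / ((q / 2) * Nat.totient k) := by
                apply one_div_le_one_div_of_le (by positivity)
                refine le_trans ?_ hφ
                gcongr; linarith
            _ = _ := by field_simp
        calc 1 / (Nat.totient (q * k) : ℝ) ≤ 2 / q * (1 / Nat.totient k) * 1 := by rw [mul_one]; exact h8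
          _ ≤ 2 / q * (1 / Nat.totient k) * (Y^(-σ) * (2 * (k:ℝ)^σ)) := by
            gcongr
            exact h6.trans (by gcongr)
          _ = _ := by ring
    _ = (4 / q * Y^(-σ)) * ∑ D ∈ A, (((D / q : ℕ):ℝ)^σ / Nat.totient (D / q)) := by rw [Finset.mul_sum]
    _ ≤ (4 / q * Y^(-σ)) * (Real.exp 45 * Real.log q) := by gcongr
    _ = _ := by ring

theorem E2_bound : ∃ C : ℝ, 0 < C ∧ ∀ t w B : ℝ, 2 ≤ w → 4 ≤ B → w ^ (4000 * (B + 1)) ≤ t →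
    (((PP t).filter (fun p => ∃ s, s ∣ p - 1 ∧ (∀ r : ℕ, r.Prime → r ∣ s → (r:ℝ) ≤ w) ∧ w ^ B < s)).card : ℝ)
      ≤ C * Real.exp (-(B / 4)) * (t / Real.log t) := by
  obtain ⟨C, hC, H⟩ := sieve_app
  refine ⟨C * Real.exp 23 * (4 * Real.exp 45) * 4, by positivity, ?_⟩
  intro t w B hw hB hwt
  have hw0 : 0 < w := by linarith
  have hw1 : 1 ≤ w := by linarith
  have ht1 : 1 ≤ t := le_trans (Real.one_le_rpow hw1 (by linarith)) hwt
  have ht0 : 0 < t := by linarith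
  have hwy : w ≤ t ^ ((1:ℝ)/5000) := by
    calc w ≤ w ^ ((4000 * (B + 1)) * (1/5000)) := by
          nth_rewrite 1 [← Real.rpow_one w]
          exact Real.rpow_le_rpow_of_exponent_le hw1 (by linarith)
      _ = (w ^ (4000 * (B + 1))) ^ ((1:ℝ)/5000) := by rw [Real.rpow_mul hw0.le]
      _ ≤ _ := Real.rpow_le_rpow (by positivity) hwt (by norm_num)
  have hlt : 0 < Real.log t := by
    apply Real.log_pos
    calc 1 < w ^ (4000 * (B+1)) := Real.one_lt_rpow (by linarith) (by linarith)
      _ ≤ t := hwt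
  set Y := w ^ B with hY
  have hY1 : 1 ≤ Y := Real.one_le_rpow hw1 (by linarith)
  have hYw : Y * w ≤ t ^ ((3:ℝ)/4) := by
    calc Y * w = w ^ (B + 1) := by rw [hY, Real.rpow_add hw0, Real.rpow_one]
      _ ≤ w ^ ((4000 * (B + 1)) * (3/4)) := Real.rpow_le_rpow_of_exponent_le hw1 (by linarith)
      _ = (w ^ (4000 * (B + 1))) ^ ((3:ℝ)/4) := by rw [Real.rpow_mul hw0.le]
      _ ≤ _ := Real.rpow_le_rpow (by positivity) hwt (by norm_num)
  set A : ℕ → Finset ℕ := fun q => (Finset.Ioc 0 ⌊Y * q⌋₊).filter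
    (fun D => q ∣ D ∧ Y < D ∧ ∀ r : ℕ, r.Prime → r ∣ D → r ≤ q) with hA
  set M : ℕ → ℕ → Finset ℕ := fun q D => (Finset.Ioc 0 ⌊t / D⌋₊).filter
    (fun m => (D * m + 1).Prime ∧ ∀ r : ℕ, r.Prime → r ∣ m → q ≤ r) with hM
  have hcover : (PP t).filter (fun p => ∃ s, s ∣ p - 1 ∧ (∀ r : ℕ, r.Prime → r ∣ s → (r:ℝ) ≤ w) ∧ Y < s)
      ⊆ (PP w).biUnion (fun q => (A q).biUnion (fun D => (M q D).image (fun m => D * m + 1))) := by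
    intro p hp
    rw [Finset.mem_filter, mem_PP] at hp
    obtain ⟨⟨hpp, hpt⟩, hex⟩ := hp
    have hp2 := hpp.two_le
    obtain ⟨D, m, q, h1, h2, h3, h4, h5, h6, h7, h8⟩ := select_smooth w (p-1) Y hY1 (by omega) hex
    simp only [Finset.mem_biUnion, Finset.mem_image]
    have hDm : 0 < D * m := by rw [← h1]; omega
    have hD0 : 0 < D := Nat.pos_of_mul_pos_right hDm
    have hm0 : 0 < m := Nat.pos_of_mul_pos_left hDm
    have e : D * m + 1 = p := by omega
    refine ⟨q, mem_PP.2 ⟨h2, h8⟩, D, ?_, m, ?_, e⟩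
    · rw [hA]; simp only [Finset.mem_filter, Finset.mem_Ioc]
      exact ⟨⟨hD0, Nat.le_floor h7⟩, h3, h6, h4⟩
    · rw [hM]; simp only [Finset.mem_filter, Finset.mem_Ioc]
      refine ⟨⟨hm0, Nat.le_floor ?_⟩, by rw [e]; exact hpp, h5⟩
      rw [le_div_iff₀ (by exact_mod_cast hD0)]
      have : ((D * m : ℕ):ℝ) ≤ p := by exact_mod_cast (by omega : D * m ≤ p)
      push_cast at this
      linarith
  have hcard : (((PP t).filter (fun p => ∃ s, s ∣ p - 1 ∧ (∀ r : ℕ, r.Prime → r ∣ s → (r:ℝ) ≤ w) ∧ Y < s)).card : ℝ)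
      ≤ ∑ q ∈ PP w, ∑ D ∈ A q, ((M q D).card : ℝ) := by
    have h1 := (Finset.card_le_card hcover).trans Finset.card_biUnion_le
    have h2 : ∑ q ∈ PP w, ((A q).biUnion (fun D => (M q D).image (fun m => D * m + 1))).card
        ≤ ∑ q ∈ PP w, ∑ D ∈ A q, (M q D).card := by
      apply Finset.sum_le_sum
      intro q _
      refine Finset.card_biUnion_le.trans ?_
      apply Finset.sum_le_sum
      intro D _
      exact Finset.card_image_le
    exact_mod_cast h1.trans h2
  have hMb : ∀ q ∈ PP w, ∀ D ∈ A q, ((M q D).card : ℝ) ≤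
      C * (t / Real.log t) * (1 / Nat.totient D) * (Real.exp 23 / Real.log q) := by
    intro q hq D hD
    rw [mem_PP] at hq
    rw [hA] at hD; simp only [Finset.mem_filter, Finset.mem_Ioc] at hD
    have hq2 : (2:ℝ) ≤ q := by exact_mod_cast hq.1.two_le
    have hlq : 0 < Real.log q := Real.log_pos (by linarith)
    have hDY : (D:ℝ) ≤ Y * q := (Nat.le_floor_iff (by positivity)).1 hD.1.2
    set g : ℕ → ℝ := fun p => if p.Prime ∧ p < q ∧ p ≠ 2 then 1 else 0 with hg
    have h := H t D g hD.1.1 ht1 (hw.trans hwy)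
      (hDY.trans (le_trans (by gcongr; exact hq.2) hYw)) (by simp [hg])
      (by intro p; simp only [hg]; split_ifs
          · right; norm_num
          · left; rfl)
      (by intro p hp
          simp only [hg] at hp
          have hp2 : p < q := by
            by_contra h9
            apply hp
            rw [if_neg]
            intro h8; exact h9 h8.2.1
          have : (p:ℝ) < q := by exact_mod_cast hp2
          linarith [hq.2])
    set y := t ^ ((1:ℝ)/5000) with hy
    have hlow : ((M q D).card : ℝ) ≤ ∑ m ∈ (Finset.Ioc 0 ⌊t / D⌋₊).filter (fun m => (D * m + 1).Prime),
      ∏ p ∈ (PP y).filter (fun p => p ∣ m), (1 - g p) := by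
      have e : ((M q D).card : ℝ) = ∑ m ∈ M q D, ∏ p ∈ (PP y).filter (fun p => p ∣ m), (1 - g p) := by
        rw [Finset.card_eq_sum_ones]
        push_cast
        apply Finset.sum_congr rfl
        intro m hm
        rw [hM] at hm; simp only [Finset.mem_filter] at hm
        symm
        apply Finset.prod_eq_one
        intro p hp
        rw [Finset.mem_filter, mem_PP] at hp
        have := hm.2.2 p hp.1.1 hp.2
        simp only [hg]
        rw [if_neg (by intro h9; omega)]; ring
      rw [e]
      apply Finset.sum_le_sum_of_subset_of_nonneg
      · intro m hm
        rw [hM] at hm; simp only [Finset.mem_filter] at hm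
        rw [Finset.mem_filter]
        exact ⟨hm.1, hm.2.1⟩
      · intro m _ _
        apply Finset.prod_nonneg
        intro p _
        simp only [hg]; split_ifs <;> norm_num
    have hsum : Real.log (Real.log q) - 23 ≤ ∑ p ∈ PP y, g p / p := by
      have h1 : ∑ p ∈ PP (q:ℝ), g p / p ≤ ∑ p ∈ PP y, g p / p := by
        apply Finset.sum_le_sum_of_subset_of_nonneg (PP_mono (hq.2.trans hwy))
        intro p _ _
        simp only [hg]; split_ifs <;> positivity
      have h2 : RS q ≤ ∑ p ∈ PP (q:ℝ), (g p / p + ((if p = 2 then 1/2 else 0) + (if p = q then 1/2 else 0))) := by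
        unfold RS
        apply Finset.sum_le_sum
        intro p hp
        rw [mem_PP, Nat.cast_le] at hp
        simp only [hg]
        by_cases hp2 : p = 2
        · rw [if_pos hp2, hp2]; split_ifs <;> norm_num
        · by_cases hpq : p = q
          · rw [if_pos hpq, if_neg hp2]
            have h3 : (1:ℝ)/p ≤ 1/2 := by rw [hpq]; gcongr
            split_ifs <;> simp at * <;> linarith
          · rw [if_pos ⟨hp.1, by omega, hp2⟩, if_neg hp2, if_neg hpq]; linarith
      rw [Finset.sum_add_distrib, Finset.sum_add_distrib, Finset.sum_ite_eq', Finset.sum_ite_eq'] at h2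
      have h3 : (if 2 ∈ PP (q:ℝ) then (1:ℝ)/2 else 0) ≤ 1/2 := by split_ifs <;> norm_num
      have h4 : (if q ∈ PP (q:ℝ) then (1:ℝ)/2 else 0) ≤ 1/2 := by split_ifs <;> norm_num
      have h5 := (abs_le.1 (mertens2 hq2)).1
      linarith
    have hexp : Real.exp (-∑ p ∈ PP y, g p / p) ≤ Real.exp 23 / Real.log q := by
      calc _ ≤ Real.exp (23 - Real.log (Real.log q)) := Real.exp_le_exp.2 (by linarith)
        _ = _ := by rw [Real.exp_sub, Real.exp_log hlq]
    refine (hlow.trans h).trans ?_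
    gcongr
  have hq' : ∀ q ∈ PP w, ∑ D ∈ A q, ((M q D).card : ℝ) ≤
      (C * (t / Real.log t) * Real.exp 23 * (4 * Real.exp 45) * (Real.exp (-(B/4)) / Real.log w)) * (Real.log q / q) := by
    intro q hq
    have hqq := mem_PP.1 hq
    have hq2 : (2:ℝ) ≤ q := by exact_mod_cast hqq.1.two_le
    have hlq : 0 < Real.log q := Real.log_pos (by linarith)
    have h1 := E2_Dsum q hqq.1 Y (by linarith) (A q) (by
      intro D hD
      rw [hA] at hD; simp only [Finset.mem_filter, Finset.mem_Ioc] at hD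
      exact ⟨by omega, hD.2⟩)
    have hlY : Real.log Y = B * Real.log w := by rw [hY, Real.log_rpow hw0]
    have hlw : Real.log q ≤ Real.log w := Real.log_le_log (by linarith) hqq.2
    set a := Real.log w / Real.log q with ha
    have ha1 : 1 ≤ a := (one_le_div hlq).2 hlw
    have h2 : Real.exp (-(Real.log Y / (4 * Real.log q))) ≤ Real.exp (-(B/4)) / a := by
      have e : -(Real.log Y / (4 * Real.log q)) = -(B/4) + (-((B/4) * (a - 1))) := by
        rw [hlY, ha]; field_simp; ring
      rw [e, Real.exp_add, Real.exp_neg ((B/4) * (a-1)), ← div_eq_mul_inv]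
      apply div_le_div_of_nonneg_left (Real.exp_pos _).le (by linarith)
      have := Real.add_one_le_exp ((B/4) * (a-1))
      nlinarith
    calc ∑ D ∈ A q, ((M q D).card : ℝ) ≤ ∑ D ∈ A q, C * (t / Real.log t) * (1 / Nat.totient D) * (Real.exp 23 / Real.log q) :=
          Finset.sum_le_sum (hMb q hq)
      _ = C * (t / Real.log t) * (Real.exp 23 / Real.log q) * ∑ D ∈ A q, 1 / (Nat.totient D : ℝ) := by
        rw [Finset.mul_sum]; apply Finset.sum_congr rfl; intro D _; ring
      _ ≤ C * (t / Real.log t) * (Real.exp 23 / Real.log q) * (4 * Real.exp 45 * (Real.log q / q) * (Real.exp (-(B/4)) / a)) := by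
        gcongr
        exact h1.trans (by gcongr)
      _ = _ := by rw [ha]; field_simp
  have hlw := log_two_third hw
  have hm := mertens1_upper hw1
  calc _ ≤ ∑ q ∈ PP w, ∑ D ∈ A q, ((M q D).card : ℝ) := hcard
    _ ≤ ∑ q ∈ PP w, (C * (t / Real.log t) * Real.exp 23 * (4 * Real.exp 45) * (Real.exp (-(B/4)) / Real.log w)) * (Real.log q / q) :=
      Finset.sum_le_sum hq'
    _ = (C * (t / Real.log t) * Real.exp 23 * (4 * Real.exp 45) * (Real.exp (-(B/4)) / Real.log w)) * ∑ q ∈ PP w, (Real.log q / q) := by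
      rw [Finset.mul_sum]
    _ ≤ (C * (t / Real.log t) * Real.exp 23 * (4 * Real.exp 45) * (Real.exp (-(B/4)) / Real.log w)) * (4 * Real.log w) := by
      gcongr; linarith
    _ = _ := by
      have : Real.log w ≠ 0 := by linarith
      field_simp


theorem E1_bound (t w : ℝ) (hw : 2 ≤ w) (ht : 0 ≤ t) :
    (((PP t).filter (fun p => ∃ q : ℕ, w < q ∧ q ^ 2 ∣ p - 1)).card : ℝ) ≤ 2 * t / w := by
  have hf : 2 ≤ ⌊w⌋₊ := by rw [Nat.le_floor_iff (by linarith)]; exact_mod_cast hw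
  have hcover : (PP t).filter (fun p => ∃ q : ℕ, w < q ∧ q ^ 2 ∣ p - 1) ⊆
      (Finset.Ioc ⌊w⌋₊ (max ⌊w⌋₊ ⌊t⌋₊)).biUnion (fun q => (Finset.Ioc 0 ⌊t / (q:ℝ)^2⌋₊).image (fun k => q^2 * k + 1)) := by
    intro p hp
    rw [Finset.mem_filter, mem_PP] at hp
    obtain ⟨⟨hpp, hpt⟩, q, hq, k, hk⟩ := hp
    have hp2 := hpp.two_le
    have hq0 : 0 < q := by
      have : (0:ℝ) < q := by linarith
      exact_mod_cast this
    have hk0 : 0 < k := by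
      rcases Nat.eq_zero_or_pos k with h | h
      · rw [h] at hk; omega
      · exact h
    have hle : q^2 * k ≤ p := by omega
    have hleR : (q:ℝ)^2 * k ≤ t := by
      have : ((q^2 * k : ℕ):ℝ) ≤ p := by exact_mod_cast hle
      push_cast at this; linarith
    simp only [Finset.mem_biUnion, Finset.mem_image, Finset.mem_Ioc]
    refine ⟨q, ⟨(Nat.floor_lt (by linarith)).2 hq, ?_⟩, k, ⟨hk0, ?_⟩, by omega⟩
    · apply le_max_of_le_right
      apply Nat.le_floor
      have : q ≤ q^2 * k := by nlinarith
      have : (q:ℝ) ≤ p := by exact_mod_cast this.trans hle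
      linarith
    · apply Nat.le_floor
      rw [le_div_iff₀ (by positivity)]; linarith
  have h1 := (Finset.card_le_card hcover).trans Finset.card_biUnion_le
  have h2 : (((PP t).filter (fun p => ∃ q : ℕ, w < q ∧ q ^ 2 ∣ p - 1)).card : ℝ) ≤
      ∑ q ∈ Finset.Ioc ⌊w⌋₊ (max ⌊w⌋₊ ⌊t⌋₊), t * ((q:ℝ)^2)⁻¹ := by
    have h1' := (Nat.cast_le (α := ℝ)).2 h1
    refine h1'.trans ?_
    rw [Nat.cast_sum]
    apply Finset.sum_le_sum
    intro q _
    calc _ ≤ (((Finset.Ioc 0 ⌊t / (q:ℝ)^2⌋₊).card : ℕ) : ℝ) := by exact_mod_cast Finset.card_image_le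
      _ = ⌊t / (q:ℝ)^2⌋₊ := by simp
      _ ≤ t / (q:ℝ)^2 := Nat.floor_le (by positivity)
      _ = _ := by rw [div_eq_mul_inv]
  rw [← Finset.mul_sum] at h2
  have h3 := sum_Ioc_inv_sq_le_sub (α := ℝ) (k := ⌊w⌋₊) (n := max ⌊w⌋₊ ⌊t⌋₊) (by omega) (le_max_left _ _)
  have h4 : ((⌊w⌋₊ : ℕ):ℝ)⁻¹ ≤ 2 / w := by
    have a1 : w < (⌊w⌋₊:ℝ) + 1 := Nat.lt_floor_add_one w
    have : w / 2 ≤ (⌊w⌋₊ : ℝ) := by linarith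
    calc ((⌊w⌋₊ : ℕ):ℝ)⁻¹ ≤ (w/2)⁻¹ := inv_anti₀ (by linarith) this
      _ = 2 / w := by rw [inv_div]
  have h5 : (0:ℝ) ≤ ((max ⌊w⌋₊ ⌊t⌋₊ : ℕ):ℝ)⁻¹ := by positivity
  calc _ ≤ t * ∑ q ∈ Finset.Ioc ⌊w⌋₊ (max ⌊w⌋₊ ⌊t⌋₊), ((q:ℝ)^2)⁻¹ := h2
    _ ≤ t * (2 / w) := by
      gcongr; linarith
    _ = _ := by ring

/-- primes in (w, t] -/
noncomputable def QQ (w t : ℝ) : Finset ℕ := (PP t).filter (fun p : ℕ => w < p)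

theorem mem_QQ {w t : ℝ} {p : ℕ} : p ∈ QQ w t ↔ p.Prime ∧ (p:ℝ) ≤ t ∧ w < p := by
  unfold QQ; rw [Finset.mem_filter, mem_PP, and_assoc]

theorem totient_prod_primes (V : Finset ℕ) (hV : ∀ p ∈ V, p.Prime) :
    (Nat.totient (∏ p ∈ V, p) : ℝ) = ∏ p ∈ V, ((p:ℝ) - 1) := by
  induction V using Finset.induction_on with
  | empty => simp
  | insert a s ha ih =>
    rw [Finset.prod_insert ha, Finset.prod_insert ha]
    have hap := hV a (Finset.mem_insert_self a s)
    have hco : Nat.Coprime a (∏ p ∈ s, p) := by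
      apply Nat.Coprime.prod_right
      intro p hp
      exact (Nat.coprime_primes hap (hV p (Finset.mem_insert_of_mem hp))).2 (fun h => ha (h ▸ hp))
    rw [Nat.totient_mul hco, Nat.totient_prime hap, Nat.cast_mul, Nat.cast_sub hap.one_le, Nat.cast_one,
      ih (fun p hp => hV p (Finset.mem_insert_of_mem hp))]

theorem lemS : ∃ C : ℝ, 0 < C ∧ ∀ (t w : ℝ) (W : Finset (Finset ℕ)) (G : Finset ℕ),
    2 ≤ w → w ≤ t ^ ((1:ℝ)/5000) → 1 ≤ t → W ⊆ (QQ w t).powerset →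
    (∀ V ∈ W, ∏ p ∈ V, (p:ℝ) ≤ t ^ ((3:ℝ)/4)) → G ⊆ PP t →
    (∀ p ∈ G, ∀ q : ℕ, w < q → ¬ q ^ 2 ∣ p - 1) →
    ∑ p ∈ G, ∑ V ∈ W.filter (fun V => (∏ q ∈ V, q) ∣ p - 1), (18/25 : ℝ) ^ ((QQ w t).filter (fun q => q ∣ p - 1)).card
      ≤ C * (t / Real.log t) * (Real.log w / Real.log t) ^ ((7:ℝ)/25) * ∑ V ∈ W, ∏ p ∈ V, ((18/25) / ((p:ℝ) - 1)) := by
  obtain ⟨C, hC, H⟩ := sieve_app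
  refine ⟨C * Real.exp 13 * (5000:ℝ)^((7:ℝ)/25), by positivity, ?_⟩
  intro t w W G hw hwy ht hW hWt hG hGsq
  have ht0 : 0 < t := by linarith
  set y := t ^ ((1:ℝ)/5000) with hy
  have hy2 : 2 ≤ y := hw.trans hwy
  have hyt : y ≤ t := by
    rw [hy]; nth_rewrite 2 [← Real.rpow_one t]
    exact Real.rpow_le_rpow_of_exponent_le ht (by norm_num)
  have hlt : 0 < Real.log t := Real.log_pos (by linarith)
  have hlw : 0 < Real.log w := Real.log_pos (by linarith)
  set g : ℕ → ℝ := fun p => if w < p ∧ (p:ℝ) ≤ y then 7/25 else 0 with hg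
  set h : ℕ → ℝ := fun m => ∏ p ∈ (PP y).filter (fun p => p ∣ m), (1 - g p) with hh
  have hg1 : ∀ p, 0 ≤ 1 - g p := by intro p; simp only [hg]; split_ifs <;> norm_num
  have hnn : ∀ m, 0 ≤ h m := fun m => Finset.prod_nonneg fun p _ => hg1 p
  have hexp : Real.exp (-∑ p ∈ PP y, g p / p) ≤
      Real.exp 13 * (5000:ℝ)^((7:ℝ)/25) * (Real.log w / Real.log t) ^ ((7:ℝ)/25) := by
    have e1 : ∑ p ∈ PP y, g p / p = (7/25) * ∑ p ∈ (PP y).filter (fun p : ℕ => w < p), (1:ℝ) / p := by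
      rw [Finset.sum_filter, Finset.mul_sum]
      apply Finset.sum_congr rfl
      intro p hp
      have := (mem_PP.1 hp).2
      simp only [hg, this, and_true]
      split_ifs <;> ring
    have e2 := (abs_le.1 (RS_window hw hwy)).1
    have hly : Real.log y = Real.log t / 5000 := by rw [hy, Real.log_rpow ht0]; ring
    have hpos : 0 < 5000 * (Real.log w / Real.log t) := by positivity
    have e3 : Real.log (Real.log y / Real.log w) = - Real.log (5000 * (Real.log w / Real.log t)) := by
      rw [← Real.log_inv]; congr 1; rw [hly]; field_simp
    rw [e3] at e2
    calc Real.exp (-∑ p ∈ PP y, g p / p) ≤ Real.exp (13 + Real.log (5000 * (Real.log w / Real.log t)) * (7/25)) := by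
          apply Real.exp_le_exp.2; rw [e1]; linarith
      _ = Real.exp 13 * (5000 * (Real.log w / Real.log t)) ^ ((7:ℝ)/25) := by
          rw [Real.exp_add, Real.rpow_def_of_pos hpos]
      _ = _ := by rw [Real.mul_rpow (by norm_num) (by positivity)]; ring
  have hVb : ∀ V ∈ W, ∑ p ∈ G.filter (fun p => (∏ q ∈ V, q) ∣ p - 1),
      (18/25 : ℝ) ^ ((QQ w t).filter (fun q => q ∣ p - 1)).card ≤
      C * (t / Real.log t) * (Real.exp 13 * (5000:ℝ)^((7:ℝ)/25) * (Real.log w / Real.log t) ^ ((7:ℝ)/25)) *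
        ∏ p ∈ V, ((18/25) / ((p:ℝ) - 1)) := by
    intro V hV
    have hVQ := Finset.mem_powerset.1 (hW hV)
    have hVp : ∀ p ∈ V, p.Prime := fun p hp => (mem_QQ.1 (hVQ hp)).1
    set d := ∏ q ∈ V, q with hd
    have hd0 : 0 < d := Finset.prod_pos fun p hp => (hVp p hp).pos
    have hdt : (d:ℝ) ≤ t ^ ((3:ℝ)/4) := by rw [hd, Nat.cast_prod]; exact hWt V hV
    have h1 := H t d g hd0 ht hy2 hdt
      (by simp only [hg]; rw [if_neg]; push_cast; intro h9; linarith [h9.1])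
      (by intro p; simp only [hg]; split_ifs
          · right; norm_num
          · left; rfl)
      (by intro p hp
          simp only [hg] at hp
          by_contra h9
          apply hp
          rw [if_neg]
          intro h8; exact h9 h8.2)
    have hpt : ∀ p ∈ G.filter (fun p => d ∣ p - 1),
        (18/25 : ℝ) ^ ((QQ w t).filter (fun q => q ∣ p - 1)).card ≤ (18/25)^V.card * h ((p-1)/d) := by
      intro p hp
      rw [Finset.mem_filter] at hp
      obtain ⟨hpG, m, hm⟩ := hp
      have hpp := (mem_PP.1 (hG hpG)).1
      have hpt := (mem_PP.1 (hG hpG)).2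
      have hp2 := hpp.two_le
      rw [hm, Nat.mul_div_cancel_left _ hd0]
      set U := (PP y).filter (fun q : ℕ => w < q ∧ q ∣ m) with hU
      have e1 : h m = (18/25)^U.card := by
        rw [hh, hU, ← Finset.prod_const]
        simp only
        rw [← Finset.prod_filter_mul_prod_filter_not (s := (PP y).filter (fun p => p ∣ m)) (p := fun q : ℕ => w < q),
          Finset.filter_filter]
        rw [Finset.prod_eq_one (s := Finset.filter (fun q : ℕ => ¬ w < q) _), mul_one]
        · rw [Finset.filter_congr (q := fun q : ℕ => w < q ∧ q ∣ m) (fun q _ => and_comm)]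
          apply Finset.prod_congr rfl
          intro q hq
          rw [Finset.mem_filter, mem_PP] at hq
          simp only [hg]
          rw [if_pos ⟨hq.2.1, hq.1.2⟩]; norm_num
        · intro q hq
          rw [Finset.mem_filter] at hq
          simp only [hg]
          rw [if_neg (fun h9 => hq.2 h9.1)]; norm_num
      rw [e1, ← pow_add]
      apply pow_le_pow_of_le_one (by norm_num) (by norm_num)
      have hdis : Disjoint V U := by
        rw [Finset.disjoint_left]
        intro q hqV hqU
        rw [hU, Finset.mem_filter] at hqU
        apply hGsq p hpG q hqU.2.1
        rw [hm, sq]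
        exact mul_dvd_mul (Finset.dvd_prod_of_mem _ hqV) hqU.2.2
      rw [← Finset.card_union_of_disjoint hdis]
      apply Finset.card_le_card
      intro q hq
      rw [Finset.mem_filter]
      rcases Finset.mem_union.1 hq with h9 | h9
      · exact ⟨hVQ h9, (Finset.dvd_prod_of_mem _ h9).mul_right m⟩
      · rw [hU, Finset.mem_filter, mem_PP] at h9
        exact ⟨mem_QQ.2 ⟨h9.1.1, h9.1.2.trans hyt, h9.2.1⟩, h9.2.2.mul_left d⟩
    have hinj : Set.InjOn (fun p : ℕ => (p-1)/d) (G.filter (fun p => d ∣ p - 1)) := by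
      intro a ha b hb hab
      simp only [Finset.coe_filter, Set.mem_ofPred_eq] at ha hb
      have ha2 := (mem_PP.1 (hG ha.1)).1.two_le
      have hb2 := (mem_PP.1 (hG hb.1)).1.two_le
      simp only at hab
      have := Nat.div_mul_cancel ha.2
      have h9 := Nat.div_mul_cancel hb.2
      rw [hab] at this
      omega
    have h2 : ∑ p ∈ G.filter (fun p => d ∣ p - 1), (18/25)^V.card * h ((p-1)/d) ≤
        (18/25)^V.card * ∑ m ∈ (Finset.Ioc 0 ⌊t / d⌋₊).filter (fun m => (d * m + 1).Prime), h m := by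
      rw [← Finset.mul_sum]
      gcongr
      rw [← Finset.sum_image (f := h) hinj]
      apply Finset.sum_le_sum_of_subset_of_nonneg
      · intro m hm
        rw [Finset.mem_image] at hm
        obtain ⟨p, hp, rfl⟩ := hm
        rw [Finset.mem_filter] at hp
        obtain ⟨hpG, m, hm⟩ := hp
        have hpp := (mem_PP.1 (hG hpG)).1
        have hpt := (mem_PP.1 (hG hpG)).2
        have hp2 := hpp.two_le
        rw [hm, Nat.mul_div_cancel_left _ hd0, Finset.mem_filter, Finset.mem_Ioc]
        have hm0 : 0 < m := by
          rcases Nat.eq_zero_or_pos m with h | h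
          · rw [h] at hm; omega
          · exact h
        have e : d * m + 1 = p := by omega
        refine ⟨⟨hm0, Nat.le_floor ?_⟩, by rw [e]; exact hpp⟩
        rw [le_div_iff₀ (by exact_mod_cast hd0)]
        have : ((d * m : ℕ):ℝ) ≤ p := by exact_mod_cast (by omega : d * m ≤ p)
        push_cast at this
        linarith
      · intro m _ _; exact hnn m
    have hφ : ∏ p ∈ V, ((18/25) / ((p:ℝ) - 1)) = (18/25)^V.card * (1 / Nat.totient d) := by
      rw [hd, totient_prod_primes V hVp, Finset.prod_div_distrib, Finset.prod_const]; ring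
    calc _ ≤ ∑ p ∈ G.filter (fun p => d ∣ p - 1), (18/25)^V.card * h ((p-1)/d) := Finset.sum_le_sum hpt
      _ ≤ _ := h2
      _ ≤ (18/25)^V.card * (C * (t / Real.log t) * (1 / Nat.totient d) * (Real.exp 13 * (5000:ℝ)^((7:ℝ)/25) * (Real.log w / Real.log t) ^ ((7:ℝ)/25))) := by
        gcongr
        exact h1.trans (by gcongr)
      _ = _ := by rw [hφ]; ring
  have hswap : ∑ p ∈ G, ∑ V ∈ W.filter (fun V => (∏ q ∈ V, q) ∣ p - 1), (18/25 : ℝ) ^ ((QQ w t).filter (fun q => q ∣ p - 1)).card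
      = ∑ V ∈ W, ∑ p ∈ G.filter (fun p => (∏ q ∈ V, q) ∣ p - 1), (18/25 : ℝ) ^ ((QQ w t).filter (fun q => q ∣ p - 1)).card := by
    simp_rw [Finset.sum_filter]
    rw [Finset.sum_comm]
  rw [hswap]
  refine (Finset.sum_le_sum hVb).trans ?_
  rw [← Finset.mul_sum]
  apply le_of_eq; ring


theorem euler_sum : ∃ C : ℝ, 0 < C ∧ ∀ t w : ℝ, 2 ≤ w → w ≤ t →
    ∑ V ∈ (QQ w t).powerset, ∏ p ∈ V, ((18/25:ℝ) / ((p:ℝ) - 1)) ≤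
      C * (Real.log t / Real.log w) ^ ((18:ℝ)/25) := by
  refine ⟨Real.exp 46, Real.exp_pos _, ?_⟩
  intro t w hw hwt
  have hlw : 0 < Real.log w := Real.log_pos (by linarith)
  have hlt : 0 < Real.log t := Real.log_pos (by linarith)
  rw [← Finset.prod_one_add]
  have h1 : ∏ p ∈ QQ w t, (1 + (18/25:ℝ) / ((p:ℝ) - 1)) ≤
      Real.exp (∑ p ∈ QQ w t, (18/25:ℝ) * (1/(p:ℝ) + 2 * (1 / (p:ℝ)^2))) := by
    rw [Real.exp_sum]
    apply Finset.prod_le_prod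
    · intro p hp
      have hp2 : (2:ℝ) ≤ p := by exact_mod_cast (mem_QQ.1 hp).1.two_le
      have : (0:ℝ) < (p:ℝ) - 1 := by linarith
      positivity
    · intro p hp
      have hp2 : (2:ℝ) ≤ p := by exact_mod_cast (mem_QQ.1 hp).1.two_le
      have h0 : (0:ℝ) < (p:ℝ) - 1 := by linarith
      have h2 : (1:ℝ) / ((p:ℝ) - 1) ≤ 1/(p:ℝ) + 2 * (1 / (p:ℝ)^2) := by
        rw [div_le_iff₀ h0]
        have : (1/(p:ℝ) + 2 * (1 / (p:ℝ)^2)) * ((p:ℝ)-1) - 1 = ((p:ℝ) - 2) / (p:ℝ)^2 := by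
          field_simp; ring
        have h3 : 0 ≤ ((p:ℝ) - 2) / (p:ℝ)^2 := div_nonneg (by linarith) (by positivity)
        linarith
      have h4 : (18/25:ℝ) / ((p:ℝ) - 1) = 18/25 * (1 / ((p:ℝ) - 1)) := by ring
      have := Real.add_one_le_exp ((18/25:ℝ) * (1/(p:ℝ) + 2 * (1 / (p:ℝ)^2)))
      rw [h4]; linarith
  refine h1.trans ?_
  rw [← Finset.mul_sum, Finset.sum_add_distrib, ← Finset.mul_sum]
  have h2 := RS_window hw hwt
  rw [abs_le] at h2
  have h3 : ∑ p ∈ QQ w t, (1:ℝ)/(p:ℝ)^2 ≤ 1 := by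
    refine le_trans ?_ (sum_inv_sq_PP t)
    apply Finset.sum_le_sum_of_subset_of_nonneg
    · exact Finset.filter_subset _ _
    · intros; positivity
  have h4 : ∑ p ∈ QQ w t, (1:ℝ)/(p:ℝ) ≤ Real.log (Real.log t / Real.log w) + 44 := by
    have := h2.2
    unfold QQ; linarith
  have hr : 0 < Real.log t / Real.log w := by positivity
  rw [Real.rpow_def_of_pos hr, ← Real.exp_add]
  apply Real.exp_le_exp.2
  linarith

theorem window_inner (w t Y Z m : ℝ) (hY : 1 < Y) (hYZ : Y ≤ Z) (hm : 1 ≤ m) :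
    ∑ p ∈ (QQ w t).filter (fun p : ℕ => Y < p * m ∧ p * m ≤ Z),
      ((18/25:ℝ) / ((p:ℝ) - 1)) * Real.log p ≤ 2 * (Real.log (Z / Y) + 6) := by
  have hm0 : 0 < m := by linarith
  have hZ0 : 0 < Z := by linarith
  have hlog : 0 ≤ Real.log (Z / Y) := Real.log_nonneg (by rw [le_div_iff₀ (by linarith)]; linarith)
  have h1 : ∑ p ∈ (QQ w t).filter (fun p : ℕ => Y < p * m ∧ p * m ≤ Z),
      ((18/25:ℝ) / ((p:ℝ) - 1)) * Real.log p ≤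
      2 * ∑ p ∈ (QQ w t).filter (fun p : ℕ => Y < p * m ∧ p * m ≤ Z), Real.log p / p := by
    rw [Finset.mul_sum]
    apply Finset.sum_le_sum
    intro p hp
    rw [Finset.mem_filter] at hp
    have hp2 : (2:ℝ) ≤ p := by exact_mod_cast (mem_QQ.1 hp.1).1.two_le
    have h0 : (0:ℝ) < (p:ℝ) - 1 := by linarith
    have hl : 0 ≤ Real.log p := Real.log_nonneg (by linarith)
    have : (18/25:ℝ) / ((p:ℝ) - 1) ≤ 2 / p := by
      rw [div_le_div_iff₀ h0 (by linarith)]; linarith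
    calc _ ≤ 2 / p * Real.log p := by gcongr
      _ = _ := by ring
  refine h1.trans ?_
  apply mul_le_mul_of_nonneg_left _ (by norm_num)
  have hnn : ∀ p : ℕ, 0 ≤ Real.log p / p := fun p => div_nonneg (Real.log_natCast_nonneg p) (by positivity)
  by_cases hz : Z / m < 1
  · have : (QQ w t).filter (fun p : ℕ => Y < p * m ∧ p * m ≤ Z) = ∅ := by
      apply Finset.filter_eq_empty_iff.2
      rintro p hp ⟨_, h⟩
      have hp2 : (2:ℝ) ≤ p := by exact_mod_cast (mem_QQ.1 hp).1.two_le
      rw [div_lt_one hm0] at hz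
      nlinarith
    rw [this]; simp; linarith
  push Not at hz
  by_cases hy : 1 ≤ Y / m
  · have h2 := mertens1_window hy (show Y / m ≤ Z / m by gcongr)
    have h3 : Z / m / (Y / m) = Z / Y := by field_simp
    rw [h3] at h2
    refine le_trans ?_ h2
    apply Finset.sum_le_sum_of_subset_of_nonneg _ (fun p _ _ => hnn p)
    intro p hp
    rw [Finset.mem_filter, mem_QQ] at hp
    rw [Finset.mem_filter, mem_PP, le_div_iff₀ hm0, div_lt_iff₀ hm0]
    exact ⟨⟨hp.1.1, hp.2.2⟩, hp.2.1⟩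
  · push Not at hy
    have h2 := mertens1_upper hz
    have h3 : Real.log (Z / m) ≤ Real.log (Z / Y) := by
      apply Real.log_le_log (by positivity)
      rw [div_lt_one hm0] at hy
      gcongr
    have h4 : ∑ p ∈ (QQ w t).filter (fun p : ℕ => Y < p * m ∧ p * m ≤ Z), Real.log p / p ≤
        ∑ p ∈ PP (Z/m), Real.log p / p := by
      apply Finset.sum_le_sum_of_subset_of_nonneg _ (fun p _ _ => hnn p)
      intro p hp
      rw [Finset.mem_filter, mem_QQ] at hp
      rw [mem_PP, le_div_iff₀ hm0]
      exact ⟨hp.1.1, hp.2.2⟩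
    linarith

theorem window_sum (t w Y Z : ℝ) (hY : 1 < Y) (hYZ : Y ≤ Z) :
    Real.log Y * ∑ V ∈ (QQ w t).powerset.filter
        (fun V : Finset ℕ => Y < ∏ p ∈ V, (p:ℝ) ∧ ∏ p ∈ V, (p:ℝ) ≤ Z),
      ∏ p ∈ V, ((18/25:ℝ) / ((p:ℝ) - 1)) ≤
    2 * (Real.log (Z / Y) + 6) *
      ∑ V ∈ (QQ w t).powerset, ∏ p ∈ V, ((18/25:ℝ) / ((p:ℝ) - 1)) := by
  set Q := QQ w t with hQ
  set g : ℕ → ℝ := fun p => (18/25:ℝ) / ((p:ℝ) - 1) with hg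
  have hQ2 : ∀ p ∈ Q, (2:ℝ) ≤ p := fun p hp => by exact_mod_cast (mem_QQ.1 hp).1.two_le
  have hg0 : ∀ p ∈ Q, 0 ≤ g p := fun p hp => by
    have := hQ2 p hp
    exact div_nonneg (by norm_num) (by linarith)
  have hl0 : ∀ p : ℕ, 0 ≤ Real.log p := fun p => Real.log_natCast_nonneg p
  set W := Q.powerset.filter
        (fun V : Finset ℕ => Y < ∏ p ∈ V, (p:ℝ) ∧ ∏ p ∈ V, (p:ℝ) ≤ Z) with hW
  have hWQ : ∀ V ∈ W, V ⊆ Q := fun V hV => Finset.mem_powerset.1 (Finset.mem_filter.1 hV).1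
  have hf0 : ∀ V, V ⊆ Q → 0 ≤ ∏ p ∈ V, g p := fun V hV => Finset.prod_nonneg (fun p hp => hg0 p (hV hp))
  have h1 : Real.log Y * ∑ V ∈ W, ∏ p ∈ V, g p ≤ ∑ V ∈ W, ∑ p ∈ V, (∏ q ∈ V, g q) * Real.log p := by
    rw [Finset.mul_sum]
    apply Finset.sum_le_sum
    intro V hV
    rw [← Finset.mul_sum, ← Real.log_prod (fun p hp => by have := hQ2 p (hWQ V hV hp); positivity), mul_comm]
    apply mul_le_mul_of_nonneg_left _ (hf0 V (hWQ V hV))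
    exact Real.log_le_log (by linarith) (Finset.mem_filter.1 hV).2.1.le
  have h2 : ∑ V ∈ W, ∑ p ∈ V, (∏ q ∈ V, g q) * Real.log p =
      ∑ p ∈ Q, ∑ V ∈ W.filter (fun V : Finset ℕ => p ∈ V), (∏ q ∈ V, g q) * Real.log p := by
    apply Finset.sum_comm'
    intro V p
    simp only [Finset.mem_filter]
    constructor
    · rintro ⟨h, h'⟩; exact ⟨⟨h, h'⟩, hWQ V h h'⟩
    · rintro ⟨h, _⟩; exact h
  have h3 : ∀ p ∈ Q, ∑ V ∈ W.filter (fun V : Finset ℕ => p ∈ V), (∏ q ∈ V, g q) * Real.log p ≤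
      ∑ U ∈ Q.powerset.filter (fun U : Finset ℕ => Y < p * ∏ q ∈ U, (q:ℝ) ∧ p * ∏ q ∈ U, (q:ℝ) ≤ Z),
        (∏ q ∈ U, g q) * (g p * Real.log p) := by
    intro p hp
    have e1 : ∑ V ∈ W.filter (fun V : Finset ℕ => p ∈ V), (∏ q ∈ V, g q) * Real.log p =
        ∑ U ∈ (W.filter (fun V : Finset ℕ => p ∈ V)).image (fun V => V.erase p),
          (∏ q ∈ U, g q) * (g p * Real.log p) := by
      rw [Finset.sum_image]
      · apply Finset.sum_congr rfl
        intro V hV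
        rw [← Finset.prod_erase_mul V g (Finset.mem_filter.1 hV).2]; ring
      · intro V hV V' hV' h
        have a1 := (Finset.mem_filter.1 hV).2
        have a2 := (Finset.mem_filter.1 hV').2
        simp only at h
        rw [← Finset.insert_erase a1, ← Finset.insert_erase a2, h]
    rw [e1]
    apply Finset.sum_le_sum_of_subset_of_nonneg
    · intro U hU
      obtain ⟨V, hV, rfl⟩ := Finset.mem_image.1 hU
      obtain ⟨hV, hpV⟩ := Finset.mem_filter.1 hV
      rw [Finset.mem_filter, Finset.mem_powerset, Finset.mul_prod_erase V (fun q : ℕ => (q:ℝ)) hpV]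
      exact ⟨(Finset.erase_subset _ _).trans (hWQ V hV), (Finset.mem_filter.1 hV).2⟩
    · intro U hU _
      exact mul_nonneg (hf0 U (Finset.mem_powerset.1 (Finset.mem_filter.1 hU).1)) (mul_nonneg (hg0 p hp) (hl0 p))
  have h4 : ∑ p ∈ Q, ∑ U ∈ Q.powerset.filter (fun U : Finset ℕ => Y < p * ∏ q ∈ U, (q:ℝ) ∧ p * ∏ q ∈ U, (q:ℝ) ≤ Z),
        (∏ q ∈ U, g q) * (g p * Real.log p) =
      ∑ U ∈ Q.powerset, ∑ p ∈ Q.filter (fun p : ℕ => Y < p * ∏ q ∈ U, (q:ℝ) ∧ p * ∏ q ∈ U, (q:ℝ) ≤ Z),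
        (∏ q ∈ U, g q) * (g p * Real.log p) := by
    apply Finset.sum_comm'
    intro p U
    simp only [Finset.mem_filter]
    tauto
  refine h1.trans (h2.le.trans ((Finset.sum_le_sum h3).trans (h4.le.trans ?_)))
  rw [Finset.mul_sum]
  apply Finset.sum_le_sum
  intro U hU
  have hU := Finset.mem_powerset.1 hU
  rw [← Finset.mul_sum, mul_comm]
  apply mul_le_mul_of_nonneg_right _ (hf0 U hU)
  apply window_inner w t Y Z _ hY hYZ
  have : (1:ℝ) = ∏ q ∈ U, 1 := by simp
  rw [this]
  apply Finset.prod_le_prod (by intros; norm_num)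
  intro q hq
  linarith [hQ2 q (hU hq)]

theorem half_subsets (F : Finset ℕ) (n : ℕ) (t : ℝ) (hn : 1 ≤ n) (hnt : (n:ℝ) ≤ t)
    (hF : ∀ q ∈ F, q.Prime ∧ q ∣ n) :
    (2:ℝ) ^ F.card ≤ 2 * ((F.powerset.filter (fun V : Finset ℕ => ∏ p ∈ V, (p:ℝ) ≤ t ^ ((1:ℝ)/2))).card : ℝ) := by
  set S := F.powerset.filter (fun V : Finset ℕ => ∏ p ∈ V, (p:ℝ) ≤ t ^ ((1:ℝ)/2)) with hS
  have ht : (1:ℝ) ≤ t := by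
    have : (1:ℝ) ≤ n := by exact_mod_cast hn
    linarith
  have hdvd : (∏ p ∈ F, p) ∣ n := Finset.prod_primes_dvd n (fun p hp => (hF p hp).1.prime) (fun p hp => (hF p hp).2)
  have hle : ∏ p ∈ F, (p:ℝ) ≤ t := by
    have h1 := Nat.le_of_dvd (by omega) hdvd
    have : ((∏ p ∈ F, p : ℕ):ℝ) ≤ n := by exact_mod_cast h1
    rw [Nat.cast_prod] at this; linarith
  have hcov : F.powerset ⊆ S ∪ S.image (fun V => F \ V) := by
    intro V hV
    have hVF := Finset.mem_powerset.1 hV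
    by_cases h : ∏ p ∈ V, (p:ℝ) ≤ t ^ ((1:ℝ)/2)
    · exact Finset.mem_union_left _ (Finset.mem_filter.2 ⟨hV, h⟩)
    · apply Finset.mem_union_right
      rw [Finset.mem_image]
      refine ⟨F \ V, Finset.mem_filter.2 ⟨Finset.mem_powerset.2 Finset.sdiff_subset, ?_⟩, ?_⟩
      · have h1 := Finset.prod_sdiff (f := fun p : ℕ => (p:ℝ)) hVF
        push Not at h
        by_contra h2
        push Not at h2
        have h3 : t ^ ((1:ℝ)/2) * t ^ ((1:ℝ)/2) = t := by
          rw [← Real.rpow_add (by linarith)]; norm_num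
        have h4 : 0 < t ^ ((1:ℝ)/2) := by positivity
        have := mul_lt_mul'' h2 h h4.le h4.le
        rw [h3, h1] at this
        linarith
      · rw [Finset.sdiff_sdiff_eq_self hVF]
  have h := (Finset.card_le_card hcov).trans (Finset.card_union_le _ _)
  rw [Finset.card_powerset] at h
  have h' : (S.image (fun V => F \ V)).card ≤ S.card := Finset.card_image_le
  have : 2 ^ F.card ≤ 2 * S.card := by omega
  exact_mod_cast this


/-- number of primes in (w,t] dividing p-1 -/
noncomputable def kk (w t : ℝ) (p : ℕ) : ℕ := ((QQ w t).filter (fun q => q ∣ p - 1)).card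

theorem log_w_eq {t e : ℝ} (ht : 1 < t) (he : 0 < e) : Real.log (t ^ e) / Real.log t = e := by
  have : 0 < Real.log t := Real.log_pos ht
  rw [Real.log_rpow (by linarith)]; field_simp

theorem caseA : ∃ C : ℝ, 0 < C ∧ ∀ (t e K : ℝ) (G : Finset ℕ), 1 < t → 0 < e → e ≤ 1/5000 →
    2 ≤ t ^ e → G ⊆ PP t → (∀ p ∈ G, ∀ q : ℕ, t ^ e < q → ¬ q ^ 2 ∣ p - 1) →
    ((G.filter (fun p => K < (kk (t^e) t p : ℝ))).card : ℝ) ≤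
      C * (t / Real.log t) * e ^ (-(11:ℝ)/25) * (36/25:ℝ) ^ (-K) := by
  obtain ⟨C1, hC1, H1⟩ := lemS
  obtain ⟨C2, hC2, H2⟩ := euler_sum
  refine ⟨2 * C1 * C2, by positivity, ?_⟩
  intro t e K G ht he he1 hw hG hsq
  have hlt : 0 < Real.log t := Real.log_pos ht
  set w := t ^ e with hwdef
  have hw5 : w ≤ t ^ ((1:ℝ)/5000) := Real.rpow_le_rpow_of_exponent_le ht.le he1
  have hwt : w ≤ t := by
    calc w ≤ t ^ (1:ℝ) := Real.rpow_le_rpow_of_exponent_le ht.le (by linarith)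
      _ = t := Real.rpow_one t
  have hratio : Real.log w / Real.log t = e := log_w_eq ht he
  have hratio2 : Real.log t / Real.log w = e⁻¹ := by rw [← hratio, inv_div]
  set W := (QQ w t).powerset.filter (fun V : Finset ℕ => ∏ p ∈ V, (p:ℝ) ≤ t ^ ((1:ℝ)/2)) with hW
  have hS := H1 t w W (G.filter (fun p => K < (kk w t p : ℝ))) hw hw5 ht.le (Finset.filter_subset _ _)
    (by
      intro V hV
      exact (Finset.mem_filter.1 hV).2.trans (Real.rpow_le_rpow_of_exponent_le ht.le (by norm_num)))
    ((Finset.filter_subset _ _).trans hG)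
    (fun p hp => hsq p (Finset.mem_filter.1 hp).1)
  have hE := H2 t w hw hwt
  have hWE : ∑ V ∈ W, ∏ p ∈ V, ((18/25:ℝ) / ((p:ℝ) - 1)) ≤ C2 * (e⁻¹) ^ ((18:ℝ)/25) := by
    rw [hratio2] at hE
    refine le_trans ?_ hE
    apply Finset.sum_le_sum_of_subset_of_nonneg (Finset.filter_subset _ _)
    intro V hV _
    apply Finset.prod_nonneg
    intro p hp
    have : (2:ℝ) ≤ p := by exact_mod_cast (mem_QQ.1 (Finset.mem_powerset.1 hV hp)).1.two_le
    exact div_nonneg (by norm_num) (by linarith)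
  rw [hratio] at hS
  have hlow : ((G.filter (fun p => K < (kk w t p : ℝ))).card : ℝ) * ((36/25:ℝ)^K / 2) ≤
      ∑ p ∈ G.filter (fun p => K < (kk w t p : ℝ)), ∑ V ∈ W.filter (fun V : Finset ℕ => (∏ q ∈ V, q) ∣ p - 1),
        (18/25:ℝ) ^ ((QQ w t).filter (fun q => q ∣ p - 1)).card := by
    rw [← nsmul_eq_mul]
    apply Finset.card_nsmul_le_sum
    intro p hp
    rw [Finset.mem_filter] at hp
    have hpp := mem_PP.1 (hG hp.1)
    have hp2 := hpp.1.two_le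
    rw [Finset.sum_const, nsmul_eq_mul]
    have hk := hp.2
    unfold kk at hk
    set F := (QQ w t).filter (fun q => q ∣ p - 1) with hF
    have hFp : ∀ q ∈ F, q.Prime ∧ q ∣ p - 1 := fun q hq =>
      ⟨(mem_QQ.1 (Finset.mem_filter.1 hq).1).1, (Finset.mem_filter.1 hq).2⟩
    have hh := half_subsets F (p-1) t (by omega) (by
      have : ((p-1:ℕ):ℝ) ≤ p := by exact_mod_cast Nat.sub_le p 1
      linarith) hFp
    have hsub : F.powerset.filter (fun V : Finset ℕ => ∏ p ∈ V, (p:ℝ) ≤ t ^ ((1:ℝ)/2)) ⊆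
        W.filter (fun V : Finset ℕ => (∏ q ∈ V, q) ∣ p - 1) := by
      intro V hV
      obtain ⟨hV1, hV2⟩ := Finset.mem_filter.1 hV
      have hVF := Finset.mem_powerset.1 hV1
      refine Finset.mem_filter.2 ⟨Finset.mem_filter.2 ⟨Finset.mem_powerset.2 (hVF.trans (Finset.filter_subset _ _)), hV2⟩, ?_⟩
      exact Finset.prod_primes_dvd _ (fun q hq => (hFp q (hVF hq)).1.prime) (fun q hq => (hFp q (hVF hq)).2)
    have hcard : ((F.powerset.filter (fun V : Finset ℕ => ∏ p ∈ V, (p:ℝ) ≤ t ^ ((1:ℝ)/2))).card:ℝ) ≤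
        (W.filter (fun V : Finset ℕ => (∏ q ∈ V, q) ∣ p - 1)).card := by
      exact_mod_cast Finset.card_le_card hsub
    have h1 : (36/25:ℝ)^K ≤ (36/25:ℝ)^F.card := by
      rw [← Real.rpow_natCast]
      exact Real.rpow_le_rpow_of_exponent_le (by norm_num) hk.le
    have h2 : (36/25:ℝ)^F.card = 2^F.card * (18/25:ℝ)^F.card := by
      rw [← mul_pow]; norm_num
    have h3 : (0:ℝ) < (18/25:ℝ)^F.card := by positivity
    have h4 : (2:ℝ)^F.card / 2 ≤ (W.filter (fun V : Finset ℕ => (∏ q ∈ V, q) ∣ p - 1)).card := by linarith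
    calc (36/25:ℝ)^K / 2 ≤ (2:ℝ)^F.card / 2 * (18/25:ℝ)^F.card := by rw [h2] at h1; linarith
      _ ≤ _ := by gcongr
  have hK : 0 < (36/25:ℝ)^K := by positivity
  have hKi : (36/25:ℝ)^(-K) = ((36/25:ℝ)^K)⁻¹ := Real.rpow_neg (by norm_num) K
  have hexp : e ^ ((7:ℝ)/25) * (e⁻¹) ^ ((18:ℝ)/25) = e ^ (-(11:ℝ)/25) := by
    rw [Real.inv_rpow he.le, ← Real.rpow_neg he.le, ← Real.rpow_add he]; norm_num
  have htot : ((G.filter (fun p => K < (kk w t p : ℝ))).card : ℝ) * ((36/25:ℝ)^K / 2) ≤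
      C1 * C2 * (t / Real.log t) * e ^ (-(11:ℝ)/25) := by
    refine hlow.trans (hS.trans ?_)
    calc _ ≤ C1 * (t / Real.log t) * e ^ ((7:ℝ)/25) * (C2 * (e⁻¹) ^ ((18:ℝ)/25)) := by gcongr
      _ = C1 * C2 * (t / Real.log t) * (e ^ ((7:ℝ)/25) * (e⁻¹) ^ ((18:ℝ)/25)) := by ring
      _ = _ := by rw [hexp]
  rw [hKi, ← div_eq_mul_inv, le_div_iff₀ hK]
  linarith

theorem caseB : ∃ C : ℝ, 0 < C ∧ ∀ (t e K B : ℝ) (G : Finset ℕ), 1 < t → 0 < e → e ≤ 1/5000 →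
    0 ≤ B → (B + 1) * e ≤ 1/6 →
    2 ≤ t ^ e → G ⊆ PP t → (∀ p ∈ G, ∀ q : ℕ, t ^ e < q → ¬ q ^ 2 ∣ p - 1) →
    (∀ p ∈ G, (kk (t^e) t p : ℝ) ≤ K) →
    (∀ p ∈ G, ∃ V ∈ (QQ (t^e) t).powerset, (∏ q ∈ V, q) ∣ p - 1 ∧
      t ^ (2/3 - e - B * e) < ∏ q ∈ V, (q:ℝ) ∧ ∏ q ∈ V, (q:ℝ) ≤ t ^ (2/3 + 5 * e)) →
    (G.card : ℝ) ≤
      C * (t / Real.log t) * e ^ ((14:ℝ)/25) * (B + 15) * (18/25:ℝ) ^ (-K) := by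
  obtain ⟨C1, hC1, H1⟩ := lemS
  obtain ⟨C2, hC2, H2⟩ := euler_sum
  refine ⟨4 * C1 * C2, by positivity, ?_⟩
  intro t e K B G ht he he1 hB hBe hw hG hsq hkG hVG
  have hlt : 0 < Real.log t := Real.log_pos ht
  have ht0 : 0 < t := by linarith
  set w := t ^ e with hwdef
  have hw5 : w ≤ t ^ ((1:ℝ)/5000) := Real.rpow_le_rpow_of_exponent_le ht.le he1
  have hwt : w ≤ t := by
    calc w ≤ t ^ (1:ℝ) := Real.rpow_le_rpow_of_exponent_le ht.le (by linarith)
      _ = t := Real.rpow_one t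
  have hratio : Real.log w / Real.log t = e := log_w_eq ht he
  have hratio2 : Real.log t / Real.log w = e⁻¹ := by rw [← hratio, inv_div]
  set Y := t ^ (2/3 - e - B * e) with hYdef
  set Z := t ^ (2/3 + 5 * e) with hZdef
  set W := (QQ w t).powerset.filter
      (fun V : Finset ℕ => Y < ∏ p ∈ V, (p:ℝ) ∧ ∏ p ∈ V, (p:ℝ) ≤ Z) with hW
  have hS := H1 t w W G hw hw5 ht.le (Finset.filter_subset _ _)
    (by
      intro V hV
      exact (Finset.mem_filter.1 hV).2.2.trans (Real.rpow_le_rpow_of_exponent_le ht.le (by linarith)))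
    hG hsq
  have hE := H2 t w hw hwt
  rw [hratio2] at hE
  rw [hratio] at hS
  have hY1 : 1 < Y := Real.one_lt_rpow ht (by linarith)
  have hYZ : Y ≤ Z := Real.rpow_le_rpow_of_exponent_le ht.le (by nlinarith)
  have hWin := window_sum t w Y Z hY1 hYZ
  have hlogY : Real.log t / 2 ≤ Real.log Y := by
    rw [hYdef, Real.log_rpow ht0]; nlinarith
  have hlogZY : Real.log (Z / Y) = (B + 6) * e * Real.log t := by
    rw [hYdef, hZdef, ← Real.rpow_sub ht0, Real.log_rpow ht0]; ring
  have helt : 2/3 ≤ e * Real.log t := by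
    have h1 : Real.log 2 ≤ Real.log w := Real.log_le_log (by norm_num) hw
    rw [hwdef, Real.log_rpow ht0] at h1
    have := log_two_third (q := 2) (by norm_num)
    norm_num at this
    linarith
  have hsum0 : 0 ≤ ∑ V ∈ (QQ w t).powerset, ∏ p ∈ V, ((18/25:ℝ) / ((p:ℝ) - 1)) := by
    apply Finset.sum_nonneg
    intro V hV
    apply Finset.prod_nonneg
    intro p hp
    have : (2:ℝ) ≤ p := by exact_mod_cast (mem_QQ.1 (Finset.mem_powerset.1 hV hp)).1.two_le
    exact div_nonneg (by norm_num) (by linarith)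
  have hsumW : 0 ≤ ∑ V ∈ W, ∏ p ∈ V, ((18/25:ℝ) / ((p:ℝ) - 1)) := by
    apply Finset.sum_nonneg
    intro V hV
    apply Finset.prod_nonneg
    intro p hp
    have : (2:ℝ) ≤ p := by
      exact_mod_cast (mem_QQ.1 (Finset.mem_powerset.1 (Finset.mem_filter.1 hV).1 hp)).1.two_le
    exact div_nonneg (by norm_num) (by linarith)
  have hWE : ∑ V ∈ W, ∏ p ∈ V, ((18/25:ℝ) / ((p:ℝ) - 1)) ≤
      4 * (B + 15) * e * (C2 * (e⁻¹) ^ ((18:ℝ)/25)) := by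
    have h1 : Real.log t / 2 * ∑ V ∈ W, ∏ p ∈ V, ((18/25:ℝ) / ((p:ℝ) - 1)) ≤
        Real.log t / 2 * (4 * (B + 15) * e * (C2 * (e⁻¹) ^ ((18:ℝ)/25))) := by
      calc _ ≤ Real.log Y * ∑ V ∈ W, ∏ p ∈ V, ((18/25:ℝ) / ((p:ℝ) - 1)) := by gcongr
        _ ≤ _ := hWin
        _ ≤ 2 * ((B + 15) * e * Real.log t) * (C2 * (e⁻¹) ^ ((18:ℝ)/25)) := by
          apply mul_le_mul _ hE hsum0 (by positivity)
          rw [hlogZY]; linarith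
        _ = _ := by ring
    exact le_of_mul_le_mul_left h1 (by positivity)
  have hlow : (G.card : ℝ) * (18/25:ℝ)^K ≤
      ∑ p ∈ G, ∑ V ∈ W.filter (fun V : Finset ℕ => (∏ q ∈ V, q) ∣ p - 1),
        (18/25:ℝ) ^ ((QQ w t).filter (fun q => q ∣ p - 1)).card := by
    rw [← nsmul_eq_mul]
    apply Finset.card_nsmul_le_sum
    intro p hp
    rw [Finset.sum_const, nsmul_eq_mul]
    have hk := hkG p hp
    unfold kk at hk
    obtain ⟨V, hV, hVd, hV2⟩ := hVG p hp
    have h1 : (1:ℝ) ≤ (W.filter (fun V : Finset ℕ => (∏ q ∈ V, q) ∣ p - 1)).card := by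
      have : 0 < (W.filter (fun V : Finset ℕ => (∏ q ∈ V, q) ∣ p - 1)).card :=
        Finset.card_pos.2 ⟨V, Finset.mem_filter.2 ⟨Finset.mem_filter.2 ⟨hV, hV2⟩, hVd⟩⟩
      exact_mod_cast this
    have h2 : (18/25:ℝ)^K ≤ (18/25:ℝ)^((QQ w t).filter (fun q => q ∣ p - 1)).card := by
      rw [← Real.rpow_natCast]
      exact Real.rpow_le_rpow_of_exponent_ge (by norm_num) (by norm_num) hk
    calc (18/25:ℝ)^K ≤ (18/25:ℝ)^((QQ w t).filter (fun q => q ∣ p - 1)).card := h2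
      _ ≤ _ := le_mul_of_one_le_left (by positivity) h1
  have hK : 0 < (18/25:ℝ)^K := by positivity
  have hKi : (18/25:ℝ)^(-K) = ((18/25:ℝ)^K)⁻¹ := Real.rpow_neg (by norm_num) K
  have hexp : e ^ ((7:ℝ)/25) * e * (e⁻¹) ^ ((18:ℝ)/25) = e ^ ((14:ℝ)/25) := by
    rw [Real.inv_rpow he.le, ← Real.rpow_neg he.le]
    nth_rw 2 [← Real.rpow_one e]
    rw [← Real.rpow_add he, ← Real.rpow_add he]; norm_num
  rw [hKi, ← div_eq_mul_inv, le_div_iff₀ hK]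
  refine hlow.trans (hS.trans ?_)
  calc _ ≤ C1 * (t / Real.log t) * e ^ ((7:ℝ)/25) * (4 * (B + 15) * e * (C2 * (e⁻¹) ^ ((18:ℝ)/25))) := by gcongr
    _ = 4 * C1 * C2 * (t / Real.log t) * (e ^ ((7:ℝ)/25) * e * (e⁻¹) ^ ((18:ℝ)/25)) * (B + 15) := by ring
    _ = _ := by rw [hexp]

theorem extract_V (t w B Y Z : ℝ) (hw0 : 0 < w) (p d : ℕ) (hp : p.Prime) (hpt : (p:ℝ) ≤ t) (hd : d ∣ p - 1)
    (hsq : ∀ q : ℕ, w < q → ¬ q ^ 2 ∣ p - 1)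
    (hsm : ¬ ∃ s, s ∣ p - 1 ∧ (∀ r : ℕ, r.Prime → r ∣ s → (r:ℝ) ≤ w) ∧ w ^ B < s)
    (hY : Y * w ^ B < d) (hZ : (d:ℝ) ≤ Z) :
    ∃ V ∈ (QQ w t).powerset, (∏ q ∈ V, q) ∣ p - 1 ∧
      Y < ∏ q ∈ V, (q:ℝ) ∧ ∏ q ∈ V, (q:ℝ) ≤ Z := by
  have hp2 := hp.two_le
  have hn0 : 0 < p - 1 := by omega
  have hd0 : 0 < d := Nat.pos_of_dvd_of_pos hd hn0
  set V := (QQ w t).filter (fun q => q ∣ d) with hV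
  have hVd : (∏ q ∈ V, q) ∣ d := Finset.prod_primes_dvd _
    (fun q hq => (mem_QQ.1 (Finset.mem_filter.1 hq).1).1.prime) (fun q hq => (Finset.mem_filter.1 hq).2)
  obtain ⟨s, hs⟩ := hVd
  have hsd : s ∣ p - 1 := (Dvd.intro_left _ hs.symm).trans hd
  have hsle : (s:ℝ) ≤ w ^ B := by
    by_contra hcon
    push Not at hcon
    apply hsm
    refine ⟨s, hsd, ?_, hcon⟩
    intro r hr hrs
    by_contra hrw
    push Not at hrw
    have hrd : r ∣ d := hrs.trans (Dvd.intro_left _ hs.symm)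
    have hrp : r ≤ p := (Nat.le_of_dvd hn0 (hrd.trans hd)).trans (Nat.sub_le _ _)
    have hrV : r ∈ V := by
      rw [hV, Finset.mem_filter, mem_QQ]
      refine ⟨⟨hr, ?_, hrw⟩, hrd⟩
      have : (r:ℝ) ≤ p := by exact_mod_cast hrp
      linarith
    apply hsq r hrw
    have : r ^ 2 ∣ d := by
      rw [hs, pow_two]
      exact mul_dvd_mul (Finset.dvd_prod_of_mem _ hrV) hrs
    exact this.trans hd
  have hcast : (d:ℝ) = (∏ q ∈ V, (q:ℝ)) * s := by
    have : ((d:ℕ):ℝ) = (((∏ q ∈ V, q) * s : ℕ):ℝ) := by rw [← hs]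
    rw [this]; push_cast; ring
  have hprod0 : (0:ℝ) ≤ ∏ q ∈ V, (q:ℝ) := by positivity
  have hwB : 0 < w ^ B := by positivity
  refine ⟨V, Finset.mem_powerset.2 (Finset.filter_subset _ _), ?_, ?_, ?_⟩
  · exact (Dvd.intro _ hs.symm).trans hd
  · rw [hcast] at hY
    have : (∏ q ∈ V, (q:ℝ)) * s ≤ (∏ q ∈ V, (q:ℝ)) * w ^ B := by gcongr
    exact lt_of_mul_lt_mul_right (hY.trans_le this) hwB.le
  · refine le_trans ?_ hZ
    have h1 : (∏ q ∈ V, q) ≤ d := Nat.le_of_dvd hd0 (Dvd.intro _ hs.symm)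
    have : ((∏ q ∈ V, q : ℕ):ℝ) ≤ d := by exact_mod_cast h1
    rwa [Nat.cast_prod] at this


theorem log_144 : (21/40:ℝ) * Real.log 2 ≤ Real.log (36/25) := by
  have h : (2:ℝ)^21 ≤ (36/25:ℝ)^40 := by norm_num
  have h1 := Real.log_le_log (by positivity) h
  rw [Real.log_pow, Real.log_pow] at h1
  push_cast at h1
  linarith

theorem MT : ∃ C : ℝ, 0 < C ∧ ∃ η : ℝ, 0 < η ∧ ∀ t e : ℝ, 1 < t → 0 < e → e ≤ η → 2 ≤ t ^ e →
    (((PP t).filter (fun p => ∃ d : ℕ, d ∣ p - 1 ∧ t ^ (2/3 - e) < d ∧ (d:ℝ) ≤ t ^ (2/3 + 5 * e))).card : ℝ) ≤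
      C * e ^ ((1:ℝ)/12) * (t / Real.log t) + 2 * t / t ^ e := by
  obtain ⟨C1, hC1, H1⟩ := E2_bound
  obtain ⟨C2, hC2, H2⟩ := caseA
  obtain ⟨C3, hC3, H3⟩ := caseB
  refine ⟨C1 + C2 + C3 * 215, by positivity, 1/10^8, by norm_num, ?_⟩
  intro t e ht he heη hw
  have hlt : 0 < Real.log t := Real.log_pos ht
  have ht0 : 0 < t := by linarith
  set l := Real.log (1/e) with hl
  have hle : Real.log e = -l := by rw [hl, one_div, Real.log_inv, neg_neg]
  have hl12 : 12 ≤ l := by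
    rw [hl, Real.le_log_iff_exp_le (by positivity)]
    have h1 : (10:ℝ)^8 ≤ 1/e := by rw [le_div_iff₀ he]; linarith
    have h2 : Real.exp 12 ≤ 10^8 := by
      have h3 : Real.exp 12 = (Real.exp 1)^12 := by rw [← Real.exp_nat_mul]; norm_num
      rw [h3]
      calc (Real.exp 1)^12 ≤ (2.7182818286:ℝ)^12 := by
            gcongr; exact Real.exp_one_lt_d9.le
        _ ≤ _ := by norm_num
    linarith
  set B := l / 3 with hB
  set K := l / Real.log 2 with hK
  have hl2 : 0 < Real.log 2 := Real.log_pos (by norm_num)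
  have he1 : e ≤ 1 := by linarith
  have hsqrt : l * e ≤ 2 * e ^ ((1:ℝ)/2) := by
    have h1 := Real.log_le_rpow_div (x := 1/e) (ε := 1/2) (by positivity) (by norm_num)
    have h2 : (1/e) ^ ((1:ℝ)/2) * e = e ^ ((1:ℝ)/2) := by
      rw [one_div, Real.inv_rpow he.le, ← Real.rpow_neg he.le]
      nth_rw 2 [← Real.rpow_one e]
      rw [← Real.rpow_add he]; norm_num
    calc l * e ≤ (1/e) ^ ((1:ℝ)/2) / (1/2) * e := by gcongr
      _ = 2 * ((1/e) ^ ((1:ℝ)/2) * e) := by ring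
      _ = _ := by rw [h2]
  have hsm : e ^ ((1:ℝ)/2) ≤ 1/10^4 := by
    calc e ^ ((1:ℝ)/2) ≤ (1/10^8) ^ ((1:ℝ)/2) := by gcongr
      _ = 1/10^4 := by
        rw [← Real.sqrt_eq_rpow, show (1/10^8:ℝ) = (1/10^4)^2 by norm_num, Real.sqrt_sq (by norm_num)]
  have hBe : 4000 * (B + 1) * e ≤ 1 := by
    have : 4000 * (B + 1) * e = 4000/3 * (l * e) + 4000 * e := by rw [hB]; ring
    rw [this]; linarith
  have hpow : (t ^ e) ^ (4000 * (B + 1)) ≤ t := by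
    rw [← Real.rpow_mul ht0.le]
    calc _ ≤ t ^ (1:ℝ) := Real.rpow_le_rpow_of_exponent_le ht.le (by linarith)
      _ = t := Real.rpow_one t
  have hE1 := E1_bound t (t^e) hw ht0.le
  have hE2 := H1 t (t^e) B hw (by linarith) hpow
  set S := (PP t).filter (fun p => ∃ d : ℕ, d ∣ p - 1 ∧ t ^ (2/3 - e) < d ∧ (d:ℝ) ≤ t ^ (2/3 + 5 * e)) with hS
  set S1 := (PP t).filter (fun p => ∃ q : ℕ, t^e < q ∧ q ^ 2 ∣ p - 1) with hS1
  set S2 := (PP t).filter (fun p => ∃ s, s ∣ p - 1 ∧ (∀ r:ℕ, r.Prime → r ∣ s → (r:ℝ) ≤ t^e) ∧ (t^e)^B < s) with hS2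
  set G := S.filter (fun p => p ∉ S1 ∧ p ∉ S2) with hG
  have hGP : G ⊆ PP t := (Finset.filter_subset _ _).trans (Finset.filter_subset _ _)
  have hGsq : ∀ p ∈ G, ∀ q : ℕ, t ^ e < q → ¬ q ^ 2 ∣ p - 1 := by
    intro p hp q hq hd
    exact (Finset.mem_filter.1 hp).2.1 (Finset.mem_filter.2 ⟨hGP hp, q, hq, hd⟩)
  have hA := H2 t e K G ht he (by linarith) hw hGP hGsq
  have hBb := H3 t e K B (G.filter (fun p => ¬ K < (kk (t^e) t p : ℝ))) ht he (by linarith) (by linarith)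
    (by linarith) hw ((Finset.filter_subset _ _).trans hGP)
    (fun p hp => hGsq p (Finset.mem_filter.1 hp).1)
    (fun p hp => not_lt.1 (Finset.mem_filter.1 hp).2)
    (by
      intro p hp
      have hp := (Finset.mem_filter.1 hp).1
      have hpp := mem_PP.1 (hGP hp)
      obtain ⟨d, hd, hd1, hd2⟩ := (Finset.mem_filter.1 (Finset.mem_filter.1 hp).1).2
      apply extract_V t (t^e) B _ _ (by positivity) p d hpp.1 hpp.2 hd (hGsq p hp) _ _ hd2
      · intro h
        exact (Finset.mem_filter.1 hp).2.2 (Finset.mem_filter.2 ⟨hGP hp, h⟩)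
      · rw [← Real.rpow_mul ht0.le, ← Real.rpow_add ht0]
        convert hd1 using 2
        ring)
  have hcover : S ⊆ (S1 ∪ S2) ∪ G := by
    intro p hp
    by_cases h1 : p ∈ S1
    · exact Finset.mem_union_left _ (Finset.mem_union_left _ h1)
    by_cases h2 : p ∈ S2
    · exact Finset.mem_union_left _ (Finset.mem_union_right _ h2)
    exact Finset.mem_union_right _ (Finset.mem_filter.2 ⟨hp, h1, h2⟩)
  have hcard : (S.card:ℝ) ≤ S1.card + S2.card + ((G.filter (fun p => K < (kk (t^e) t p : ℝ))).card +
      (G.filter (fun p => ¬ K < (kk (t^e) t p : ℝ))).card) := by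
    have h1 := (Finset.card_le_card hcover).trans (Finset.card_union_le _ _)
    have h2 := Finset.card_union_le S1 S2
    have h3 := Finset.card_filter_add_card_filter_not (s := G) (fun p => K < (kk (t^e) t p : ℝ))
    have : S.card ≤ S1.card + S2.card + ((G.filter (fun p => K < (kk (t^e) t p : ℝ))).card +
      (G.filter (fun p => ¬ K < (kk (t^e) t p : ℝ))).card) := by omega
    exact_mod_cast this
  -- exponents
  have hx1 : Real.exp (-(B/4)) = e ^ ((1:ℝ)/12) := by
    rw [Real.rpow_def_of_pos he, hle, hB]; congr 1; ring
  have hth := log_144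
  have hKl : K * Real.log 2 = l := by rw [hK]; field_simp
  have hK0 : 0 ≤ K := by rw [hK]; exact div_nonneg (by linarith) hl2.le
  have hKth : 21/40 * l ≤ K * Real.log (36/25) := by
    have := mul_le_mul_of_nonneg_left hth hK0
    nlinarith
  have hx2 : e ^ (-(11:ℝ)/25) * (36/25:ℝ) ^ (-K) ≤ e ^ ((17:ℝ)/200) := by
    rw [Real.rpow_def_of_pos he, Real.rpow_def_of_pos he, Real.rpow_def_of_pos (by norm_num), hle, ← Real.exp_add]
    apply Real.exp_le_exp.2
    linarith
  have hx3 : e ^ ((14:ℝ)/25) * (18/25:ℝ) ^ (-K) ≤ e ^ ((17:ℝ)/200) := by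
    have h18 : Real.log (18/25:ℝ) = Real.log (36/25) - Real.log 2 := by
      rw [← Real.log_div (by norm_num) (by norm_num)]; norm_num
    rw [Real.rpow_def_of_pos he, Real.rpow_def_of_pos he, Real.rpow_def_of_pos (by norm_num), hle, ← Real.exp_add, h18]
    apply Real.exp_le_exp.2
    linarith
  have hx4 : e ^ ((17:ℝ)/200) = e ^ ((1:ℝ)/600) * e ^ ((1:ℝ)/12) := by
    rw [← Real.rpow_add he]; norm_num
  have hq0 : 0 < e ^ ((1:ℝ)/12) := by positivity
  have hx5 : e ^ ((17:ℝ)/200) ≤ e ^ ((1:ℝ)/12) :=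
    Real.rpow_le_rpow_of_exponent_ge he he1 (by norm_num)
  have hx6 : e ^ ((1:ℝ)/600) ≤ 1 := Real.rpow_le_one he.le he1 (by norm_num)
  have hx7 : e ^ ((1:ℝ)/600) * l ≤ 600 := by
    have h1 := Real.log_le_rpow_div (x := 1/e) (ε := 1/600) (by positivity) (by norm_num)
    have h2 : (1/e) ^ ((1:ℝ)/600) * e ^ ((1:ℝ)/600) = 1 := by
      rw [← Real.mul_rpow (by positivity) he.le, one_div, inv_mul_cancel₀ he.ne', Real.one_rpow]
    calc e ^ ((1:ℝ)/600) * l ≤ e ^ ((1:ℝ)/600) * ((1/e) ^ ((1:ℝ)/600) / (1/600)) := by gcongr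
      _ = 600 * ((1/e) ^ ((1:ℝ)/600) * e ^ ((1:ℝ)/600)) := by ring
      _ = _ := by rw [h2]; norm_num
  have hx8 : e ^ ((1:ℝ)/600) * (B + 15) ≤ 215 := by rw [hB]; nlinarith
  have hT : 0 < t / Real.log t := by positivity
  have hA' : ((G.filter (fun p => K < (kk (t^e) t p : ℝ))).card:ℝ) ≤ C2 * (t / Real.log t) * e ^ ((1:ℝ)/12) := by
    refine hA.trans ?_
    rw [mul_assoc (C2 * (t / Real.log t))]
    gcongr
    exact hx2.trans hx5
  have hB' : ((G.filter (fun p => ¬ K < (kk (t^e) t p : ℝ))).card:ℝ) ≤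
      C3 * (t / Real.log t) * (215 * e ^ ((1:ℝ)/12)) := by
    refine hBb.trans ?_
    have hB0 : 0 ≤ B + 15 := by linarith
    calc _ = C3 * (t / Real.log t) * ((e ^ ((14:ℝ)/25) * (18/25:ℝ) ^ (-K)) * (B + 15)) := by ring
      _ ≤ C3 * (t / Real.log t) * (e ^ ((17:ℝ)/200) * (B + 15)) := by gcongr
      _ = C3 * (t / Real.log t) * ((e ^ ((1:ℝ)/600) * (B + 15)) * e ^ ((1:ℝ)/12)) := by rw [hx4]; ring
      _ ≤ _ := by gcongr
  rw [hx1] at hE2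
  calc (S.card:ℝ) ≤ _ := hcard
    _ ≤ 2 * t / t^e + C1 * e ^ ((1:ℝ)/12) * (t / Real.log t) + (C2 * (t / Real.log t) * e ^ ((1:ℝ)/12) +
        C3 * (t / Real.log t) * (215 * e ^ ((1:ℝ)/12))) := by gcongr
    _ = _ := by ring


theorem ellPair_dvd (a b : ℤ) (p : ℕ) (hp : p.Prime) (hab : ¬ (p:ℤ) ∣ a * b) : ellPair a b p ∣ p - 1 := by
  have : Fact p.Prime := ⟨hp⟩
  have ha : (a : ZMod p) ≠ 0 := by
    intro h
    exact hab (((ZMod.intCast_zmod_eq_zero_iff_dvd a p).1 h).mul_right b)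
  have hb : (b : ZMod p) ≠ 0 := by
    intro h
    exact hab (((ZMod.intCast_zmod_eq_zero_iff_dvd b p).1 h).mul_left a)
  set ua := Units.mk0 _ ha
  set ub := Units.mk0 _ hb
  have h1 : Submonoid.closure ({(a : ZMod p), (b : ZMod p)} : Set (ZMod p)) =
      (Submonoid.closure ({ua, ub} : Set (ZMod p)ˣ)).map (Units.coeHom (ZMod p)) := by
    rw [MonoidHom.map_mclosure, Set.image_pair]
    rfl
  have h2 : Submonoid.closure ({ua, ub} : Set (ZMod p)ˣ) = (Subgroup.closure ({ua, ub} : Set (ZMod p)ˣ)).toSubmonoid :=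
    (Subgroup.closure_toSubmonoid_of_finite).symm
  unfold ellPair
  rw [h1, h2]
  have h3 : Nat.card ((Subgroup.closure ({ua, ub} : Set (ZMod p)ˣ)).toSubmonoid.map (Units.coeHom (ZMod p))) =
      Nat.card (Subgroup.closure ({ua, ub} : Set (ZMod p)ˣ)) := by
    exact (Nat.card_congr (Submonoid.equivMapOfInjective _ (Units.coeHom (ZMod p)) Units.val_injective).toEquiv).symm
  rw [h3]
  have h4 := Subgroup.card_subgroup_dvd_card (Subgroup.closure ({ua, ub} : Set (ZMod p)ˣ))
  rwa [Nat.card_eq_fintype_card (α := (ZMod p)ˣ), ZMod.card_units] at h4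

theorem ev_logs : ∀ᶠ u : ℝ in atTop, 100 ≤ u ∧ 1 ≤ Real.log u ∧ 2 * Real.log u ^ 2 ≤ u ∧ 4 * Real.log u ≤ u := by
  have h1 := (Real.isLittleO_pow_log_id_atTop (n := 2)).bound (show (0:ℝ) < 1/2 by norm_num)
  have h2 := (Real.isLittleO_pow_log_id_atTop (n := 1)).bound (show (0:ℝ) < 1/4 by norm_num)
  filter_upwards [h1, h2, eventually_ge_atTop 100, Real.tendsto_log_atTop.eventually_ge_atTop 1] with u a1 a2 a3 a4
  simp only [id, Real.norm_eq_abs, pow_one] at a1 a2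
  rw [abs_of_nonneg (by positivity), abs_of_nonneg (by linarith)] at a1
  rw [abs_of_nonneg (by linarith), abs_of_nonneg (by linarith)] at a2
  exact ⟨a3, a4, by linarith, by linarith⟩

theorem tendsto_t_div_log : Tendsto (fun t : ℝ => t / Real.log t) atTop atTop := by
  have h : Tendsto (fun t : ℝ => Real.log t / t) atTop (nhdsWithin 0 (Set.Ioi 0)) := by
    rw [tendsto_nhdsWithin_iff]
    refine ⟨?_, ?_⟩
    · simpa using (Real.isLittleO_pow_log_id_atTop (n := 1)).tendsto_div_nhds_zero
    · filter_upwards [eventually_gt_atTop 1] with t ht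
      exact div_pos (Real.log_pos ht) (by linarith)
  have := h.inv_tendsto_nhdsGT_zero
  refine this.congr ?_
  intro t
  simp

/-- key consequences of the lower bound on ε -/
theorem key_ineq (u e : ℝ) (h1 : 100 ≤ u) (h2 : 1 ≤ Real.log u) (h3 : 2 * Real.log u ^ 2 ≤ u)
    (h4 : 4 * Real.log u ≤ u) (he : 1 / Real.log u ≤ e) (he1 : e ≤ 1) :
    u ^ 2 ≤ Real.exp (u * e) ∧ 1 / Real.log u ≤ e ^ ((1:ℝ)/12) ∧ 2 * u * Real.log u ≤ Real.exp (u * e) := by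
  have hl : 0 < Real.log u := by linarith
  have he0 : 0 < e := lt_of_lt_of_le (by positivity) he
  have hue : 2 * Real.log u ≤ u * e := by
    calc 2 * Real.log u ≤ u * (1 / Real.log u) := by
          rw [mul_one_div, le_div_iff₀ hl]; nlinarith
      _ ≤ u * e := by gcongr
  have hexp : u ^ 2 ≤ Real.exp (u * e) := by
    have : Real.exp (2 * Real.log u) = u ^ 2 := by
      rw [mul_comm, Real.exp_mul, Real.exp_log (by linarith)]; norm_cast
    rw [← this]
    exact Real.exp_le_exp.2 hue
  refine ⟨hexp, ?_, ?_⟩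
  · refine he.trans ?_
    nth_rw 1 [← Real.rpow_one e]
    exact Real.rpow_le_rpow_of_exponent_ge he0 he1 (by norm_num)
  · nlinarith

theorem eps_low (ε : ℝ → ℝ)
    (hεlow : ∀ t : ℝ, 1 ≤ t → 1 / Real.log (Real.log (Real.log (100 * t))) ≤ ε t) :
    ∀ᶠ t : ℝ in atTop, 1 / Real.log (Real.log t) ≤ ε (t / Real.log t) := by
  have h1 : Tendsto (fun t : ℝ => 100 * (t / Real.log t)) atTop atTop :=
    tendsto_t_div_log.const_mul_atTop (by norm_num)
  have h2 := Real.tendsto_log_atTop.comp (Real.tendsto_log_atTop.comp (Real.tendsto_log_atTop.comp h1))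
  filter_upwards [h2.eventually_ge_atTop 1, tendsto_t_div_log.eventually_ge_atTop 1,
    Real.tendsto_log_atTop.eventually_ge_atTop 100,
    (Real.tendsto_log_atTop.comp Real.tendsto_log_atTop).eventually_ge_atTop 1,
    (Real.tendsto_log_atTop.comp (Real.tendsto_log_atTop.comp h1)).eventually_ge_atTop 1,
    (Real.tendsto_log_atTop.comp h1).eventually_ge_atTop 1, eventually_ge_atTop 1] with t a1 a2 a3 a4 a5 a6 a7
  simp only [Function.comp] at a1 a4 a5 a6
  refine le_trans ?_ (hεlow _ a2)
  apply one_div_le_one_div_of_le (by linarith)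
  have b1 : 100 * (t / Real.log t) ≤ t := by
    rw [← mul_div_assoc, div_le_iff₀ (by linarith)]; nlinarith
  have b2 : Real.log (100 * (t / Real.log t)) ≤ Real.log t := Real.log_le_log (by linarith) b1
  have b3 : Real.log (Real.log (100 * (t / Real.log t))) ≤ Real.log (Real.log t) := Real.log_le_log (by linarith) b2
  have b4 := Real.log_le_sub_one_of_pos (show 0 < Real.log (Real.log (100 * (t / Real.log t))) by linarith)
  linarith

theorem small_primes : ∀ᶠ t : ℝ in atTop, ((PP (t / Real.log t)).card : ℝ) ≤
    (1 / Real.log (Real.log t)) * (t / Real.log t) := by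
  have h := tendsto_t_div_log.eventually (Chebyshev.eventually_primeCounting_le (ε := 1) (by norm_num))
  filter_upwards [h, Real.tendsto_log_atTop.eventually ev_logs, eventually_gt_atTop 1] with t a1 a2 a3
  obtain ⟨u1, u2, u3, u4⟩ := a2
  set u := Real.log t with hu
  have hu0 : 0 < u := by linarith
  have hcard : (PP (t / u)).card = Nat.primeCounting ⌊t / u⌋₊ := by
    rw [Nat.primeCounting, Nat.primeCounting', Nat.count_eq_card_filter_range]
    congr 1
    ext p
    rw [mem_PP, Finset.mem_filter, Finset.mem_range, Nat.lt_succ_iff, Nat.le_floor_iff (by positivity)]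
    tauto
  rw [hcard]
  refine a1.trans ?_
  have hlog : Real.log (t / u) = u - Real.log u := Real.log_div (by linarith) hu0.ne'
  rw [hlog]
  have hl4 : Real.log 4 + 1 ≤ 3 := by
    have : Real.log 4 = 2 * Real.log 2 := by
      rw [show (4:ℝ) = 2^2 by norm_num, Real.log_pow]; norm_num
    have := Real.log_two_lt_d9
    linarith
  have hd : 0 < u - Real.log u := by linarith
  rw [div_le_iff₀ hd]
  have hT : 0 < t / u := by positivity
  have h3 : 3 ≤ 1 / Real.log u * (u - Real.log u) := by
    rw [one_div, inv_mul_eq_div, le_div_iff₀ (by linarith)]; linarith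
  calc (Real.log 4 + 1) * (t / u) ≤ (1 / Real.log u * (u - Real.log u)) * (t / u) := by
        gcongr; linarith
    _ = _ := by ring

/-- **Lemma (bound for `π_V(t)`).** For `a, b` nonzero multiplicatively independent
integers and `ε` a weakly decreasing positive function tending to `0` with
`ε(t) ≥ 1/log log log(100t)` for `t ≥ 1`: for all large `x`, uniformly for
`log log x < t ≤ x`, the number of primes `p ≤ t` in `V(x)` is
`O(ε(t/log t)^(1/12) · t/log t)`. -/
theorem stmt_19 (a b : ℤ) (ha : a ≠ 0) (hb : b ≠ 0)
    (hind : ∀ m n : ℤ, (a : ℚ) ^ m * (b : ℚ) ^ n = 1 → m = 0 ∧ n = 0)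
    (ε : ℝ → ℝ) (hεpos : ∀ t : ℝ, 1 ≤ t → 0 < ε t)
    (hεdec : AntitoneOn ε (Set.Ici 1))
    (hεlim : Tendsto ε atTop (nhds 0))
    (hεlow : ∀ t : ℝ, 1 ≤ t → 1 / Real.log (Real.log (Real.log (100 * t))) ≤ ε t) :
    ∃ C : ℝ, 0 < C ∧ ∃ x₀ : ℝ, ∀ x : ℝ, 16 ≤ x → x₀ ≤ x →
      ∀ t : ℝ, Real.log (Real.log x) < t → t ≤ x →
        (Nat.card {p : ℕ | Nat.Prime p ∧ (p : ℝ) ≤ x ∧ VCond a b ε x p ∧ (p : ℝ) ≤ t} : ℝ)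
          ≤ C * (ε (t / Real.log t)) ^ ((1 : ℝ) / 12) * t / Real.log t := by
  obtain ⟨C, hC, η, hη, H⟩ := MT
  refine ⟨C + 2, by linarith, ?_⟩
  have hεt := hεlim.comp tendsto_t_div_log
  have hev : ∀ᶠ t : ℝ in atTop, ∀ x : ℝ,
      (Nat.card {p : ℕ | Nat.Prime p ∧ (p : ℝ) ≤ x ∧ VCond a b ε x p ∧ (p : ℝ) ≤ t} : ℝ)
          ≤ (C + 2) * (ε (t / Real.log t)) ^ ((1 : ℝ) / 12) * t / Real.log t := by
    filter_upwards [small_primes, eps_low ε hεlow, Real.tendsto_log_atTop.eventually ev_logs, eventually_gt_atTop 1,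
      hεt.eventually (eventually_le_nhds hη), hεt.eventually (eventually_le_nhds (show (0:ℝ) < 1 by norm_num)),
      tendsto_t_div_log.eventually_ge_atTop 1] with t a1 a2 a3 a4 a5 a6 a7
    intro x
    simp only [Function.comp] at a5 a6
    obtain ⟨u1, u2, u3, u4⟩ := a3
    set u := Real.log t with hu
    set e := ε (t / u) with he
    have he0 : 0 < e := hεpos _ a7
    have hu0 : 0 < u := by linarith
    have ht0 : 0 < t := by linarith
    obtain ⟨k1, k2, k3⟩ := key_ineq u e u1 u2 u3 u4 a2 a6
    have hte : t ^ e = Real.exp (u * e) := Real.rpow_def_of_pos ht0 e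
    have hM := H t e a4 he0 a5 (by rw [hte]; nlinarith)
    rw [← hte] at k1 k3
    have hte0 : 0 < t ^ e := by positivity
    set S := (PP t).filter (fun p => ∃ d : ℕ, d ∣ p - 1 ∧ t ^ (2/3 - e) < d ∧ (d:ℝ) ≤ t ^ (2/3 + 5 * e)) with hS
    have hsub : {p : ℕ | Nat.Prime p ∧ (p : ℝ) ≤ x ∧ VCond a b ε x p ∧ (p : ℝ) ≤ t} ⊆
        ((PP (t / u) ∪ S : Finset ℕ) : Set ℕ) := by
      intro p hp
      rw [Set.mem_ofPred_eq] at hp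
      obtain ⟨hpp, -, ⟨hU, hV1, hV2⟩, hpt⟩ := hp
      have hab : ¬ (p:ℤ) ∣ a * b := fun h => hU (Or.inl h)
      rw [Finset.mem_coe, Finset.mem_union]
      by_cases hps : (p:ℝ) ≤ t / u
      · exact Or.inl (mem_PP.2 ⟨hpp, hps⟩)
      push Not at hps
      right
      rw [hS, Finset.mem_filter]
      refine ⟨mem_PP.2 ⟨hpp, hpt⟩, ellPair a b p, ellPair_dvd a b p hpp hab, ?_, ?_⟩
      · refine lt_of_le_of_lt ?_ hV1
        have hp2 : (2:ℝ) ≤ p := by exact_mod_cast hpp.two_le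
        have hlp : 0 < Real.log p := Real.log_pos (by linarith)
        have hlpu : Real.log p ≤ u := Real.log_le_log (by linarith) hpt
        have b1 : t ^ ((2:ℝ)/3) / u ≤ (p:ℝ) ^ ((2:ℝ)/3) := by
          calc t ^ ((2:ℝ)/3) / u ≤ t ^ ((2:ℝ)/3) / u ^ ((2:ℝ)/3) := by
                gcongr
                nth_rw 2 [← Real.rpow_one u]
                exact Real.rpow_le_rpow_of_exponent_le (by linarith) (by norm_num)
            _ = (t / u) ^ ((2:ℝ)/3) := (Real.div_rpow ht0.le hu0.le _).symm
            _ ≤ _ := by gcongr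
        calc t ^ (2/3 - e) = t ^ ((2:ℝ)/3) / t ^ e := Real.rpow_sub ht0 _ _
          _ ≤ t ^ ((2:ℝ)/3) / u ^ 2 := by gcongr
          _ = t ^ ((2:ℝ)/3) / u / u := by rw [div_div, pow_two]
          _ ≤ (p:ℝ) ^ ((2:ℝ)/3) / Real.log p := by gcongr
      · refine hV2.trans ?_
        have hp1 : (1:ℝ) ≤ p := by linarith
        have hεp : ε p ≤ e := hεdec (Set.mem_Ici.2 a7) (Set.mem_Ici.2 hp1) hps.le
        calc (p:ℝ) ^ ((2:ℝ)/3 + 5 * ε p) ≤ (p:ℝ) ^ ((2:ℝ)/3 + 5 * e) :=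
              Real.rpow_le_rpow_of_exponent_le hp1 (by linarith)
          _ ≤ _ := by gcongr
    have hcard : (Nat.card {p : ℕ | Nat.Prime p ∧ (p : ℝ) ≤ x ∧ VCond a b ε x p ∧ (p : ℝ) ≤ t} : ℝ) ≤
        (PP (t / u)).card + S.card := by
      have c1 := Set.ncard_le_ncard hsub (Finset.finite_toSet _)
      rw [Set.ncard_coe_finset] at c1
      have c2 := c1.trans (Finset.card_union_le _ _)
      rw [Nat.card_coe_set_eq]
      exact_mod_cast c2
    have hT : 0 < t / u := by positivity
    have d1 : ((PP (t / u)).card : ℝ) ≤ e ^ ((1:ℝ)/12) * (t / u) := a1.trans (by gcongr)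
    have d2 : 2 * t / t ^ e ≤ e ^ ((1:ℝ)/12) * (t / u) := by
      calc 2 * t / t ^ e ≤ 2 * t / (2 * u * Real.log u) := by gcongr
        _ = 1 / Real.log u * (t / u) := by field_simp
        _ ≤ _ := by gcongr
    calc _ ≤ _ := hcard
      _ ≤ e ^ ((1:ℝ)/12) * (t / u) + (C * e ^ ((1:ℝ)/12) * (t / u) + e ^ ((1:ℝ)/12) * (t / u)) := by linarith
      _ = _ := by ring
  obtain ⟨T, hT⟩ := eventually_atTop.1 hev
  have hx := (Real.tendsto_log_atTop.comp Real.tendsto_log_atTop).eventually_ge_atTop T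
  obtain ⟨x₀, hx₀⟩ := eventually_atTop.1 hx
  refine ⟨x₀, ?_⟩
  intro x _ hxx t htx _
  exact hT t ((hx₀ x hxx).trans htx.le) x
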